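/- arXiv:1607.05246 — 4 statements merged into one kernel-verified Lean document; each statement's English description precedes it below -/
import Mathlib

section
/- For complex z with |z| < 1, the generating function of the Favard constants satisfies Σ_{r=0}^∞ K_r z^r = tan(πz/2) + sec(πz/2), where K_0 = 1. -/
noncomputable def favardK (r : ℕ) : ℝ :=
  (4 / Real.pi) * ∑' k : ℕ,
    (1 / (4 * (k:ℝ) + 1) ^ (r + 1) + (-1) ^ (r + 1) / (4 * (k:ℝ) + 3) ^ (r + 1))

lemma fav_norm_bound (z : ℂ) (r k : ℕ) :
    ‖(1 / (4 * (k:ℂ) + 1) ^ (r + 1) + (-1) ^ (r + 1) / (4 * (k:ℂ) + 3) ^ (r + 1)) * z ^ r‖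
      ≤ ‖z‖ ^ r * (2 * (1 / ((k:ℝ) + 1) ^ 2)) := by
  have hk : (0:ℝ) ≤ k := Nat.cast_nonneg k
  have key : ‖(1 / (4 * (k:ℂ) + 1) ^ (r + 1) + (-1) ^ (r + 1) / (4 * (k:ℂ) + 3) ^ (r + 1))‖
      ≤ 2 * (1 / ((k:ℝ) + 1) ^ 2) := by
    have e : (1 / (4 * (k:ℂ) + 1) ^ (r + 1) + (-1) ^ (r + 1) / (4 * (k:ℂ) + 3) ^ (r + 1))
      = ((1 / (4 * (k:ℝ) + 1) ^ (r + 1) + (-1) ^ (r + 1) / (4 * (k:ℝ) + 3) ^ (r + 1) : ℝ) : ℂ) := by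
      push_cast; rfl
    rw [e, Complex.norm_real, Real.norm_eq_abs]
    rcases Nat.eq_zero_or_pos r with rfl | hr
    · have : (1 / (4 * (k:ℝ) + 1) ^ (0 + 1) + (-1) ^ (0 + 1) / (4 * (k:ℝ) + 3) ^ (0 + 1))
        = 2 * (1 / ((4 * k + 1) * (4 * k + 3))) := by
        field_simp; ring
      rw [this, abs_of_nonneg (by positivity)]
      gcongr
      nlinarith
    · have h1 : |1 / (4 * (k:ℝ) + 1) ^ (r + 1)| ≤ 1 / ((k:ℝ) + 1) ^ 2 := by
        rw [abs_of_nonneg (by positivity)]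
        rcases Nat.eq_zero_or_pos k with rfl | hk0
        · simp
        gcongr
        calc ((k:ℝ) + 1) ^ 2 ≤ (4 * (k:ℝ) + 1) ^ 2 := by gcongr; linarith
          _ ≤ _ := pow_le_pow_right₀ (by linarith) (by omega)
      have h2 : |(-1) ^ (r + 1) / (4 * (k:ℝ) + 3) ^ (r + 1)| ≤ 1 / ((k:ℝ) + 1) ^ 2 := by
        rw [abs_div, abs_pow, abs_neg, abs_one, one_pow, abs_of_nonneg (by positivity)]
        gcongr
        calc ((k:ℝ) + 1) ^ 2 ≤ (4 * (k:ℝ) + 3) ^ 2 := by gcongr <;> linarith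
          _ ≤ _ := pow_le_pow_right₀ (by linarith) (by omega)
      exact (abs_add_le _ _).trans (by linarith)
  rw [norm_mul, norm_pow, mul_comm]
  gcongr

lemma fav_geom (z a : ℂ) (ha : a ≠ 0) (h : ‖z‖ < ‖a‖) :
    HasSum (fun r : ℕ => 1 / a ^ (r + 1) * z ^ r) (1 / (a - z)) := by
  have h0 : ‖z / a‖ < 1 := by
    rw [norm_div, div_lt_one (norm_pos_iff.2 ha)]; exact h
  have := (hasSum_geometric_of_norm_lt_one h0).mul_left (1 / a)
  have hne : a - z ≠ 0 := by
    intro h'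
    rw [sub_eq_zero.1 h'] at h
    exact lt_irrefl _ h
  have hne2 : 1 - z / a ≠ 0 := by
    intro h'
    apply hne
    field_simp at h'
    simpa using h'
  have e1 : (fun r : ℕ => 1 / a ^ (r + 1) * z ^ r) = fun r : ℕ => 1 / a * (z / a) ^ r := by
    funext r
    rw [div_pow, pow_succ]
    field_simp
  have e2 : 1 / (a - z) = 1 / a * (1 - z / a)⁻¹ := by
    rw [← one_div, div_mul_div_comm, mul_sub, mul_div_cancel₀ _ ha]
    simp
  rw [e1, e2]
  exact this

lemma fav_den (z : ℂ) (hz : ‖z‖ < 1) (n : ℕ) :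
    4 * (n:ℂ) + 1 - z ≠ 0 ∧ 4 * (n:ℂ) + 3 + z ≠ 0 := by
  have h1 := Complex.abs_re_le_norm z
  have h2 := abs_lt.1 (h1.trans_lt hz)
  have hn : (0:ℝ) ≤ n := Nat.cast_nonneg n
  constructor <;> intro h <;> have := congrArg Complex.re h <;> simp at this <;> linarith

lemma fav_partial (z : ℂ) (hz : ‖z‖ < 1) (N : ℕ) :
    4 * ∑ k ∈ Finset.range N, (1 / (4 * (k:ℂ) + 1 - z) - 1 / (4 * (k:ℂ) + 3 + z))
      + 4 * (1 / (4 * (N:ℂ) + 1 - z))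
    = 1 / ((1 - z) / 4) + ∑ k ∈ Finset.range N, cotTerm ((1 - z) / 4) k := by
  induction N with
  | zero => simp; field_simp
  | succ N ih =>
    rw [Finset.sum_range_succ, Finset.sum_range_succ, ← add_assoc, ← ih]
    have e1 : 1 / ((1 - z) / 4 - ((N:ℂ) + 1)) = - (4 * (1 / (4 * (N:ℂ) + 3 + z))) := by
      rw [show (1 - z) / 4 - ((N:ℂ) + 1) = - ((4 * (N:ℂ) + 3 + z) / 4) by ring]
      have := (fav_den z hz N).2
      field_simp
    have e2 : 1 / ((1 - z) / 4 + ((N:ℂ) + 1)) = 4 * (1 / (4 * ((N + 1 : ℕ):ℂ) + 1 - z)) := by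
      have := (fav_den z hz (N+1)).1
      rw [show (1 - z) / 4 + ((N:ℂ) + 1) = ((4 * ((N + 1 : ℕ):ℂ) + 1 - z) / 4) by push_cast; ring]
      field_simp
    rw [cotTerm, e1, e2]
    ring

lemma fav_trig (z : ℂ) (hz : ‖z‖ < 1) :
    Complex.cot (Real.pi * ((1 - z) / 4)) =
      Complex.tan (Real.pi * z / 2) + 1 / Complex.cos (Real.pi * z / 2) := by
  set y : ℂ := Real.pi * ((1 - z) / 4) with hy
  have e : (Real.pi * z / 2 : ℂ) = Real.pi / 2 - 2 * y := by rw [hy]; ring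
  have hmem : ∀ x : ℂ, 0 < x.re → x.re < 1 → Complex.sin (Real.pi * x) ≠ 0 := by
    intro x h0 h1
    apply sin_pi_mul_ne_zero
    rintro ⟨m, hm⟩
    rw [← hm] at h0 h1
    simp at h0 h1
    have : (m:ℝ) < (1:ℤ) := by simpa using h1
    have := Int.cast_lt.1 this
    omega
  have h2 := abs_lt.1 ((Complex.abs_re_le_norm z).trans_lt hz)
  have hs : Complex.sin y ≠ 0 := by
    apply hmem <;> simp <;> linarith
  have hs2 : Complex.sin (2 * y) ≠ 0 := by
    rw [show 2 * y = Real.pi * ((1 - z) / 2) by rw [hy]; ring]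
    apply hmem <;> simp <;> linarith
  rw [e, Complex.tan_eq_sin_div_cos, Complex.sin_pi_div_two_sub, Complex.cos_pi_div_two_sub,
    Complex.cot_eq_cos_div_sin]
  rw [← add_div, div_eq_div_iff hs hs2, Complex.sin_two_mul, Complex.cos_two_mul]
  ring

lemma fav_compl (z : ℂ) (hz : ‖z‖ < 1) : (1 - z) / 4 ∈ Complex.integerComplement := by
  rintro ⟨m, hm⟩
  have h2 := abs_lt.1 ((Complex.abs_re_le_norm z).trans_lt hz)
  have h3 := congrArg Complex.re hm
  simp at h3
  have h4 : (0:ℝ) < m := by linarith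
  have h5 : (m:ℝ) < (1:ℤ) := by push_cast; linarith
  have h6 : 0 < m := by exact_mod_cast h4
  have := Int.cast_lt.1 h5
  omega

/-- Generating function of the Favard constants:
`Σ_{r≥0} K_r z^r = tan(πz/2) + sec(πz/2)` for `|z| < 1` (note `K_0 = 1`). -/
theorem favard_generating_function (z : ℂ) (hz : ‖z‖ < 1) :
    HasSum (fun r : ℕ => (favardK r : ℂ) * z ^ r)
      (Complex.tan (Real.pi * z / 2) + 1 / Complex.cos (Real.pi * z / 2)) := by
  set F : ℕ × ℕ → ℂ := fun p =>
    (1 / (4 * (p.2:ℂ) + 1) ^ (p.1 + 1) + (-1) ^ (p.1 + 1) / (4 * (p.2:ℂ) + 3) ^ (p.1 + 1))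
      * z ^ p.1 with hF
  have hs2 : Summable (fun k : ℕ => 2 * (1 / ((k:ℝ) + 1) ^ 2)) := by
    apply Summable.mul_left
    have := (summable_nat_add_iff 1).2 (Real.summable_one_div_nat_pow.2 (one_lt_two))
    simpa using this
  have hsum : Summable F := by
    refine Summable.of_norm_bounded
      (g := fun p : ℕ × ℕ => ‖z‖ ^ p.1 * (2 * (1 / ((p.2:ℝ) + 1) ^ 2))) ?_
      (fun p => fav_norm_bound z p.1 p.2)
    exact (summable_geometric_of_lt_one (norm_nonneg z) hz).mul_of_nonneg hs2
      (fun r => by positivity) (fun k => by positivity)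
  obtain ⟨S, hS⟩ := hsum
  have hpi : (Real.pi : ℂ) ≠ 0 := by exact_mod_cast Real.pi_ne_zero
  have hrow : HasSum (fun r : ℕ => (favardK r : ℂ) * z ^ r) (4 / Real.pi * S) := by
    have h1 : HasSum (fun r : ℕ => ∑' k, F (r, k)) S :=
      hS.prod_fiberwise (fun r => (hS.summable.prod_factor r).hasSum)
    have h2 := h1.mul_left (4 / Real.pi : ℂ)
    have e : (fun r : ℕ => (favardK r : ℂ) * z ^ r)
        = fun r : ℕ => (4 / Real.pi : ℂ) * ∑' k, F (r, k) := by
      funext r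
      simp only [hF, favardK]
      rw [tsum_mul_right]
      push_cast
      ring
    rw [e]
    exact h2
  have hcol : HasSum (fun k : ℕ => 1 / (4 * (k:ℂ) + 1 - z) - 1 / (4 * (k:ℂ) + 3 + z)) S := by
    have hS' : HasSum (fun p : ℕ × ℕ => F p.swap) S :=
      (Equiv.prodComm ℕ ℕ).hasSum_iff.2 hS
    refine hS'.prod_fiberwise (fun k => ?_)
    have hk : (0:ℝ) ≤ k := Nat.cast_nonneg k
    have n1 : ‖(4 * (k:ℂ) + 1)‖ = 4 * k + 1 := by
      rw [show (4 * (k:ℂ) + 1) = ((4 * k + 1 : ℕ) : ℂ) by push_cast; rfl, Complex.norm_natCast]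
      push_cast; rfl
    have n3 : ‖-(4 * (k:ℂ) + 3)‖ = 4 * k + 3 := by
      rw [norm_neg, show (4 * (k:ℂ) + 3) = ((4 * k + 3 : ℕ) : ℂ) by push_cast; rfl,
        Complex.norm_natCast]
      push_cast; rfl
    have g1 := fav_geom z (4 * (k:ℂ) + 1) (norm_pos_iff.1 (by rw [n1]; linarith))
      (by rw [n1]; linarith)
    have g3 := fav_geom z (-(4 * (k:ℂ) + 3)) (norm_pos_iff.1 (by rw [n3]; linarith))
      (by rw [n3]; linarith)
    convert g1.add g3 using 1
    · funext r
      simp only [hF, Prod.swap]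
      rw [neg_pow (4 * (k:ℂ) + 3), add_mul]
      congr 2
      rcases neg_one_pow_eq_or ℂ (r + 1) with h | h <;> rw [h]
      · simp
      · rw [neg_one_mul, div_neg, neg_div]
    · rw [show -(4 * (k:ℂ) + 3) - z = -(4 * (k:ℂ) + 3 + z) by ring, div_neg, sub_eq_add_neg]
  have hlim1 := hcol.tendsto_sum_nat.const_mul 4
  have hlim0 : Filter.Tendsto (fun N : ℕ => 4 * (1 / (4 * (N:ℂ) + 1 - z))) Filter.atTop
      (nhds (4 * 0)) := by
    apply Filter.Tendsto.const_mul
    simp only [one_div]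
    apply Filter.Tendsto.comp Filter.tendsto_inv₀_cobounded
    rw [← tendsto_norm_atTop_iff_cobounded]
    refine Filter.tendsto_atTop_mono (fun N => ?_) (tendsto_natCast_atTop_atTop (R := ℝ))
    have h2 := abs_lt.1 ((Complex.abs_re_le_norm z).trans_lt hz)
    refine le_trans ?_ (Complex.re_le_norm _)
    have hN : (0:ℝ) ≤ N := Nat.cast_nonneg N
    simp
    linarith
  have hx := fav_compl z hz
  have hlim2 := (summable_cotTerm hx).hasSum.tendsto_sum_nat.const_add (1 / ((1 - z) / 4))
  have hl := hlim1.add hlim0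
  simp only [fav_partial z hz] at hl
  have heq := tendsto_nhds_unique hl hlim2
  have hc : Real.pi * Complex.cot (Real.pi * ((1 - z) / 4)) - 1 / ((1 - z) / 4)
      = ∑' n, cotTerm ((1 - z) / 4) n := by
    rw [cot_series_rep' hx]
  rw [← hc, fav_trig z hz] at heq
  have : (4 / Real.pi * S : ℂ)
      = Complex.tan (Real.pi * z / 2) + 1 / Complex.cos (Real.pi * z / 2) := by
    rw [div_mul_eq_mul_div, div_eq_iff hpi]
    linear_combination heq
  rw [← this]
  exact hrow
end

section
/- For fixed natural numbers n, m ≥ 1 and any h with 1/(2mn) ≤ h < 1, the best L¹ approximation of χ_h^m by trigonometric polynomials of degree ≤ n−1 satisfies E_{n−1}(χ_h^m)_{L¹} ≤ K_m/(πhn)^m. -/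
noncomputable def chi (h : ℝ) : ℝ → ℝ := fun θ =>
  if |θ - 2 * Real.pi * (round (θ / (2 * Real.pi)) : ℤ)| ≤ Real.pi * h then 1 / h else 0

/-- Convolution on the circle, normalized by \`1/(2π)\`. -/
noncomputable def conv (f g : ℝ → ℝ) : ℝ → ℝ := fun θ =>
  (1 / (2 * Real.pi)) * ∫ φ in (0:ℝ)..(2 * Real.pi), f (θ - φ) * g φ

/-- \`chiConv h m\` is the \`m\`-fold self-convolution \`χ_h ∗ ⋯ ∗ χ_h\` (for \`m ≥ 1\`). -/
noncomputable def chiConv (h : ℝ) : ℕ → ℝ → ℝ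
  | 0 => fun _ => 0
  | 1 => chi h
  | (m + 2) => conv (chi h) (chiConv h (m + 1))

/-- Trigonometric polynomials of degree at most \`n\` (complex coefficients). -/
def trigPoly (n : ℕ) : Set (ℝ → ℂ) :=
  {t | ∃ c : ℤ → ℂ, t = fun θ : ℝ =>
    ∑ k ∈ Finset.Icc (-(n:ℤ)) (n:ℤ), c k * Complex.exp (k * (θ:ℂ) * Complex.I)}

noncomputable def L1norm (f : ℝ → ℂ) : ℝ :=
  (1 / (2 * Real.pi)) * ∫ φ in (0:ℝ)..(2 * Real.pi), ‖f φ‖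

/-- Best approximation in \`L¹(𝕋)\` by trigonometric polynomials of degree at most \`n\`. -/
noncomputable def bestApprox (n : ℕ) (f : ℝ → ℂ) : ℝ :=
  sInf ((fun t : ℝ → ℂ => L1norm (fun θ => f θ - t θ)) '' (trigPoly n))

namespace FavardAux
open Real MeasureTheory Set

/-- The phase `mπ/2`. -/
noncomputable def ph (m : ℕ) : ℝ := m * (π / 2)

noncomputable def Den (s x : ℝ) : ℝ := 1 - 2 * s * cos x + s ^ 2

noncomputable def Kf (m : ℕ) (s x : ℝ) : ℝ :=
  2 * (s * cos (x - ph m) - s ^ 2 * cos (ph m)) / Den s x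

noncomputable def Af (N m j : ℕ) (s : ℝ) : ℝ :=
  2 * (1 - (s ^ 2) ^ (N - j)) * s ^ (j + 1) / (1 + (-1) ^ m * (s ^ 2) ^ (N + 1))

noncomputable def A0 (N m : ℕ) (s : ℝ) : ℝ :=
  -2 * cos (ph m) * (s ^ 2) ^ (N + 1) / (1 + (-1) ^ m * (s ^ 2) ^ (N + 1))

noncomputable def Df (N m : ℕ) (s x : ℝ) : ℝ :=
  2 * s ^ (N + 1) * cos ((N + 1 : ℕ) * x - ph m) / (1 + (-1) ^ m * (s ^ 2) ^ (N + 1)) *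
    ((1 - s ^ 2) / Den s x)

lemma geom_id (z w : ℂ) (hz : 1 - z ≠ 0) (hw : 1 - w ≠ 0) (N : ℕ) :
    z ^ (N + 1) * ((1 - z * w) / ((1 - z) * (1 - w))) =
      z / (1 - z) - ∑ j ∈ Finset.range N, (1 - (z * w) ^ (N - j)) * z ^ (j + 1)
        + (z * w) ^ (N + 1) / (1 - w) := by
  induction N with
  | zero => simp; field_simp; ring
  | succ N ih =>
    rw [pow_succ, mul_right_comm, ih, Finset.sum_range_succ']
    have : ∀ j ∈ Finset.range N, (1 - (z * w) ^ (N + 1 - (j + 1))) * z ^ (j + 1 + 1)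
        = ((1 - (z * w) ^ (N - j)) * z ^ (j + 1)) * z := by
      intro j _
      rw [Nat.add_sub_add_right]; ring
    rw [Finset.sum_congr rfl this, ← Finset.sum_mul]
    generalize ∑ j ∈ Finset.range N, (1 - (z * w) ^ (N - j)) * z ^ (j + 1) = S
    simp only [Nat.sub_zero]
    field_simp
    ring

noncomputable def zz (s x : ℝ) : ℂ := (s : ℂ) * Complex.exp (x * Complex.I)
noncomputable def al (m : ℕ) : ℂ := Complex.exp (-(ph m : ℂ) * Complex.I)

lemma re_al_pow (m k : ℕ) (s x : ℝ) : (al m * zz s x ^ k).re = s ^ k * cos (k * x - ph m) := by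
  have : al m * zz s x ^ k = ((s ^ k : ℝ) : ℂ) * Complex.exp (((k * x - ph m : ℝ) : ℂ) * Complex.I) := by
    unfold al zz
    rw [mul_pow, ← Complex.exp_nat_mul, mul_left_comm, ← Complex.exp_add]
    push_cast
    congr 2
    ring
  rw [this, Complex.re_ofReal_mul, Complex.exp_ofReal_mul_I_re]

lemma zz_conj (s x : ℝ) : (starRingEnd ℂ) (zz s x) = zz s (-x) := by
  unfold zz
  rw [map_mul, Complex.conj_ofReal, ← Complex.exp_conj]
  simp

lemma zz_mul (s x : ℝ) : zz s x * zz s (-x) = ((s ^ 2 : ℝ) : ℂ) := by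
  unfold zz
  rw [mul_mul_mul_comm, ← Complex.exp_add]
  simp [sq]

lemma one_sub_re (s x : ℝ) : (1 - zz s x).re = 1 - s * cos x := by
  unfold zz
  rw [Complex.sub_re, Complex.re_ofReal_mul, Complex.exp_ofReal_mul_I_re]; simp

lemma one_sub_mul (s x : ℝ) : (1 - zz s x) * (1 - zz s (-x)) = ((Den s x : ℝ) : ℂ) := by
  have h1 : zz s x + zz s (-x) = ((2 * s * cos x : ℝ) : ℂ) := by
    unfold zz
    push_cast
    rw [Complex.cos]
    ring_nf
  have := zz_mul s x
  calc (1 - zz s x) * (1 - zz s (-x)) = 1 - (zz s x + zz s (-x)) + zz s x * zz s (-x) := by ring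
    _ = _ := by rw [h1, this]; unfold Den; push_cast; ring

lemma one_sub_ge (s x : ℝ) (h0 : 0 ≤ s) (h1 : s ≤ 1) : (1 - cos x) / 2 ≤ 1 - s * cos x := by
  have := neg_one_le_cos x
  have := cos_le_one x
  rcases le_total 0 (cos x) with h | h
  · nlinarith
  · nlinarith

lemma one_sub_pos (s x : ℝ) (h0 : 0 ≤ s) (h1 : s < 1) : 0 < 1 - s * cos x := by
  have := neg_one_le_cos x
  have := cos_le_one x
  rcases le_total 0 (cos x) with h | h
  · nlinarith
  · nlinarith

lemma zz_ne (s x : ℝ) (h : 0 < 1 - s * cos x) : 1 - zz s x ≠ 0 := by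
  intro h0
  have := one_sub_re s x
  rw [h0] at this
  simp at this
  linarith

lemma Kf_re (m : ℕ) (s x : ℝ) (h : 0 < 1 - s * cos x) :
    Kf m s x = 2 * (al m * (zz s x / (1 - zz s x))).re := by
  have h1 := zz_ne s x h
  have h2 : 1 - zz s (-x) ≠ 0 := zz_ne s (-x) (by simpa using h)
  have e : al m * (zz s x / (1 - zz s x)) =
      (al m * zz s x ^ 1 - (s ^ 2 : ℝ) * (al m * zz s x ^ 0)) / ((Den s x : ℝ) : ℂ) := by
    rw [← one_sub_mul, ← zz_mul]
    field_simp
  rw [e, Complex.div_ofReal_re, Complex.sub_re, Complex.re_ofReal_mul, re_al_pow, re_al_pow]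
  unfold Kf
  simp
  ring

lemma cos_two_ph (m : ℕ) : Complex.exp ((ph m : ℂ) * Complex.I) = (-1) ^ m * al m := by
  have : Complex.exp ((ph m : ℂ) * Complex.I) = Complex.exp ((m : ℂ) * (π * Complex.I)) * al m := by
    unfold al ph
    rw [← Complex.exp_add]
    congr 1; push_cast; ring
  rw [this, Complex.exp_nat_mul, Complex.exp_pi_mul_I]

lemma den_pos (m N : ℕ) (s : ℝ) (h0 : 0 < s) (h1 : s < 1) :
    0 < 1 + (-1 : ℝ) ^ m * (s ^ 2) ^ (N + 1) := by
  have h : (s ^ 2) ^ (N + 1) < 1 := by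
    apply pow_lt_one₀ (by positivity) _ (by omega)
    nlinarith
  have h' : 0 < (s ^ 2) ^ (N + 1) := by positivity
  rcases neg_one_pow_eq_or ℝ m with e | e <;> rw [e] <;> linarith

lemma Df_eq (N m : ℕ) (s x : ℝ) (h0 : 0 < s) (h1 : s < 1) :
    Df N m s x = Kf m s x - A0 N m s -
      ∑ j ∈ Finset.range N, Af N m j s * cos ((j + 1 : ℕ) * x - ph m) := by
  have hp := one_sub_pos s x h0.le h1
  have hz := zz_ne s x hp
  have hw : 1 - zz s (-x) ≠ 0 := zz_ne s (-x) (by simpa using hp)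
  have hd := den_pos m N s h0 h1
  have key := congrArg (fun t => (al m * t).re) (geom_id _ _ hz hw N)
  simp only [zz_mul, one_sub_mul] at key
  have e1 : (al m * (zz s x ^ (N + 1) * ((1 - ((s ^ 2 : ℝ) : ℂ)) / ((Den s x : ℝ) : ℂ)))).re =
      s ^ (N + 1) * cos ((N + 1 : ℕ) * x - ph m) * ((1 - s ^ 2) / Den s x) := by
    rw [← re_al_pow, ← Complex.re_mul_ofReal]
    congr 1; push_cast; ring
  have e2 : (al m * ((((s ^ 2 : ℝ) : ℂ)) ^ (N + 1) / (1 - zz s (-x)))).re =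
      (s ^ 2) ^ (N + 1) * (cos (ph m) + (-1) ^ m * (Kf m s x / 2)) := by
    have a1 : al m * ((((s ^ 2 : ℝ) : ℂ)) ^ (N + 1) / (1 - zz s (-x))) =
        (((s ^ 2) ^ (N + 1) : ℝ) : ℂ) * (al m / (1 - zz s (-x))) := by push_cast; ring
    rw [a1, Complex.re_ofReal_mul]
    congr 1
    have a2 : (al m / (1 - zz s (-x))).re = ((starRingEnd ℂ) (al m / (1 - zz s (-x)))).re := by
      rw [Complex.conj_re]
    have a3 : (starRingEnd ℂ) (al m) = (-1) ^ m * al m := by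
      rw [← cos_two_ph]; unfold al; rw [← Complex.exp_conj]; simp
    rw [a2, map_div₀, map_sub, map_one, zz_conj, neg_neg, Kf_re m s x hp]
    have a4 : (starRingEnd ℂ) (al m) / (1 - zz s x) = Complex.exp ((ph m : ℂ) * Complex.I) +
        (((-1) ^ m : ℝ) : ℂ) * (al m * (zz s x / (1 - zz s x))) := by
      rw [a3, cos_two_ph]; push_cast; field_simp; ring
    rw [a4, Complex.add_re, Complex.exp_ofReal_mul_I_re, Complex.re_ofReal_mul]
    ring
  have e3 : (al m * ∑ j ∈ Finset.range N, (1 - ((s ^ 2 : ℝ) : ℂ) ^ (N - j)) * zz s x ^ (j + 1)).re =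
      ∑ j ∈ Finset.range N, (1 - (s ^ 2) ^ (N - j)) * (s ^ (j + 1) * cos ((j + 1 : ℕ) * x - ph m)) := by
    rw [Finset.mul_sum, Complex.re_sum]
    refine Finset.sum_congr rfl fun j _ => ?_
    rw [← re_al_pow, ← Complex.re_ofReal_mul]
    congr 1; push_cast; ring
  rw [mul_add, mul_sub, Complex.add_re, Complex.sub_re, e1, e2, e3] at key
  have e4 : (al m * (zz s x / (1 - zz s x))).re = Kf m s x / 2 := by
    rw [Kf_re m s x hp]; ring
  rw [e4] at key
  have e5 : ∑ j ∈ Finset.range N, Af N m j s * cos ((j + 1 : ℕ) * x - ph m) =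
      2 / (1 + (-1) ^ m * (s ^ 2) ^ (N + 1)) * ∑ j ∈ Finset.range N,
        (1 - (s ^ 2) ^ (N - j)) * (s ^ (j + 1) * cos ((j + 1 : ℕ) * x - ph m)) := by
    rw [Finset.mul_sum]
    refine Finset.sum_congr rfl fun j _ => ?_
    unfold Af; ring
  rw [e5]
  generalize ∑ j ∈ Finset.range N,
        (1 - (s ^ 2) ^ (N - j)) * (s ^ (j + 1) * cos ((j + 1 : ℕ) * x - ph m)) = S at *
  have e6 : Df N m s x = 2 / (1 + (-1) ^ m * (s ^ 2) ^ (N + 1)) *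
    (s ^ (N + 1) * cos ((N + 1 : ℕ) * x - ph m) * ((1 - s ^ 2) / Den s x)) := by
    unfold Df; ring
  rw [e6, key]
  unfold A0
  field_simp
  ring

lemma Kf_hasSum (m : ℕ) (s x : ℝ) (h0 : 0 < s) (h1 : s < 1) :
    HasSum (fun k : ℕ => 2 * s ^ (k + 1) * cos ((k + 1 : ℕ) * x - ph m)) (Kf m s x) := by
  have hp := one_sub_pos s x h0.le h1
  have hn : ‖zz s x‖ < 1 := by
    unfold zz
    rw [norm_mul, Complex.norm_exp_ofReal_mul_I]; simpa [abs_of_pos h0] using h1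
  have := ((hasSum_geometric_of_norm_lt_one hn).mul_left (2 * al m * zz s x))
  have := Complex.hasSum_re this
  convert this using 1
  · ext k
    rw [mul_assoc, ← re_al_pow, ← Complex.re_ofReal_mul]
    congr 1; push_cast; ring
  · rw [Kf_re m s x hp, ← Complex.re_ofReal_mul]
    congr 1; push_cast; ring

lemma Kf_bound (m : ℕ) (s x : ℝ) (h0 : 0 < s) (h1 : s < 1) (hx : 0 < 1 - cos x) :
    |Kf m s x| ≤ 4 / (1 - cos x) * s := by
  have hp := one_sub_pos s x h0.le h1
  have hz := zz_ne s x hp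
  rw [Kf_re m s x hp, abs_mul, abs_two]
  have : |(al m * (zz s x / (1 - zz s x))).re| ≤ s * (2 / (1 - cos x)) := by
    refine (Complex.abs_re_le_norm _).trans ?_
    have e1 : ‖al m‖ = 1 := by
      unfold al
      rw [← Complex.ofReal_neg, Complex.norm_exp_ofReal_mul_I]
    have e2 : ‖zz s x‖ = s := by
      unfold zz
      rw [norm_mul, Complex.norm_exp_ofReal_mul_I]; simp [abs_of_pos h0]
    rw [norm_mul, e1, one_mul, norm_div, e2, div_eq_mul_inv]
    gcongr
    have : (1 - cos x) / 2 ≤ ‖1 - zz s x‖ := by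
      refine (one_sub_ge s x h0.le h1.le).trans ?_
      rw [← one_sub_re]
      exact Complex.re_le_norm _
    calc ‖1 - zz s x‖⁻¹ ≤ ((1 - cos x) / 2)⁻¹ := by gcongr
      _ = _ := by rw [inv_div]
  calc _ ≤ 2 * (s * (2 / (1 - cos x))) := by gcongr
    _ = _ := by ring

lemma Den_pos (s x : ℝ) (h0 : 0 < s) (h1 : s < 1) : 0 < Den s x := by
  unfold Den
  nlinarith [cos_le_one x, mul_le_mul_of_nonneg_left (cos_le_one x) h0.le]

lemma cos_ph_odd (m : ℕ) (h : (-1 : ℝ) ^ m = -1) : cos (ph m) = 0 := by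
  have ho : Odd m := by
    by_contra hc
    rw [Nat.not_odd_iff_even] at hc
    rw [hc.neg_one_pow] at h
    norm_num at h
  obtain ⟨k, rfl⟩ := ho
  unfold ph
  rw [Real.cos_eq_zero_iff]
  exact ⟨k, by push_cast; ring⟩

lemma A0_bound (N m : ℕ) (s : ℝ) (h0 : 0 < s) (h1 : s < 1) : |A0 N m s| ≤ 2 * s := by
  have hd := den_pos m N s h0 h1
  have h' : 0 < (s ^ 2) ^ (N + 1) := by positivity
  have hs : (s ^ 2) ^ (N + 1) ≤ s := by
    rw [← pow_mul]
    exact pow_le_of_le_one h0.le h1.le (by omega)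
  unfold A0
  rcases neg_one_pow_eq_or ℝ m with e | e
  · rw [abs_div, abs_of_pos hd, e]
    rw [div_le_iff₀ (by linarith), abs_mul, abs_mul, abs_of_pos h']
    have := abs_cos_le_one (ph m)
    simp only [abs_neg, abs_two]
    calc _ ≤ 2 * 1 * s := by gcongr
      _ ≤ _ := by nlinarith
  · rw [cos_ph_odd m e]
    simp; exact h0.le

lemma Af_bound (N m j : ℕ) (s : ℝ) (h0 : 0 < s) (h1 : s < 1) :
    |Af N m j s| ≤ 2 * s := by
  have hd := den_pos m N s h0 h1
  have h' : 0 < (s ^ 2) ^ (N + 1) := by positivity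
  have hs2 : s ^ 2 ≤ 1 := by nlinarith
  have hle : (s ^ 2) ^ (N + 1) ≤ (s ^ 2) ^ (N - j) :=
    pow_le_pow_of_le_one (by positivity) hs2 (by omega)
  have hle1 : (s ^ 2) ^ (N - j) ≤ 1 := pow_le_one₀ (by positivity) hs2
  have hs : s ^ (j + 1) ≤ s := pow_le_of_le_one h0.le h1.le (by omega)
  unfold Af
  rw [abs_of_nonneg (div_nonneg (mul_nonneg (by linarith) (by positivity)) hd.le),
    div_le_iff₀ hd]
  have h3 : 1 - (s ^ 2) ^ (N - j) ≤ 1 + (-1) ^ m * (s ^ 2) ^ (N + 1) := by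
    rcases neg_one_pow_eq_or ℝ m with e | e <;> rw [e] <;> linarith
  calc _ ≤ 2 * (1 + (-1) ^ m * (s ^ 2) ^ (N + 1)) * s := by gcongr
    _ = _ := by ring


end FavardAux

namespace FavardAux
open Real MeasureTheory Set

lemma ii_of_bdd {E : Type*} [NormedAddCommGroup E] {f : ℝ → E}
    (hf : StronglyMeasurable f) (C : ℝ) (hC : ∀ x, ‖f x‖ ≤ C) (a b : ℝ) :
    IntervalIntegrable f volume a b := by
  rw [intervalIntegrable_iff]
  refine IntegrableOn.of_bound (by simp) hf.aestronglyMeasurable C ?_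
  exact Filter.Eventually.of_forall hC

lemma measurable_sign : Measurable Real.sign := by
  unfold Real.sign
  exact Measurable.ite measurableSet_Iio measurable_const
    (Measurable.ite measurableSet_Ioi measurable_const measurable_const)

lemma sign_abs_le (r : ℝ) : |Real.sign r| ≤ 1 := by
  rcases Real.sign_apply_eq r with h | h | h <;> rw [h] <;> simp

lemma mul_sign (r : ℝ) : r * Real.sign r = |r| := by
  rcases lt_trichotomy r 0 with h | h | h
  · rw [Real.sign_of_neg h, abs_of_neg h]; ring
  · simp [h]
  · rw [Real.sign_of_pos h, abs_of_pos h]; ring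

noncomputable def sg (n m : ℕ) (x : ℝ) : ℝ := Real.sign (cos (n * x - ph m))

lemma sg_meas (n m : ℕ) : Measurable (sg n m) := by
  unfold sg
  exact measurable_sign.comp (by fun_prop)

lemma sg_le (n m : ℕ) (x : ℝ) : |sg n m x| ≤ 1 := sign_abs_le _

lemma sg_shift (n m : ℕ) (hn : 0 < n) (x : ℝ) : sg n m (x + π / n) = - sg n m x := by
  unfold sg
  have : (n : ℝ) * (x + π / n) - ph m = (n * x - ph m) + π := by
    have : (n : ℝ) ≠ 0 := by positivity
    field_simp
    ring
  rw [this, cos_add_pi, Real.sign_neg]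

lemma sg_per (n m : ℕ) (x : ℝ) : sg n m (x + 2 * π) = sg n m x := by
  unfold sg
  have : (n : ℝ) * (x + 2 * π) - ph m = (n * x - ph m) + n * (2 * π) := by ring
  rw [this, cos_add_nat_mul_two_pi]

lemma exp_per (k : ℕ) (x : ℝ) : Complex.exp (k * ((x + 2 * π : ℝ) : ℂ) * Complex.I) =
    Complex.exp (k * (x : ℂ) * Complex.I) := by
  have : (k : ℂ) * ((x + 2 * π : ℝ) : ℂ) * Complex.I =
      k * (x : ℂ) * Complex.I + k * (2 * π * Complex.I) := by push_cast; ring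
  rw [this, Complex.exp_add, Complex.exp_nat_mul_two_pi_mul_I, mul_one]

lemma orthC (n m k : ℕ) (hn : 0 < n) (hk : ∀ l : ℕ, k ≠ n * (2 * l + 1)) :
    ∫ x in (0:ℝ)..(2 * π), Complex.exp (k * (x : ℂ) * Complex.I) * (sg n m x : ℂ) = 0 := by
  set f : ℝ → ℂ := fun x => Complex.exp (k * (x : ℂ) * Complex.I) * (sg n m x : ℂ) with hf
  have hper : Function.Periodic f (2 * π) := by
    intro x
    simp only [hf]
    rw [exp_per, sg_per]
  have h1 : ∫ x in (0:ℝ)..(2 * π), f (x + π / n) = ∫ x in (0:ℝ)..(2 * π), f x := by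
    rw [intervalIntegral.integral_comp_add_right]
    have := hper.intervalIntegral_add_eq (π / n) 0
    rw [zero_add] at this
    rw [← this]
    congr 1 <;> ring
  have h2 : ∀ x, f (x + π / n) = -Complex.exp (k * ((π / n : ℝ) : ℂ) * Complex.I) * f x := by
    intro x
    simp only [hf]
    rw [sg_shift n m hn]
    have : (k : ℂ) * ((x + π / n : ℝ) : ℂ) * Complex.I =
      k * ((π / n : ℝ) : ℂ) * Complex.I + k * (x : ℂ) * Complex.I := by push_cast; ring
    rw [this, Complex.exp_add]; push_cast; ring
  simp_rw [h2] at h1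
  rw [intervalIntegral.integral_const_mul] at h1
  have h3 : (1 + Complex.exp (k * ((π / n : ℝ) : ℂ) * Complex.I)) * ∫ x in (0:ℝ)..(2 * π), f x = 0 := by
    linear_combination -h1
  rcases mul_eq_zero.mp h3 with h | h
  · exfalso
    have h4 : Complex.exp (k * ((π / n : ℝ) : ℂ) * Complex.I + π * Complex.I) = 1 := by
      rw [Complex.exp_add, Complex.exp_pi_mul_I]; linear_combination -h
    rw [Complex.exp_eq_one_iff] at h4
    obtain ⟨j, hj⟩ := h4
    have hn' : (n : ℂ) ≠ 0 := by exact_mod_cast hn.ne'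
    have hpi : (π : ℂ) ≠ 0 := by exact_mod_cast pi_ne_zero
    have h5 : ((k : ℂ) + n) = 2 * j * n := by
      have : ((k : ℂ) + n) * (π * Complex.I) = (2 * j * n) * (π * Complex.I) := by
        push_cast at hj
        field_simp at hj
        linear_combination (π * Complex.I) * hj
      exact mul_right_cancel₀ (mul_ne_zero hpi Complex.I_ne_zero) this
    have h6 : ((k : ℤ) + n) = 2 * j * n := by exact_mod_cast h5
    have hj1 : 1 ≤ j := by
      by_contra hc
      have : j ≤ 0 := by omega
      have : 2 * j * (n : ℤ) ≤ 0 := mul_nonpos_of_nonpos_of_nonneg (by omega) (by positivity)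
      omega
    apply hk (j - 1).toNat
    zify
    rw [Int.toNat_of_nonneg (by omega)]
    linear_combination h6
  · exact h

lemma orth (n m k : ℕ) (ψ : ℝ) (hn : 0 < n) (hk : ∀ l : ℕ, k ≠ n * (2 * l + 1)) :
    ∫ x in (0:ℝ)..(2 * π), cos (k * x - ψ) * sg n m x = 0 := by
  have h := orthC n m k hn hk
  have hi : IntervalIntegrable (fun x : ℝ => Complex.exp (-(ψ : ℂ) * Complex.I) *
      (Complex.exp (k * (x : ℂ) * Complex.I) * (sg n m x : ℂ))) volume 0 (2 * π) := by
    refine ii_of_bdd ?_ 1 ?_ _ _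
    · apply Measurable.stronglyMeasurable
      have := sg_meas n m
      fun_prop
    · intro x
      have e1 : -(ψ : ℂ) * Complex.I = ((-ψ : ℝ) : ℂ) * Complex.I := by push_cast; ring
      have e2 : (k : ℂ) * (x : ℂ) * Complex.I = ((k * x : ℝ) : ℂ) * Complex.I := by push_cast; ring
      rw [norm_mul, norm_mul, e1, e2, Complex.norm_exp_ofReal_mul_I, Complex.norm_exp_ofReal_mul_I]
      simpa using sg_le n m x
  have := ContinuousLinearMap.intervalIntegral_comp_comm (𝕜 := ℝ) Complex.reCLM hi
  rw [intervalIntegral.integral_const_mul, h] at this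
  simp only [mul_zero, map_zero] at this
  refine Eq.trans ?_ this
  refine intervalIntegral.integral_congr fun x _ => ?_
  simp only [Complex.reCLM_apply]
  rw [← mul_assoc, ← Complex.exp_add, Complex.re_mul_ofReal]
  congr 1
  have : -(ψ : ℂ) * Complex.I + k * x * Complex.I = ((k * x - ψ : ℝ) : ℂ) * Complex.I := by
    push_cast; ring
  rw [this, Complex.exp_ofReal_mul_I_re]

lemma int_cos_odd (l : ℕ) (a b : ℝ) : ∫ y in a..b, cos ((2 * l + 1 : ℕ) * y) =
    (sin ((2 * l + 1 : ℕ) * b) - sin ((2 * l + 1 : ℕ) * a)) / (2 * l + 1 : ℕ) := by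
  rw [intervalIntegral.integral_comp_mul_left (fun y => cos y) (by positivity), integral_cos]
  simp [div_eq_inv_mul]

lemma sin_half (l : ℕ) : sin ((2 * l + 1 : ℕ) * (π / 2)) = (-1) ^ l := by
  have : ((2 * l + 1 : ℕ) : ℝ) * (π / 2) = l * π + π / 2 := by push_cast; ring
  rw [this, sin_add_pi_div_two, cos_nat_mul_pi]

lemma base_int (l : ℕ) : ∫ y in (-(π / 2))..(-(π / 2) + 2 * π),
    cos ((2 * l + 1 : ℕ) * y) * Real.sign (cos y) = 4 * (-1) ^ l / (2 * l + 1 : ℕ) := by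
  have hi : ∀ a b, IntervalIntegrable (fun y => cos ((2 * l + 1 : ℕ) * y) * Real.sign (cos y))
      volume a b := by
    refine ii_of_bdd ?_ 1 ?_
    · apply Measurable.stronglyMeasurable
      have := measurable_sign.comp measurable_cos
      exact Measurable.mul (by fun_prop) this
    · intro x
      rw [norm_mul]
      exact mul_le_one₀ (abs_cos_le_one _) (norm_nonneg _) (sign_abs_le _)
  rw [← intervalIntegral.integral_add_adjacent_intervals (hi _ (π / 2)) (hi (π / 2) _)]
  have hpi := pi_pos
  have e1 : ∫ y in (-(π / 2))..(π / 2), cos ((2 * l + 1 : ℕ) * y) * Real.sign (cos y) =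
      ∫ y in (-(π / 2))..(π / 2), cos ((2 * l + 1 : ℕ) * y) := by
    refine intervalIntegral.integral_congr_Ioo_of_le (by linarith) fun y hy => ?_
    rw [Real.sign_of_pos (cos_pos_of_mem_Ioo hy), mul_one]
  have e2 : ∫ y in (π / 2)..(-(π / 2) + 2 * π), cos ((2 * l + 1 : ℕ) * y) * Real.sign (cos y) =
      ∫ y in (π / 2)..(-(π / 2) + 2 * π), -cos ((2 * l + 1 : ℕ) * y) := by
    refine intervalIntegral.integral_congr_Ioo_of_le (by linarith) fun y hy => ?_
    rw [Real.sign_of_neg (cos_neg_of_pi_div_two_lt_of_lt hy.1 (by linarith [hy.2])), mul_neg_one]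
  rw [e1, e2, intervalIntegral.integral_neg, int_cos_odd, int_cos_odd, mul_neg, sin_neg, sin_half]
  have : ((2 * l + 1 : ℕ) : ℝ) * (-(π / 2) + 2 * π) =
    -((2 * l + 1 : ℕ) * (π / 2)) + (2 * l + 1 : ℕ) * (2 * π) := by ring
  rw [this, sin_add_nat_mul_two_pi, sin_neg, sin_half]
  ring

lemma res_int (n m l : ℕ) (hn : 0 < n) :
    ∫ x in (0:ℝ)..(2 * π), cos ((n * (2 * l + 1) : ℕ) * x - ph m) * sg n m x =
      4 * ((-1) ^ (m + 1)) ^ l / (2 * l + 1 : ℕ) := by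
  set g : ℝ → ℝ := fun y => cos ((2 * l + 1 : ℕ) * y) * Real.sign (cos y) with hg
  have hper : Function.Periodic g (2 * π) := by
    intro y
    simp only [hg]
    rw [cos_add_two_pi, mul_add, cos_add_nat_mul_two_pi]
  have hi : ∀ a b, IntervalIntegrable g volume a b := by
    refine ii_of_bdd ?_ 1 ?_
    · apply Measurable.stronglyMeasurable
      have := measurable_sign.comp measurable_cos
      exact Measurable.mul (by fun_prop) this
    · intro x
      rw [norm_mul]
      exact mul_le_one₀ (abs_cos_le_one _) (norm_nonneg _) (sign_abs_le _)
  have hn' : (n : ℝ) ≠ 0 := by positivity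
  have e : ∀ x, cos ((n * (2 * l + 1) : ℕ) * x - ph m) * sg n m x =
      ((-1) ^ m) ^ l * g (n * x - ph m) := by
    intro x
    simp only [hg, sg]
    have : ((n * (2 * l + 1) : ℕ) : ℝ) * x - ph m =
        (2 * l + 1 : ℕ) * (n * x - ph m) + (m * l : ℕ) * π := by
      unfold ph; push_cast; ring
    rw [this, cos_add_nat_mul_pi, pow_mul]; ring
  simp_rw [e]
  rw [intervalIntegral.integral_const_mul, intervalIntegral.integral_comp_mul_sub g hn']
  have h1 := hper.intervalIntegral_add_zsmul_eq n (n * 0 - ph m) hi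
  have h2 : (n : ℝ) * 0 - ph m + (n : ℤ) • (2 * π) = n * (2 * π) - ph m := by
    simp; ring
  rw [h2] at h1
  rw [h1, hper.intervalIntegral_add_eq _ (-(π / 2)), base_int]
  simp only [smul_eq_mul, zsmul_eq_mul, Int.cast_natCast]
  field_simp
  rw [pow_succ, mul_pow]

/-- `(1/2π) ∫ |D|` as a series. -/
lemma Df_norm (N m : ℕ) (s : ℝ) (h0 : 0 < s) (h1 : s < 1) :
    HasSum (fun l : ℕ => 8 * ((-1) ^ (m + 1)) ^ l / (2 * l + 1 : ℕ) * s ^ ((N + 1) * (2 * l + 1)))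
      (∫ x in (0:ℝ)..(2 * π), |Df N m s x|) := by
  have habs : ∀ x, |Df N m s x| = Df N m s x * sg (N + 1) m x := by
    intro x
    have hd := den_pos m N s h0 h1
    have hD := Den_pos s x h0 h1
    have : Df N m s x = (2 * s ^ (N + 1) / (1 + (-1) ^ m * (s ^ 2) ^ (N + 1)) *
      ((1 - s ^ 2) / Den s x)) * cos ((N + 1 : ℕ) * x - ph m) := by unfold Df; ring
    rw [this, abs_mul, abs_of_nonneg, ← mul_sign]
    · unfold sg; ring
    · have : 0 < 1 - s ^ 2 := by nlinarith
      positivity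
  have hK : HasSum (fun k : ℕ => ∫ x in (0:ℝ)..(2 * π),
      2 * s ^ (k + 1) * (cos ((k + 1 : ℕ) * x - ph m) * sg (N + 1) m x))
      (∫ x in (0:ℝ)..(2 * π), Kf m s x * sg (N + 1) m x) := by
    refine intervalIntegral.hasSum_integral_of_dominated_convergence
      (fun k _ => 2 * s ^ (k + 1)) ?_ ?_ ?_ ?_ ?_
    · intro k
      apply Measurable.aestronglyMeasurable
      have := sg_meas (N + 1) m
      fun_prop
    · intro k
      refine Filter.Eventually.of_forall fun x _ => ?_
      rw [norm_mul _ (_ * _), norm_mul (cos _)]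
      have a1 : ‖2 * s ^ (k + 1)‖ = 2 * s ^ (k + 1) := by
        rw [Real.norm_eq_abs, abs_of_pos (by positivity)]
      rw [a1]
      have := mul_le_one₀ (abs_cos_le_one ((k + 1 : ℕ) * x - ph m)) (abs_nonneg _) (sg_le (N + 1) m x)
      calc _ ≤ 2 * s ^ (k + 1) * 1 := by gcongr; exact this
        _ = _ := mul_one _
    · refine Filter.Eventually.of_forall fun x _ => ?_
      simp_rw [pow_succ]
      exact (((summable_geometric_of_lt_one h0.le h1).mul_right s).mul_left 2)
    · exact intervalIntegrable_const
    · refine Filter.Eventually.of_forall fun x _ => ?_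
      simpa only [mul_assoc] using (Kf_hasSum m s x h0 h1).mul_right (sg (N + 1) m x)
  have hcont : ∀ k : ℕ, ∀ ψ : ℝ, IntervalIntegrable
      (fun x => cos (k * x - ψ) * sg (N + 1) m x) volume 0 (2 * π) := by
    intro k ψ
    refine ii_of_bdd ?_ 1 ?_ _ _
    · apply Measurable.stronglyMeasurable
      have := sg_meas (N + 1) m
      fun_prop
    · intro x
      rw [norm_mul]
      exact mul_le_one₀ (abs_cos_le_one _) (norm_nonneg _) (sg_le _ _ _)
  have hKD : ∫ x in (0:ℝ)..(2 * π), |Df N m s x| =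
      ∫ x in (0:ℝ)..(2 * π), Kf m s x * sg (N + 1) m x := by
    have e : ∀ x, Kf m s x * sg (N + 1) m x = |Df N m s x| +
      (A0 N m s * (cos ((0 : ℕ) * x - 0) * sg (N + 1) m x) +
        ∑ j ∈ Finset.range N, Af N m j s * (cos ((j + 1 : ℕ) * x - ph m) * sg (N + 1) m x)) := by
      intro x
      rw [habs, Df_eq N m s x h0 h1]
      simp_rw [← mul_assoc, ← Finset.sum_mul]
      simp
      ring
    simp_rw [e]
    have i1 : IntervalIntegrable (fun x => |Df N m s x|) volume 0 (2 * π) := by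
      apply Continuous.intervalIntegrable
      unfold Df Den
      have : ∀ x, 1 - 2 * s * cos x + s ^ 2 ≠ 0 := fun x => (Den_pos s x h0 h1).ne'
      fun_prop (disch := assumption)
    have i2 : IntervalIntegrable (fun x => A0 N m s * (cos ((0 : ℕ) * x - 0) * sg (N + 1) m x))
      volume 0 (2 * π) := (hcont 0 0).const_mul _
    have i3 : ∀ j ∈ Finset.range N, IntervalIntegrable
        (fun x => Af N m j s * (cos ((j + 1 : ℕ) * x - ph m) * sg (N + 1) m x)) volume 0 (2 * π) :=
      fun j _ => (hcont _ _).const_mul _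
    have i4 : IntervalIntegrable (fun x => ∑ j ∈ Finset.range N,
        Af N m j s * (cos ((j + 1 : ℕ) * x - ph m) * sg (N + 1) m x)) volume 0 (2 * π) := by
      have := IntervalIntegrable.sum _ i3
      simpa [Finset.sum_fn] using this
    rw [intervalIntegral.integral_add i1 (i2.add i4), intervalIntegral.integral_add i2 i4,
      intervalIntegral.integral_finsetSum i3]
    simp_rw [intervalIntegral.integral_const_mul]
    rw [orth (N + 1) m 0 0 (by omega) (by intro l; positivity), Finset.sum_eq_zero]
    · ring
    · intro j hj
      rw [orth (N + 1) m (j + 1) _ (by omega), mul_zero]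
      intro l
      rw [Finset.mem_range] at hj
      nlinarith
  rw [hKD]
  have hinj : Function.Injective (fun l : ℕ => (N + 1) * (2 * l + 1) - 1) := by
    intro a b hab
    simp only at hab
    have h1 : 1 ≤ (N + 1) * (2 * a + 1) := Nat.mul_pos (by omega) (by omega)
    have h2 : 1 ≤ (N + 1) * (2 * b + 1) := Nat.mul_pos (by omega) (by omega)
    have h3 : (N + 1) * (2 * a + 1) = (N + 1) * (2 * b + 1) := by omega
    have := Nat.eq_of_mul_eq_mul_left (by omega) h3
    omega
  rw [← hinj.hasSum_iff] at hK
  · convert hK using 1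
    ext l
    have h1 : (N + 1) * (2 * l + 1) - 1 + 1 = (N + 1) * (2 * l + 1) :=
      Nat.sub_add_cancel (Nat.mul_pos (by omega) (by omega))
    simp only [Function.comp]
    rw [intervalIntegral.integral_const_mul, h1, res_int _ _ _ (by omega)]
    ring
  · intro k hk
    rw [intervalIntegral.integral_const_mul, orth _ _ _ _ (by omega), mul_zero]
    intro l hl
    exact hk ⟨l, by simp only; omega⟩

end FavardAux

namespace FavardAux
open Real MeasureTheory Set

noncomputable def wt (p : ℕ) (u : ℝ) : ℝ := u ^ p / (p.factorial : ℝ)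

lemma wt_int (p k : ℕ) (hk : 0 < k) :
    ∫ u in Ioi (0:ℝ), exp (-u) ^ k * wt p u = 1 / (k : ℝ) ^ (p + 1) := by
  have h := Real.integral_rpow_mul_exp_neg_mul_Ioi (a := (p : ℝ) + 1) (r := k) (by positivity)
    (by positivity)
  have e : ∀ u : ℝ, exp (-u) ^ k * wt p u =
      (p.factorial : ℝ)⁻¹ * (u ^ ((p : ℝ) + 1 - 1) * exp (-(k * u))) := by
    intro u
    rw [add_sub_cancel_right, rpow_natCast, ← Real.exp_nat_mul]
    unfold wt
    rw [show (k : ℝ) * -u = -(k * u) by ring]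
    ring
  simp_rw [e]
  rw [integral_const_mul, h, Real.Gamma_nat_eq_factorial]
  have : (p.factorial : ℝ) ≠ 0 := by positivity
  rw [show (p : ℝ) + 1 = ((p + 1 : ℕ) : ℝ) by push_cast; rfl, rpow_natCast, one_div_pow]
  field_simp

lemma wt_integrable (p k : ℕ) (hk : 0 < k) :
    IntegrableOn (fun u => exp (-u) ^ k * wt p u) (Ioi (0:ℝ)) := by
  apply Integrable.of_integral_ne_zero
  rw [wt_int p k hk]
  positivity

lemma wt_nonneg (p : ℕ) {u : ℝ} (hu : 0 < u) : 0 ≤ wt p u := by unfold wt; positivity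

lemma wt_meas (p : ℕ) : Measurable (wt p) := by unfold wt; fun_prop

lemma integrable_hasSum {F : ℕ → ℝ → ℝ} {G : ℝ → ℝ} {μ : Measure ℝ}
    (hF : ∀ i, Integrable (F i) μ) (hs : Summable fun i => ∫ a, ‖F i a‖ ∂μ)
    (hG : ∀ᵐ a ∂μ, HasSum (fun i => F i a) (G a)) :
    Integrable G μ ∧ HasSum (fun i => ∫ a, F i a ∂μ) (∫ a, G a ∂μ) := by
  constructor
  · constructor
    · refine aestronglyMeasurable_of_tendsto_ae Filter.atTop
        (f := fun (n : ℕ) a => ∑ i ∈ Finset.range n, F i a) ?_ ?_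
      · intro n
        exact Finset.aestronglyMeasurable_fun_sum _ fun i _ => (hF i).1
      · filter_upwards [hG] with a ha using ha.tendsto_sum_nat
    · have : ∫⁻ a, ‖G a‖ₑ ∂μ ≤ ENNReal.ofReal (∑' i, ∫ a, ‖F i a‖ ∂μ) := by
        rw [ENNReal.ofReal_tsum_of_nonneg (fun i => integral_nonneg fun a => norm_nonneg _) hs]
        simp_rw [fun i => ofReal_integral_norm_eq_lintegral_enorm (hF i)]
        rw [← lintegral_tsum (fun i => (hF i).1.enorm)]
        refine lintegral_mono_ae ?_
        filter_upwards [hG] with a ha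
        rw [← ha.tsum_eq]
        exact enorm_tsum_le_tsum_enorm
      exact lt_of_le_of_lt this ENNReal.ofReal_lt_top
  · have := hasSum_integral_of_summable_integral_norm hF hs
    rwa [integral_congr_ae (g := G)] at this
    filter_upwards [hG] with a ha using ha.tsum_eq

noncomputable def beta (m : ℕ) (x : ℝ) : ℝ :=
  -(2 * π) ^ m / (m.factorial : ℝ) * bernoulliFun m (Int.fract (x / (2 * π)))

lemma exp_mem {u : ℝ} (hu : 0 < u) : 0 < exp (-u) ∧ exp (-u) < 1 :=
  ⟨exp_pos _, by rw [Real.exp_lt_one_iff]; linarith⟩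

lemma fract_x {x : ℝ} (hx : x ∈ Ioo 0 (2 * π)) : Int.fract (x / (2 * π)) = x / (2 * π) := by
  rw [Int.fract_eq_self]
  have := pi_pos
  exact ⟨by have := hx.1; positivity, by rw [div_lt_one (by positivity)]; exact hx.2⟩

lemma beta_fourier (m : ℕ) (hm : 2 ≤ m) (x : ℝ) (hx : x ∈ Ioo 0 (2 * π)) :
    HasSum (fun k : ℕ => 2 * cos (k * x - ph m) / (k : ℝ) ^ m) (beta m x) := by
  have hpi := pi_pos
  have hx' : x / (2 * π) ∈ Icc (0:ℝ) 1 := by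
    rw [← fract_x hx]; exact ⟨Int.fract_nonneg _, (Int.fract_lt_one _).le⟩
  have h := (hasSum_one_div_nat_pow_mul_fourier hm hx').mul_left (al m)
  have hal : al m * Complex.I ^ m = 1 := by
    unfold al ph
    have : Complex.I ^ m = Complex.exp (m * (π / 2 * Complex.I)) := by
      rw [Complex.exp_nat_mul, Complex.exp_pi_div_two_mul_I]
    rw [this, ← Complex.exp_add]
    push_cast
    rw [show -(m * (π / 2 : ℂ)) * Complex.I + m * (π / 2 * Complex.I) = 0 by ring, Complex.exp_zero]
  rw [← Complex.hasSum_ofReal]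
  convert! h using 1
  · ext k
    rw [fourier_coe_apply, fourier_coe_apply]
    have e1 : Complex.exp (2 * π * Complex.I * (k : ℤ) * ((x / (2 * π) : ℝ) : ℂ) / (1 : ℝ)) =
        Complex.exp ((k * x : ℂ) * Complex.I) := by
      congr 1
      have : (π : ℂ) ≠ 0 := by exact_mod_cast hpi.ne'
      push_cast; field_simp
    have e2 : Complex.exp (2 * π * Complex.I * (-(k : ℤ) : ℤ) * ((x / (2 * π) : ℝ) : ℂ) / (1 : ℝ)) =
        Complex.exp (-(k * x : ℂ) * Complex.I) := by
      congr 1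
      have : (π : ℂ) ≠ 0 := by exact_mod_cast hpi.ne'
      push_cast; field_simp
    rw [e1, e2]
    push_cast
    rw [Complex.two_cos]
    have e3 : Complex.exp (-(k * x - ph m : ℂ) * Complex.I) =
        ((-1) ^ m * al m) * Complex.exp (-(k * x : ℂ) * Complex.I) := by
      rw [← cos_two_ph, ← Complex.exp_add]; congr 1; ring
    have e4 : Complex.exp ((k * x - ph m : ℂ) * Complex.I) =
        al m * Complex.exp ((k * x : ℂ) * Complex.I) := by
      unfold al
      rw [← Complex.exp_add]; congr 1; ring
    rw [e3, e4]
    ring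
  · unfold beta
    rw [fract_x hx]
    push_cast
    rw [mul_pow _ Complex.I]
    linear_combination ((-(2 * π : ℂ) ^ m) / (m.factorial : ℂ) * (bernoulliFun m (x / (2 * π)) : ℂ)) * (-hal)

lemma beta_rep_succ (p : ℕ) (hp : 1 ≤ p) (x : ℝ) (hx : x ∈ Ioo 0 (2 * π)) :
    IntegrableOn (fun u => Kf (p + 1) (exp (-u)) x * wt p u) (Ioi 0) ∧
    ∫ u in Ioi (0:ℝ), Kf (p + 1) (exp (-u)) x * wt p u = beta (p + 1) x := by
  have key := integrable_hasSum (μ := volume.restrict (Ioi (0:ℝ)))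
    (F := fun k u => (2 * cos ((k + 1 : ℕ) * x - ph (p + 1))) * (exp (-u) ^ (k + 1) * wt p u))
    (G := fun u => Kf (p + 1) (exp (-u)) x * wt p u) ?_ ?_ ?_
  · refine ⟨key.1, ?_⟩
    have h2 := key.2
    simp_rw [integral_const_mul, wt_int p _ (Nat.succ_pos _)] at h2
    have h3 := beta_fourier (p + 1) (by omega) x hx
    rw [← hasSum_nat_add_iff' 1] at h3
    simp only [Finset.range_one, Finset.sum_singleton, Nat.cast_zero, ne_eq, Nat.succ_ne_zero,
      not_false_eq_true, zero_pow, div_zero, sub_zero] at h3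
    refine h2.unique ?_
    convert! h3 using 1
    ext k
    ring
  · intro k
    exact (wt_integrable p (k + 1) (by omega)).const_mul _
  · have h1 : Summable fun k : ℕ => 2 * (1 / ((k + 1 : ℕ) : ℝ) ^ (p + 1)) := by
      apply Summable.mul_left
      exact (summable_nat_add_iff 1).mpr (Real.summable_one_div_nat_pow.mpr (by omega))
    refine Summable.of_nonneg_of_le (fun k => integral_nonneg fun _ => norm_nonneg _) (fun k => ?_) h1
    rw [← wt_int p (k + 1) (by omega), ← integral_const_mul]
    refine setIntegral_mono_on ?_ ((wt_integrable p (k + 1) (by omega)).const_mul _)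
      measurableSet_Ioi fun u hu => ?_
    · exact ((wt_integrable p (k + 1) (by omega)).const_mul _).norm
    · rw [norm_mul]
      have h0 : 0 ≤ exp (-u) ^ (k + 1) * wt p u := mul_nonneg (by positivity) (wt_nonneg p hu)
      rw [Real.norm_of_nonneg h0]
      gcongr
      rw [norm_mul, Real.norm_two]
      have := abs_cos_le_one ((k + 1 : ℕ) * x - ph (p + 1))
      rw [Real.norm_eq_abs]
      linarith
  · filter_upwards [ae_restrict_mem measurableSet_Ioi] with u hu
    have := (Kf_hasSum (p + 1) (exp (-u)) x (exp_mem hu).1 (exp_mem hu).2).mul_right (wt p u)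
    convert! this using 1
    ext k; ring

lemma cos_lt {x : ℝ} (hx : x ∈ Ioo 0 (2 * π)) : 0 < 1 - cos x := by
  have h1 : cos x = 1 - 2 * sin (x / 2) ^ 2 := by
    have := cos_sq_add_sin_sq (x / 2)
    have h2 := cos_two_mul (x / 2)
    rw [show 2 * (x / 2) = x by ring] at h2
    linarith
  have : 0 < sin (x / 2) := sin_pos_of_pos_of_lt_pi (by linarith [hx.1]) (by linarith [hx.2])
  rw [h1]; nlinarith

lemma beta_rep_zero (x : ℝ) (hx : x ∈ Ioo 0 (2 * π)) :
    IntegrableOn (fun u => Kf 1 (exp (-u)) x * wt 0 u) (Ioi 0) ∧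
    ∫ u in Ioi (0:ℝ), Kf 1 (exp (-u)) x * wt 0 u = beta 1 x := by
  have hc := cos_lt hx
  have hpos : ∀ u : ℝ, 0 ≤ u → 0 < (1 - zz (exp (-u)) x).re := by
    intro u hu
    rw [one_sub_re]
    have := one_sub_ge (exp (-u)) x (exp_pos _).le (by rw [Real.exp_le_one_iff]; linarith)
    linarith
  have hne : ∀ u : ℝ, 0 ≤ u → 1 - zz (exp (-u)) x ≠ 0 := by
    intro u hu h
    have := hpos u hu
    rw [h] at this; simp at this
  have hder0 : ∀ u : ℝ, HasDerivAt (fun u : ℝ => 1 - zz (exp (-u)) x) (zz (exp (-u)) x) u := by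
    intro u
    have h1 : HasDerivAt (fun u : ℝ => exp (-u)) (-exp (-u)) u := by
      simpa using (hasDerivAt_neg u).exp
    have h2 := (h1.ofReal_comp.mul_const (Complex.exp (x * Complex.I))).const_sub 1
    convert! h2 using 1
    unfold zz; push_cast; ring
  have hder : ∀ u : ℝ, 0 ≤ u → HasDerivAt (fun u : ℝ => Complex.log (1 - zz (exp (-u)) x))
      (zz (exp (-u)) x / (1 - zz (exp (-u)) x)) u := by
    intro u hu
    exact (hder0 u).clog_real (Or.inl (hpos u hu))
  have hcont : Continuous fun u : ℝ => zz (exp (-u)) x := by unfold zz; fun_prop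
  have hintg : IntegrableOn (fun u => zz (exp (-u)) x / (1 - zz (exp (-u)) x)) (Ioi 0) := by
    have hw := (wt_integrable 0 1 (by omega)).const_mul (2 / (1 - cos x))
    refine Integrable.mono' hw ?_ ?_
    · apply Measurable.aestronglyMeasurable
      have := hcont.measurable
      fun_prop
    · filter_upwards [ae_restrict_mem measurableSet_Ioi] with u hu
      have e2 : ‖zz (exp (-u)) x‖ = exp (-u) := by
        unfold zz
        rw [norm_mul, Complex.norm_exp_ofReal_mul_I, mul_one, Complex.norm_real, Real.norm_of_nonneg (exp_pos _).le]
      have h3 : (1 - cos x) / 2 ≤ ‖1 - zz (exp (-u)) x‖ := by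
        refine (one_sub_ge _ x (exp_mem hu).1.le (exp_mem hu).2.le).trans ?_
        rw [← one_sub_re]
        exact Complex.re_le_norm _
      rw [norm_div, e2]
      simp only [wt, pow_zero, Nat.factorial_zero, Nat.cast_one, div_one, mul_one, pow_one]
      calc exp (-u) / ‖1 - zz (exp (-u)) x‖ ≤ exp (-u) / ((1 - cos x) / 2) := by gcongr
        _ = _ := by field_simp
  have htend : Filter.Tendsto (fun u : ℝ => Complex.log (1 - zz (exp (-u)) x)) Filter.atTop
      (nhds 0) := by
    have h1 : Filter.Tendsto (fun u : ℝ => 1 - zz (exp (-u)) x) Filter.atTop (nhds 1) := by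
      have : Filter.Tendsto (fun u : ℝ => ((exp (-u) : ℝ) : ℂ)) Filter.atTop (nhds ((0 : ℝ) : ℂ)) :=
        (Complex.continuous_ofReal.tendsto 0).comp Real.tendsto_exp_neg_atTop_nhds_zero
      have := (this.mul_const (Complex.exp (x * Complex.I))).const_sub 1
      simpa [zz] using this
    have h2 := (continuousAt_clog Complex.one_mem_slitPlane).tendsto.comp h1
    simpa [Function.comp_def] using h2
  have hI := integral_Ioi_of_hasDerivAt_of_tendsto (a := 0) (hder 0 le_rfl).continuousAt.continuousWithinAt
    (fun u hu => hder u (le_of_lt hu)) hintg htend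
  have hK : ∀ u ∈ Ioi (0:ℝ), Kf 1 (exp (-u)) x * wt 0 u =
      2 * Complex.reCLM (al 1 * (zz (exp (-u)) x / (1 - zz (exp (-u)) x))) := by
    intro u hu
    rw [Kf_re 1 _ x (one_sub_pos _ x (exp_mem hu).1.le (exp_mem hu).2)]
    simp [wt]
  have hint2 := hintg.const_mul (al 1)
  have hint3 := (Complex.reCLM.integrable_comp hint2).const_mul 2
  constructor
  · exact IntegrableOn.congr_fun hint3 (fun u hu => (hK u hu).symm) measurableSet_Ioi
  · rw [setIntegral_congr_fun measurableSet_Ioi hK, integral_const_mul,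
      Complex.reCLM.integral_comp_comm hint2, integral_const_mul, hI]
    have hal : al 1 = -Complex.I := by
      unfold al ph
      have := Complex.exp_neg_pi_div_two_mul_I
      push_cast
      rw [← this]; congr 1; ring
    have harg : (1 - zz (exp (-0)) x).arg = (x - π) / 2 := by
      have e : 1 - zz (exp (-0)) x = ((2 * sin (x / 2) : ℝ) : ℂ) *
          (Complex.cos (((x - π) / 2 : ℝ) : ℂ) + Complex.sin (((x - π) / 2 : ℝ) : ℂ) * Complex.I) := by
        rw [← Complex.ofReal_cos, ← Complex.ofReal_sin,
          show (x - π) / 2 = x / 2 - π / 2 by ring, cos_sub_pi_div_two, sin_sub_pi_div_two]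
        unfold zz
        rw [neg_zero, Real.exp_zero, Complex.exp_mul_I, ← Complex.ofReal_cos, ← Complex.ofReal_sin]
        have h2 := cos_two_mul (x / 2)
        have h3 := sin_two_mul (x / 2)
        rw [show 2 * (x / 2) = x by ring] at h2 h3
        have h4 := cos_sq_add_sin_sq (x / 2)
        rw [h2, h3]
        generalize cos (x / 2) = c at *
        generalize sin (x / 2) = d at *
        have h5 : (c : ℂ) ^ 2 + (d : ℂ) ^ 2 = 1 := by exact_mod_cast h4
        push_cast
        linear_combination (-2) * h5
      rw [e]
      have : 0 < sin (x / 2) := sin_pos_of_pos_of_lt_pi (by linarith [hx.1]) (by linarith [hx.2])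
      exact Complex.arg_mul_cos_add_sin_mul_I (by positivity)
        ⟨by linarith [hx.1, pi_pos], by linarith [hx.2, pi_pos]⟩
    rw [hal, zero_sub]
    simp only [Complex.reCLM_apply, neg_mul_neg, Complex.I_mul_re, Complex.log_im, harg]
    unfold beta
    rw [fract_x hx, bernoulliFun_one]
    have := pi_pos.ne'
    simp
    field_simp

lemma beta_rep (p : ℕ) (x : ℝ) (hx : x ∈ Ioo 0 (2 * π)) :
    IntegrableOn (fun u => Kf (p + 1) (exp (-u)) x * wt p u) (Ioi 0) ∧
    ∫ u in Ioi (0:ℝ), Kf (p + 1) (exp (-u)) x * wt p u = beta (p + 1) x := by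
  rcases Nat.eq_zero_or_pos p with rfl | hp
  · exact beta_rep_zero x hx
  · exact beta_rep_succ p hp x hx

end FavardAux

namespace FavardAux
open Real MeasureTheory Set

noncomputable def Nf (N p : ℕ) (u : ℝ) : ℝ :=
  (∫ x in (0:ℝ)..(2 * π), |Df N (p + 1) (exp (-u)) x|) * wt p u

lemma Nf_int (N p : ℕ) : IntegrableOn (Nf N p) (Ioi 0) ∧
    HasSum (fun l : ℕ => (8 * ((-1 : ℝ) ^ (p + 1 + 1)) ^ l / (2 * l + 1 : ℕ)) *
      (1 / (((N + 1) * (2 * l + 1) : ℕ) : ℝ) ^ (p + 1))) (∫ u in Ioi (0:ℝ), Nf N p u) := by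
  have key := integrable_hasSum (μ := volume.restrict (Ioi (0:ℝ)))
    (F := fun l u => (8 * ((-1 : ℝ) ^ (p + 1 + 1)) ^ l / (2 * l + 1 : ℕ)) *
      (exp (-u) ^ ((N + 1) * (2 * l + 1)) * wt p u))
    (G := Nf N p) ?_ ?_ ?_
  · refine ⟨key.1, ?_⟩
    have h2 := key.2
    have e : ∀ l : ℕ, ∫ u in Ioi (0:ℝ), (8 * ((-1 : ℝ) ^ (p + 1 + 1)) ^ l / (2 * l + 1 : ℕ)) *
      (exp (-u) ^ ((N + 1) * (2 * l + 1)) * wt p u) = (8 * ((-1 : ℝ) ^ (p + 1 + 1)) ^ l / (2 * l + 1 : ℕ)) *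
      (1 / (((N + 1) * (2 * l + 1) : ℕ) : ℝ) ^ (p + 1)) := by
      intro l
      rw [integral_const_mul, wt_int p _ (by positivity)]
    simp_rw [e] at h2
    exact h2
  · intro k
    exact (wt_integrable p _ (by positivity)).const_mul _
  · have h1 : Summable fun k : ℕ => 8 * (1 / ((k + 1 : ℕ) : ℝ) ^ 2) := by
      apply Summable.mul_left
      exact (summable_nat_add_iff 1).mpr (Real.summable_one_div_nat_pow.mpr (by omega))
    refine Summable.of_nonneg_of_le (fun k => integral_nonneg fun _ => norm_nonneg _) (fun k => ?_) h1
    have e : ∫ u in Ioi (0:ℝ), ‖(8 * ((-1 : ℝ) ^ (p + 1 + 1)) ^ k / (2 * k + 1 : ℕ)) *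
      (exp (-u) ^ ((N + 1) * (2 * k + 1)) * wt p u)‖ =
      ∫ u in Ioi (0:ℝ), (8 / (2 * k + 1 : ℕ)) * (exp (-u) ^ ((N + 1) * (2 * k + 1)) * wt p u) := by
      refine setIntegral_congr_fun measurableSet_Ioi fun u hu => ?_
      have h0 : 0 ≤ exp (-u) ^ ((N + 1) * (2 * k + 1)) * wt p u :=
        mul_nonneg (by positivity) (wt_nonneg p hu)
      rw [norm_mul, Real.norm_of_nonneg h0, norm_div, norm_mul,
        Real.norm_of_nonneg (Nat.cast_nonneg _)]
      simp
    rw [e, integral_const_mul, wt_int p _ (by positivity)]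
    have h3 : ((k + 1 : ℕ) : ℝ) ≤ ((2 * k + 1 : ℕ) : ℝ) := by exact_mod_cast (by omega)
    have h4 : ((k + 1 : ℕ) : ℝ) ≤ (((N + 1) * (2 * k + 1) : ℕ) : ℝ) ^ (p + 1) := by
      have : k + 1 ≤ ((N + 1) * (2 * k + 1)) ^ (p + 1) := by
        refine le_trans ?_ (Nat.le_self_pow (by omega) _)
        nlinarith [Nat.zero_le (N * (2 * k + 1))]
      exact_mod_cast this
    rw [div_mul_div_comm, mul_one, mul_one_div, sq]
    gcongr
  · filter_upwards [ae_restrict_mem measurableSet_Ioi] with u hu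
    have := (Df_norm N (p + 1) (exp (-u)) (exp_mem hu).1 (exp_mem hu).2).mul_right (wt p u)
    convert! this using 1
    ext k; ring

lemma pair_sum (c : ℕ → ℝ) (S : ℝ) (h : HasSum c S) : ∑' k, (c (2 * k) + c (2 * k + 1)) = S := by
  have h1 : Summable fun k => c (2 * k) :=
    h.summable.comp_injective (i := fun k => 2 * k) (fun a b hab => by simpa using hab)
  have h2 : Summable fun k => c (2 * k + 1) :=
    h.summable.comp_injective (i := fun k => 2 * k + 1) (fun a b hab => by simpa using hab)
  rw [Summable.tsum_add h1 h2, tsum_even_add_odd h1 h2, h.tsum_eq]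

lemma Nf_val (N p : ℕ) : ∫ u in Ioi (0:ℝ), Nf N p u =
    2 * π * (favardK (p + 1) / ((N + 1 : ℕ) : ℝ) ^ (p + 1)) := by
  rw [← pair_sum _ _ (Nf_int N p).2]
  unfold favardK
  rw [show ∀ T : ℝ, 2 * π * (4 / π * T / ((N + 1 : ℕ) : ℝ) ^ (p + 1)) =
    (8 / ((N + 1 : ℕ) : ℝ) ^ (p + 1)) * T by
    intro T; have := pi_pos.ne'; field_simp; ring, ← tsum_mul_left]
  congr 1
  ext k
  have e1 : (((-1 : ℝ) ^ (p + 1 + 1)) ^ (2 * k)) = 1 := by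
    rw [← pow_mul, show (p + 1 + 1) * (2 * k) = 2 * ((p + 1 + 1) * k) by ring, pow_mul]; simp
  rw [pow_succ ((-1 : ℝ) ^ (p + 1 + 1)) (2 * k), e1]
  generalize (-1 : ℝ) ^ (p + 1 + 1) = η
  push_cast
  have h1 : (4 * (k : ℝ) + 1) ≠ 0 := by positivity
  have h2 : (4 * (k : ℝ) + 3) ≠ 0 := by positivity
  rw [show (2 * (2 * (k : ℝ)) + 1) = 4 * k + 1 by ring,
    show (2 * (2 * (k : ℝ) + 1) + 1) = 4 * k + 3 by ring, mul_pow, mul_pow]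
  have h3 : ((N : ℝ) + 1) ≠ 0 := by positivity
  rw [pow_succ (4 * (k : ℝ) + 1) (p + 1), pow_succ (4 * (k : ℝ) + 3) (p + 1)]
  field_simp

lemma beta_meas (m : ℕ) : Measurable (beta m) := by
  unfold beta
  have h1 := (continuous_bernoulliFun m).measurable
  have : Measurable fun x : ℝ => Int.fract (x / (2 * π)) :=
    measurable_fract.comp (measurable_id.div_const _)
  exact (h1.comp this).const_mul _

/-- The Favard approximant. -/
noncomputable def tp (N p : ℕ) (x : ℝ) : ℝ :=
  (∫ u in Ioi (0:ℝ), A0 N (p + 1) (exp (-u)) * wt p u) +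
    ∑ j ∈ Finset.range N, (∫ u in Ioi (0:ℝ), Af N (p + 1) j (exp (-u)) * wt p u) *
      cos ((j + 1 : ℕ) * x - ph (p + 1))

lemma coef_int (p : ℕ) (A : ℝ → ℝ) (hA : Measurable A)
    (hb : ∀ s, 0 < s → s < 1 → |A s| ≤ 2 * s) :
    IntegrableOn (fun u => A (exp (-u)) * wt p u) (Ioi 0) := by
  have hw := (wt_integrable p 1 (by omega)).const_mul 2
  refine Integrable.mono' hw ?_ ?_
  · apply Measurable.aestronglyMeasurable
    have := wt_meas p
    fun_prop
  · filter_upwards [ae_restrict_mem measurableSet_Ioi] with u hu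
    rw [norm_mul, Real.norm_eq_abs, Real.norm_of_nonneg (wt_nonneg p hu), pow_one, ← mul_assoc]
    exact mul_le_mul_of_nonneg_right (hb _ (exp_mem hu).1 (exp_mem hu).2) (wt_nonneg p hu)

lemma beta_sub (N p : ℕ) (x : ℝ) (hx : x ∈ Ioo 0 (2 * π)) :
    beta (p + 1) x - tp N p x = ∫ u in Ioi (0:ℝ), Df N (p + 1) (exp (-u)) x * wt p u := by
  have h0 := coef_int p (A0 N (p + 1)) (by unfold A0; fun_prop) (A0_bound N (p + 1))
  have hj : ∀ j, IntegrableOn (fun u => Af N (p + 1) j (exp (-u)) * wt p u) (Ioi 0) := fun j =>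
    coef_int p (Af N (p + 1) j) (by unfold Af; fun_prop) (Af_bound N (p + 1) j)
  obtain ⟨hK, hKi⟩ := beta_rep p x hx
  have e : ∫ u in Ioi (0:ℝ), Df N (p + 1) (exp (-u)) x * wt p u =
      ∫ u in Ioi (0:ℝ), (Kf (p + 1) (exp (-u)) x * wt p u - A0 N (p + 1) (exp (-u)) * wt p u -
        ∑ j ∈ Finset.range N, (Af N (p + 1) j (exp (-u)) * wt p u) *
          cos ((j + 1 : ℕ) * x - ph (p + 1))) := by
    refine setIntegral_congr_fun measurableSet_Ioi fun u hu => ?_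
    rw [Df_eq N (p + 1) (exp (-u)) x (exp_mem hu).1 (exp_mem hu).2, sub_mul, sub_mul, Finset.sum_mul]
    congr 1
    exact Finset.sum_congr rfl fun j _ => by ring
  have hs : ∀ j ∈ Finset.range N, Integrable (fun u => (Af N (p + 1) j (exp (-u)) * wt p u) *
          cos ((j + 1 : ℕ) * x - ph (p + 1))) (volume.restrict (Ioi (0:ℝ))) :=
    fun j _ => (hj j).mul_const _
  rw [e, integral_sub (f := fun u => Kf (p + 1) (exp (-u)) x * wt p u - A0 N (p + 1) (exp (-u)) * wt p u) (hK.sub h0) (integrable_finsetSum _ hs), integral_sub hK h0, hKi,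
    integral_finsetSum _ hs]
  simp_rw [integral_mul_const]
  unfold tp
  ring

lemma favard_bound (N p : ℕ) : ∫ x in (0:ℝ)..(2 * π), |beta (p + 1) x - tp N p x| ≤
    2 * π * (favardK (p + 1) / ((N + 1 : ℕ) : ℝ) ^ (p + 1)) := by
  have hpi := pi_pos
  have hN0 : 0 ≤ ∫ u in Ioi (0:ℝ), Nf N p u := by
    refine setIntegral_nonneg measurableSet_Ioi fun u hu => ?_
    exact mul_nonneg (intervalIntegral.integral_nonneg (by positivity) fun _ _ => abs_nonneg _)
      (wt_nonneg p hu)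
  rw [← Nf_val, intervalIntegral.integral_of_le (by positivity), integral_Ioc_eq_integral_Ioo]
  have hmeas : Measurable fun x => beta (p + 1) x - tp N p x := by
    refine (beta_meas _).sub ?_
    unfold tp
    fun_prop
  have h1 := integral_norm_eq_lintegral_enorm (μ := volume.restrict (Ioo 0 (2 * π)))
    hmeas.aestronglyMeasurable
  simp_rw [Real.norm_eq_abs] at h1
  rw [h1]
  refine ENNReal.toReal_le_of_le_ofReal hN0 ?_
  calc ∫⁻ x in Ioo 0 (2 * π), ‖beta (p + 1) x - tp N p x‖ₑ
      ≤ ∫⁻ x in Ioo 0 (2 * π), ∫⁻ u in Ioi (0:ℝ), ‖Df N (p + 1) (exp (-u)) x * wt p u‖ₑ := by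
        refine setLIntegral_mono' measurableSet_Ioo fun x hx => ?_
        rw [beta_sub N p x hx]
        exact enorm_integral_le_lintegral_enorm _
    _ = ∫⁻ u in Ioi (0:ℝ), ∫⁻ x in Ioo 0 (2 * π), ‖Df N (p + 1) (exp (-u)) x * wt p u‖ₑ := by
        apply lintegral_lintegral_swap
        apply Measurable.aemeasurable
        unfold Function.uncurry
        have := wt_meas p
        unfold Df Den
        fun_prop
    _ = ∫⁻ u in Ioi (0:ℝ), ‖Nf N p u‖ₑ := by
        refine setLIntegral_congr_fun measurableSet_Ioi fun u hu => ?_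
        have hD := fun x => Den_pos (exp (-u)) x (exp_mem hu).1 (exp_mem hu).2
        have hc : Continuous fun x => Df N (p + 1) (exp (-u)) x * wt p u := by
          have h2 : Continuous fun x => Den (exp (-u)) x := by unfold Den; fun_prop
          have h3 := continuous_const (y := 1 - exp (-u) ^ 2) |>.div h2 (fun x => (hD x).ne')
          unfold Df
          refine Continuous.mul (Continuous.mul (Continuous.div_const ?_ _) h3) continuous_const
          fun_prop
        have hi : IntegrableOn (fun x => Df N (p + 1) (exp (-u)) x * wt p u) (Ioo 0 (2 * π)) :=
          (hc.integrableOn_Icc).mono_set Ioo_subset_Icc_self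
        rw [← ofReal_integral_norm_eq_lintegral_enorm hi]
        unfold Nf
        rw [← ofReal_norm, norm_mul, Real.norm_of_nonneg (wt_nonneg p hu), Real.norm_of_nonneg
          (intervalIntegral.integral_nonneg (by positivity) fun _ _ => abs_nonneg _),
          intervalIntegral.integral_of_le (by positivity), integral_Ioc_eq_integral_Ioo,
          ← integral_mul_const]
        congr 2
        ext x
        rw [norm_mul, Real.norm_of_nonneg (wt_nonneg p hu), Real.norm_eq_abs]
    _ = ENNReal.ofReal (∫ u in Ioi (0:ℝ), Nf N p u) := by
        rw [← ofReal_integral_norm_eq_lintegral_enorm (Nf_int N p).1]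
        congr 1
        refine setIntegral_congr_fun measurableSet_Ioi fun u hu => ?_
        exact Real.norm_of_nonneg (mul_nonneg (intervalIntegral.integral_nonneg (by positivity)
          fun _ _ => abs_nonneg _) (wt_nonneg p hu))

end FavardAux

namespace FavardAux
open Real MeasureTheory Set

lemma tp_add {N : ℕ} {s t : ℝ → ℂ} (hs : s ∈ trigPoly N) (ht : t ∈ trigPoly N) :
    (fun x => s x + t x) ∈ trigPoly N := by
  obtain ⟨c, rfl⟩ := hs
  obtain ⟨d, rfl⟩ := ht
  refine ⟨fun k => c k + d k, ?_⟩
  funext x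
  simp only [add_mul, Finset.sum_add_distrib]

lemma tp_mul {N : ℕ} {t : ℝ → ℂ} (a : ℂ) (ht : t ∈ trigPoly N) :
    (fun x => a * t x) ∈ trigPoly N := by
  obtain ⟨d, rfl⟩ := ht
  refine ⟨fun k => a * d k, ?_⟩
  funext x
  simp only [Finset.mul_sum, mul_assoc]

lemma tp_shift {N : ℕ} {t : ℝ → ℂ} (a : ℝ) (ht : t ∈ trigPoly N) :
    (fun x => t (x + a)) ∈ trigPoly N := by
  obtain ⟨d, rfl⟩ := ht
  refine ⟨fun k => d k * Complex.exp (k * (a : ℂ) * Complex.I), ?_⟩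
  funext x
  refine Finset.sum_congr rfl fun k _ => ?_
  simp only
  rw [mul_assoc (d k), ← Complex.exp_add]
  congr 2
  push_cast; ring

lemma tp_exp {N : ℕ} (k : ℤ) (h1 : -(N : ℤ) ≤ k) (h2 : k ≤ N) :
    (fun x : ℝ => Complex.exp (k * (x : ℂ) * Complex.I)) ∈ trigPoly N := by
  refine ⟨fun j => if j = k then 1 else 0, ?_⟩
  funext x
  simp only [ite_mul, one_mul, zero_mul]
  rw [Finset.sum_ite_eq' (Finset.Icc (-(N : ℤ)) N) k, if_pos (Finset.mem_Icc.mpr ⟨h1, h2⟩)]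

lemma tp_const {N : ℕ} (a : ℂ) : (fun _ : ℝ => a) ∈ trigPoly N := by
  have := tp_mul a (tp_exp (N := N) 0 (by omega) (by omega))
  simpa using this

lemma tp_cos {N : ℕ} (j : ℕ) (hj : j ≤ N) (φ : ℝ) :
    (fun x : ℝ => ((cos (j * x - φ) : ℝ) : ℂ)) ∈ trigPoly N := by
  have h1 := tp_mul (Complex.exp (-φ * Complex.I) / 2) (tp_exp (N := N) (j : ℤ) (by omega) (by omega))
  have h2 := tp_mul (Complex.exp (φ * Complex.I) / 2) (tp_exp (N := N) (-(j : ℤ)) (by omega) (by omega))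
  have h3 := tp_add h1 h2
  convert h3 using 1
  funext x
  push_cast
  rw [Complex.cos, div_mul_eq_mul_div, div_mul_eq_mul_div, ← Complex.exp_add, ← Complex.exp_add,
    ← add_div]
  congr 3 <;> ring

lemma tp_sum {N : ℕ} (s : Finset ℕ) (t : ℕ → ℝ → ℂ) (ht : ∀ j ∈ s, t j ∈ trigPoly N) :
    (fun x => ∑ j ∈ s, t j x) ∈ trigPoly N := by
  classical
  induction s using Finset.induction_on with
  | empty => simpa using tp_const (N := N) 0
  | insert a s ha ih =>
    simp_rw [Finset.sum_insert ha]
    exact tp_add (ht a (by simp)) (ih fun j hj => ht j (by simp [hj]))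

lemma tp_mem (N p : ℕ) : (fun x => ((tp N p x : ℝ) : ℂ)) ∈ trigPoly N := by
  unfold tp
  push_cast
  refine tp_add (tp_const _) (tp_sum _ _ fun j hj => tp_mul _ ?_)
  have hj' := Finset.mem_range.mp hj
  have := tp_cos (N := N) (j + 1) (by omega) (ph (p + 1))
  simpa using this

lemma tp_cont {N : ℕ} {t : ℝ → ℂ} (ht : t ∈ trigPoly N) : Continuous t := by
  obtain ⟨d, rfl⟩ := ht
  fun_prop

lemma tp_per {N : ℕ} {t : ℝ → ℂ} (ht : t ∈ trigPoly N) : Function.Periodic t (2 * π) := by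
  obtain ⟨d, rfl⟩ := ht
  intro x
  refine Finset.sum_congr rfl fun k _ => ?_
  congr 1
  rw [show (k : ℂ) * ((x + 2 * π : ℝ) : ℂ) * Complex.I =
    k * x * Complex.I + k * (2 * π * Complex.I) by push_cast; ring, Complex.exp_add,
    Complex.exp_int_mul_two_pi_mul_I, mul_one]

/-- Bounded measurable periodic functions. -/
def Good (f : ℝ → ℝ) : Prop :=
  Measurable f ∧ (∃ C, ∀ x, |f x| ≤ C) ∧ Function.Periodic f (2 * π)

lemma Good.ii {f : ℝ → ℝ} (hf : Good f) (a b : ℝ) : IntervalIntegrable f volume a b := by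
  obtain ⟨h1, ⟨C, hC⟩, _⟩ := hf
  exact ii_of_bdd h1.stronglyMeasurable C hC a b

noncomputable def delta (a : ℝ) (f : ℝ → ℝ) : ℝ → ℝ := fun x => f (x + a) - f (x - a)

lemma Good.delta {f : ℝ → ℝ} (hf : Good f) (a : ℝ) : Good (delta a f) := by
  obtain ⟨h1, ⟨C, hC⟩, h3⟩ := hf
  refine ⟨?_, ⟨C + C, fun x => ?_⟩, fun x => ?_⟩
  · unfold FavardAux.delta; fun_prop
  · exact (abs_sub _ _).trans (add_le_add (hC _) (hC _))
  · unfold FavardAux.delta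
    rw [show x + 2 * π + a = x + a + 2 * π by ring, show x + 2 * π - a = x - a + 2 * π by ring,
      h3, h3]

lemma Good.iter {f : ℝ → ℝ} (hf : Good f) (a : ℝ) (k : ℕ) : Good ((FavardAux.delta a)^[k] f) := by
  induction k with
  | zero => exact hf
  | succ k ih => rw [Function.iterate_succ_apply']; exact ih.delta a

def Ap (N : ℕ) (f : ℝ → ℝ) (C : ℝ) : Prop :=
  ∃ t ∈ trigPoly N, ∫ x in (0:ℝ)..(2 * π), ‖(f x : ℂ) - t x‖ ≤ C

lemma Ap.delta {N : ℕ} {f : ℝ → ℝ} {C : ℝ} (h : Ap N f C) (hf : Good f) (a : ℝ) :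
    Ap N (delta a f) (2 * C) := by
  obtain ⟨t, ht, hC⟩ := h
  have hpi := pi_pos
  have hm : (fun x => t (x + a) + (-1) * t (x + -a)) ∈ trigPoly N :=
    tp_add (tp_shift a ht) (tp_mul _ (tp_shift (-a) ht))
  refine ⟨_, hm, ?_⟩
  set g : ℝ → ℝ := fun x => ‖(f x : ℂ) - t x‖ with hg
  have hgp : Function.Periodic g (2 * π) := by
    intro x; simp only [hg]; rw [hf.2.2, tp_per ht]
  have hgi : ∀ a b, IntervalIntegrable g volume a b := by
    intro a b
    have h1 : IntervalIntegrable (fun x => ((f x : ℝ) : ℂ)) volume a b :=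
      ⟨(hf.ii a b).1.ofReal, (hf.ii a b).2.ofReal⟩
    exact (h1.sub ((tp_cont ht).intervalIntegrable a b)).norm
  have hsh : ∀ c : ℝ, ∫ x in (0:ℝ)..(2 * π), g (x + c) = ∫ x in (0:ℝ)..(2 * π), g x := by
    intro c
    rw [intervalIntegral.integral_comp_add_right, zero_add, add_comm (2 * π) c,
      hgp.intervalIntegral_add_eq c 0, zero_add]
  have hgi' : ∀ c a b : ℝ, IntervalIntegrable (fun x => g (x + c)) volume a b := by
    intro c a b
    have := (hgi (a + c) (b + c)).comp_add_right c
    simpa using this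
  calc _ ≤ ∫ x in (0:ℝ)..(2 * π), (g (x + a) + g (x + -a)) := by
        refine intervalIntegral.integral_mono_on (by positivity) ?_
          ((hgi' a _ _).add (hgi' (-a) _ _)) fun x _ => ?_
        · have h1 : IntervalIntegrable (fun x => ((FavardAux.delta a f x : ℝ) : ℂ)) volume 0 (2 * π) :=
            ⟨((hf.delta a).ii _ _).1.ofReal, ((hf.delta a).ii _ _).2.ofReal⟩
          exact (h1.sub ((tp_cont hm).intervalIntegrable _ _)).norm
        · simp only [hg]
          refine le_trans (le_of_eq ?_) (norm_sub_le _ _)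
          congr 1
          unfold FavardAux.delta
          push_cast
          rw [← sub_eq_add_neg x a]
          ring
    _ = 2 * ∫ x in (0:ℝ)..(2 * π), g x := by
        rw [intervalIntegral.integral_add (hgi' a _ _) (hgi' (-a) _ _), hsh, hsh]; ring
    _ ≤ 2 * C := by gcongr

lemma Ap.iter {N : ℕ} {f : ℝ → ℝ} {C : ℝ} (h : Ap N f C) (hf : Good f) (a : ℝ) (k : ℕ) :
    Ap N ((FavardAux.delta a)^[k] f) (2 ^ k * C) := by
  induction k with
  | zero => simpa using h
  | succ k ih =>
    rw [Function.iterate_succ_apply', pow_succ', mul_assoc]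
    exact ih.delta (hf.iter a k) a

lemma beta_Ap (N p : ℕ) : Ap N (beta (p + 1))
    (2 * π * (favardK (p + 1) / ((N + 1 : ℕ) : ℝ) ^ (p + 1))) := by
  refine ⟨_, tp_mem N p, ?_⟩
  refine le_trans (le_of_eq ?_) (favard_bound N p)
  refine intervalIntegral.integral_congr fun x _ => ?_
  rw [← Complex.ofReal_sub, Complex.norm_real, Real.norm_eq_abs]

end FavardAux

namespace FavardAux
open Real MeasureTheory Set

lemma beta_per (m : ℕ) : Function.Periodic (beta m) (2 * π) := by
  intro x
  unfold beta
  have := pi_pos.ne'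
  rw [show (x + 2 * π) / (2 * π) = x / (2 * π) + 1 by field_simp, Int.fract_add_one]

lemma beta_good (m : ℕ) : Good (beta m) := by
  refine ⟨beta_meas m, ?_, beta_per m⟩
  obtain ⟨C, hC⟩ := (isCompact_Icc (a := (0:ℝ)) (b := 1)).exists_bound_of_continuousOn
    (continuous_bernoulliFun m).continuousOn
  refine ⟨|-(2 * π) ^ m / (m.factorial : ℝ)| * C, fun x => ?_⟩
  unfold beta
  rw [abs_mul]
  gcongr
  exact hC _ ⟨Int.fract_nonneg _, (Int.fract_lt_one _).le⟩

def Prim (f F : ℝ → ℝ) : Prop := ∀ a b, ∫ x in a..b, f x = F b - F a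

lemma beta_prim (m : ℕ) (hm : 1 ≤ m) : Prim (beta m) (beta (m + 1)) := by
  intro a b
  have hpi := pi_pos
  refine integral_eq_of_hasDerivAt_off_countable (beta (m + 1)) (beta m)
    (s := range fun k : ℤ => 2 * π * k) (countable_range _) ?_ ?_ ((beta_good m).ii a b)
  · apply Continuous.continuousOn
    have h1 := ContinuousOn.comp_fract'' (continuous_bernoulliFun (m + 1)).continuousOn
      (bernoulliFun_endpoints_eq_of_ne_one (k := m + 1) (by omega)).symm
    have h2 := (h1.comp (continuous_id.div_const (2 * π))).const_mul
      (-(2 * π) ^ (m + 1) / ((m + 1).factorial : ℝ))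
    exact h2
  · rintro x ⟨_, hx⟩
    have hfl : ∀ k : ℤ, x / (2 * π) ≠ k := by
      intro k hk
      apply hx
      refine ⟨k, ?_⟩
      simp only
      rw [← hk]; field_simp
    set k := ⌊x / (2 * π)⌋ with hk
    have hk1 : (k : ℝ) < x / (2 * π) := lt_of_le_of_ne (Int.floor_le _) (hfl k).symm
    have hk2 : x / (2 * π) < k + 1 := Int.lt_floor_add_one _
    have hev : beta (m + 1) =ᶠ[nhds x] fun y => -(2 * π) ^ (m + 1) / ((m + 1).factorial : ℝ) *
        bernoulliFun (m + 1) (y / (2 * π) - k) := by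
      have hc : Continuous fun y : ℝ => y / (2 * π) := by fun_prop
      filter_upwards [hc.continuousAt.eventually (lt_mem_nhds hk1),
        hc.continuousAt.eventually (gt_mem_nhds hk2)] with y h1 h2
      unfold beta
      have : ⌊y / (2 * π)⌋ = k := Int.floor_eq_iff.mpr ⟨h1.le, h2⟩
      rw [Int.fract, this]
    refine HasDerivAt.congr_of_eventuallyEq ?_ hev
    have h1 : HasDerivAt (fun y : ℝ => y / (2 * π) - k) (1 / (2 * π)) x :=
      ((hasDerivAt_id x).div_const _).sub_const _
    have h2 := ((hasDerivAt_bernoulliFun (m + 1) (x / (2 * π) - k)).comp x h1).const_mul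
      (-(2 * π) ^ (m + 1) / ((m + 1).factorial : ℝ))
    convert! h2 using 1
    unfold beta
    rw [Int.fract, ← hk, Nat.factorial_succ, Nat.add_sub_cancel]
    push_cast
    have : (m.factorial : ℝ) ≠ 0 := by positivity
    field_simp
    ring

lemma Prim.delta {f F : ℝ → ℝ} (h : Prim f F) (hf : Good f) (a : ℝ) :
    Prim (delta a f) (delta a F) := by
  intro c d
  unfold FavardAux.delta
  have h1 : ∀ e : ℝ, IntervalIntegrable (fun x => f (x + e)) volume c d := by
    intro e
    simpa using (hf.ii (c + e) (d + e)).comp_add_right e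
  have h2 := h1 (-a)
  simp_rw [← sub_eq_add_neg] at h2
  rw [intervalIntegral.integral_sub (h1 a) h2, intervalIntegral.integral_comp_add_right,
    intervalIntegral.integral_comp_sub_right, h, h]
  ring

lemma Prim.iter {f F : ℝ → ℝ} (h : Prim f F) (hf : Good f) (a : ℝ) (k : ℕ) :
    Prim ((FavardAux.delta a)^[k] f) ((FavardAux.delta a)^[k] F) := by
  induction k with
  | zero => exact h
  | succ k ih =>
    rw [Function.iterate_succ_apply', Function.iterate_succ_apply']
    exact ih.delta (hf.iter a k) a

lemma chi_per (h : ℝ) : Function.Periodic (chi h) (2 * π) := by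
  intro x
  unfold chi
  have := pi_pos.ne'
  rw [show (x + 2 * π) / (2 * π) = x / (2 * π) + 1 by field_simp, round_add_one]
  push_cast
  rw [show x + 2 * π - 2 * π * ((round (x / (2 * π)) : ℝ) + 1) =
    x - 2 * π * (round (x / (2 * π)) : ℝ) by ring]

lemma conv_chi (h : ℝ) (h0 : 0 < h) (h1 : h < 1) (g : ℝ → ℝ) (hg : Function.Periodic g (2 * π))
    (x : ℝ) : conv (chi h) g x = 1 / (2 * π * h) * ∫ y in (x - π * h)..(x + π * h), g y := by
  have hpi := pi_pos
  have hph : π * h < π := by nlinarith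
  have hph0 : 0 < π * h := by positivity
  unfold conv
  have hp : Function.Periodic (fun y => chi h (x - y) * g y) (2 * π) := by
    intro y
    simp only
    rw [hg, show x - (y + 2 * π) = x - y - 2 * π by ring, (chi_per h).sub_eq]
  have e1 := hp.intervalIntegral_add_eq 0 (x - π)
  rw [zero_add] at e1
  rw [e1, intervalIntegral.integral_of_le (by linarith), integral_Ioc_eq_integral_Ioo]
  have e2 : ∫ y in Ioo (x - π) (x - π + 2 * π), chi h (x - y) * g y =
      ∫ y in Ioo (x - π) (x - π + 2 * π), (Icc (x - π * h) (x + π * h)).indicator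
        (fun y => 1 / h * g y) y := by
    refine setIntegral_congr_fun measurableSet_Ioo fun y hy => ?_
    have hr : round ((x - y) / (2 * π)) = 0 := by
      rw [round_eq_zero_iff]
      constructor
      · rw [le_div_iff₀ (by positivity)]; linarith [hy.2]
      · rw [div_lt_iff₀ (by positivity)]; linarith [hy.1]
    unfold chi
    rw [hr]
    simp only [Int.cast_zero, mul_zero, sub_zero, indicator]
    have : |x - y| ≤ π * h ↔ y ∈ Icc (x - π * h) (x + π * h) := by
      rw [abs_le, mem_Icc]; constructor <;> rintro ⟨h1, h2⟩ <;> constructor <;> linarith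
    simp only [this]
    split_ifs <;> simp
  rw [e2, setIntegral_indicator measurableSet_Icc, inter_eq_right.mpr, integral_const_mul,
    integral_Icc_eq_integral_Ioc, ← intervalIntegral.integral_of_le (by linarith)]
  · field_simp
  · intro y hy
    exact ⟨by linarith [hy.1], by linarith [hy.2]⟩

lemma fract_of {y : ℝ} (k : ℤ) (h0 : k ≤ y) (h1 : y < k + 1) : Int.fract y = y - k := by
  rw [Int.fract, Int.floor_eq_iff.mpr ⟨h0, h1⟩]

lemma chi_eq (h : ℝ) (h0 : 0 < h) (h1 : h < 1) :
    chi h =ᵐ[volume] fun x => 1 + 1 / (2 * π * h) * delta (π * h) (beta 1) x := by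
  have hpi := pi_pos
  filter_upwards [(countable_range fun k : ℤ => π * h + 2 * π * k).ae_notMem volume] with x hx
  set r := round (x / (2 * π)) with hr
  set d := x / (2 * π) - r with hd
  have hxd : x = 2 * π * (d + r) := by rw [hd]; field_simp; ring
  have hd1 := abs_sub_round (x / (2 * π))
  rw [← hr, ← hd, abs_le] at hd1
  have hne : d ≠ h / 2 := by
    intro e
    apply hx
    refine ⟨r, ?_⟩
    simp only
    rw [hxd, e]; ring
  unfold chi delta beta
  rw [← hr, bernoulliFun_one, bernoulliFun_one]
  have e1 : Int.fract ((x + π * h) / (2 * π)) = Int.fract (d + h / 2) := by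
    rw [← Int.fract_add_intCast (d + h / 2) r]; congr 1; rw [hxd]; field_simp; ring
  have e2 : Int.fract ((x - π * h) / (2 * π)) = Int.fract (d - h / 2) := by
    rw [← Int.fract_add_intCast (d - h / 2) r]; congr 1; rw [hxd]; field_simp; ring
  have e3 : x - 2 * π * (r : ℝ) = 2 * π * d := by rw [hxd]; ring
  rw [e1, e2, e3, abs_mul, abs_of_pos (by positivity : (0:ℝ) < 2 * π)]
  simp only [pow_one, Nat.factorial_one, Nat.cast_one, div_one]
  have e4 : 2 * π * |d| ≤ π * h ↔ |d| ≤ h / 2 := by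
    constructor <;> intro hh <;> nlinarith
  simp only [e4]
  split_ifs with hc
  · rw [abs_le] at hc
    have hc2 : d < h / 2 := lt_of_le_of_ne hc.2 hne
    rw [fract_of 0 (by push_cast; linarith) (by push_cast; linarith),
      fract_of (y := d - h / 2) (-1) (by push_cast; linarith) (by push_cast; linarith)]
    push_cast
    field_simp
    ring
  · rw [not_le, lt_abs] at hc
    rcases hc with hc | hc
    · rw [fract_of 0 (by push_cast; linarith) (by push_cast; linarith),
        fract_of (y := d - h / 2) 0 (by push_cast; linarith) (by push_cast; linarith)]
      push_cast
      field_simp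
      ring
    · rw [fract_of (-1) (by push_cast; linarith) (by push_cast; linarith),
        fract_of (y := d - h / 2) (-1) (by push_cast; linarith) (by push_cast; linarith)]
      push_cast
      field_simp
      ring

lemma chiConv_eq (h : ℝ) (h0 : 0 < h) (h1 : h < 1) (m : ℕ) :
    chiConv h (m + 1) =ᵐ[volume] fun x => 1 + (1 / (2 * π * h)) ^ (m + 1) *
      (delta (π * h))^[m + 1] (beta (m + 1)) x := by
  have hpi := pi_pos
  induction m with
  | zero => simpa using! chi_eq h h0 h1
  | succ m ih =>
    refine Filter.Eventually.of_forall fun x => ?_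
    set D := (delta (π * h))^[m + 1] (beta (m + 1)) with hD
    have hDg : Good D := (beta_good (m + 1)).iter _ _
    have hDp : Prim D ((delta (π * h))^[m + 1] (beta (m + 2))) :=
      (beta_prim (m + 1) (by omega)).iter (beta_good _) _ _
    have e1 : chiConv h (m + 1 + 1) x =
        conv (chi h) (fun y => 1 + (1 / (2 * π * h)) ^ (m + 1) * D y) x := by
      change conv (chi h) (chiConv h (m + 1)) x = _
      unfold conv
      congr 1
      refine intervalIntegral.integral_congr_ae ?_
      filter_upwards [ih] with y hy _
      rw [hy]
    rw [e1, conv_chi h h0 h1 _ (fun y => by rw [hDg.2.2]),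
      intervalIntegral.integral_add (by simp) ((hDg.ii _ _).const_mul _),
      intervalIntegral.integral_const_mul, hDp, Function.iterate_succ_apply' _ (m + 1)]
    simp only [intervalIntegral.integral_const, delta, smul_eq_mul, mul_one]
    rw [pow_succ _ (m + 1)]
    generalize (1 / (2 * π * h)) ^ (m + 1) = c
    field_simp
    ring

end FavardAux

/-- For `1/(2mn) ≤ h < 1`, `E_{n−1}(χ_h^m)_{L¹} ≤ K_m/(πhn)^m`. -/
theorem bestApprox_chiConv_le (n m : ℕ) (hn : 1 ≤ n) (hm : 1 ≤ m) (h : ℝ)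
    (hlow : 1 / (2 * (m:ℝ) * (n:ℝ)) ≤ h) (hup : h < 1) :
    bestApprox (n - 1) (fun θ => (chiConv h m θ : ℂ)) ≤
      favardK m / (Real.pi * h * n) ^ m := by
  have hpi := Real.pi_pos
  have hn' : (0:ℝ) < n := by exact_mod_cast hn
  have hm' : (0:ℝ) < m := by exact_mod_cast hm
  have h0 : 0 < h := lt_of_lt_of_le (by positivity) hlow
  obtain ⟨p, rfl⟩ : ∃ p, m = p + 1 := ⟨m - 1, by omega⟩
  obtain ⟨N, rfl⟩ : ∃ N, n = N + 1 := ⟨n - 1, by omega⟩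
  rw [Nat.add_sub_cancel]
  obtain ⟨t, ht, htC⟩ := (FavardAux.beta_Ap N p).iter (FavardAux.beta_good _) (Real.pi * h) (p + 1)
  set D := (FavardAux.delta (Real.pi * h))^[p + 1] (FavardAux.beta (p + 1)) with hD
  set c : ℝ := (1 / (2 * Real.pi * h)) ^ (p + 1) with hc
  have hc0 : 0 < c := by positivity
  have hmem : (fun x => (1 : ℂ) + (c : ℂ) * t x) ∈ trigPoly N :=
    FavardAux.tp_add (FavardAux.tp_const _) (FavardAux.tp_mul _ ht)
  have hbdd : BddBelow ((fun t : ℝ → ℂ => L1norm (fun θ => ((chiConv h (p + 1) θ : ℝ) : ℂ) - t θ)) ''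
      (trigPoly N)) := by
    refine ⟨0, ?_⟩
    rintro _ ⟨s, _, rfl⟩
    exact mul_nonneg (by positivity)
      (intervalIntegral.integral_nonneg (by positivity) fun _ _ => norm_nonneg _)
  refine (csInf_le hbdd ⟨_, hmem, rfl⟩).trans ?_
  have e : ∫ φ in (0:ℝ)..(2 * Real.pi), ‖((chiConv h (p + 1) φ : ℝ) : ℂ) - (1 + (c : ℂ) * t φ)‖ =
      c * ∫ φ in (0:ℝ)..(2 * Real.pi), ‖((D φ : ℝ) : ℂ) - t φ‖ := by
    rw [← intervalIntegral.integral_const_mul]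
    refine intervalIntegral.integral_congr_ae ?_
    filter_upwards [FavardAux.chiConv_eq h h0 hup p] with y hy _
    rw [hy]
    have : (((1 + (1 / (2 * Real.pi * h)) ^ (p + 1) * D y : ℝ)) : ℂ) - (1 + (c : ℂ) * t y) =
        (c : ℂ) * ((D y : ℂ) - t y) := by
      rw [← hc]; push_cast; ring
    rw [this, norm_mul, Complex.norm_real, Real.norm_of_nonneg hc0.le]
  change (1 / (2 * Real.pi)) * ∫ φ in (0:ℝ)..(2 * Real.pi),
    ‖((chiConv h (p + 1) φ : ℝ) : ℂ) - (1 + (c : ℂ) * t φ)‖ ≤ _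
  rw [e]
  calc _ ≤ (1 / (2 * Real.pi)) * (c * (2 ^ (p + 1) * (2 * Real.pi *
        (favardK (p + 1) / ((N + 1 : ℕ) : ℝ) ^ (p + 1))))) := by gcongr
    _ = _ := by
      rw [hc, show Real.pi * h * ((N + 1 : ℕ) : ℝ) = (2 * Real.pi * h) * ((N + 1 : ℕ) : ℝ) / 2 by ring]
      rw [one_div_pow, div_pow, mul_pow (2 * Real.pi * h)]
      field_simp
end

section
/- For h ∈ {1/(2n), 3/(2n), …, (2n−1)/(2n)} and every m ≥ 1, the best L¹ approximation by trigonometric polynomials of degree ≤ n−1 satisfies E_{n−1}(χ_h^m)_{L¹} = K_m/(πhn)^m exactly. -/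
noncomputable def ee (l : ℤ) (θ : ℝ) : ℂ := Complex.exp (l * (θ:ℂ) * Complex.I)

lemma ee_cont (l : ℤ) : Continuous (ee l) := by unfold ee; fun_prop
lemma ee_norm (l : ℤ) (θ : ℝ) : ‖ee l θ‖ = 1 := by
  have : (l * (θ:ℂ) * Complex.I) = ((l * θ : ℝ) : ℂ) * Complex.I := by push_cast; ring
  rw [ee, this, Complex.norm_exp_ofReal_mul_I]
lemma ee_add (l : ℤ) (x y : ℝ) : ee l (x + y) = ee l x * ee l y := by
  simp only [ee]; rw [← Complex.exp_add]; congr 1; push_cast; ring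
lemma ee_add' (l j : ℤ) (x : ℝ) : ee (l + j) x = ee l x * ee j x := by
  simp only [ee]; rw [← Complex.exp_add]; congr 1; push_cast; ring
lemma ee_per (l : ℤ) : Function.Periodic (ee l) (2 * Real.pi) := by
  intro x
  rw [ee_add]
  have : ee l (2 * Real.pi) = 1 := by
    rw [ee, Complex.exp_eq_one_iff]
    exact ⟨l, by push_cast; ring⟩
  rw [this, mul_one]
lemma ee_zero (x : ℝ) : ee 0 x = 1 := by simp [ee]

lemma ee_int (l : ℤ) (hl : l ≠ 0) : ∫ θ in (0:ℝ)..(2 * Real.pi), ee l θ = 0 := by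
  have h1 : ∀ θ : ℝ, ee l θ = Complex.exp ((l * Complex.I) * θ) := by
    intro θ; rw [ee]; congr 1; ring
  simp_rw [h1]
  rw [integral_exp_mul_complex (by simp [hl])]
  have := ee_per l 0
  rw [h1, h1] at this
  simp only [zero_add] at this
  rw [this]; simp

instance fact2pi : Fact (0 < 2 * Real.pi) := ⟨Real.two_pi_pos⟩

lemma fourier_ee (l : ℤ) (θ : ℝ) : fourier l (θ : AddCircle (2 * Real.pi)) = ee l θ := by
  rw [fourier_coe_apply, ee]
  congr 1
  have : (Real.pi : ℂ) ≠ 0 := by exact_mod_cast Real.pi_ne_zero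
  push_cast
  field_simp

open MeasureTheory in
lemma fourier_unique (g : ℝ → ℂ) (hg : IntervalIntegrable g volume 0 (2 * Real.pi))
    (h : ∀ l : ℤ, ∫ θ in (0:ℝ)..(2 * Real.pi), g θ * ee l θ = 0) :
    ∀ᵐ θ, θ ∈ Set.Ioo 0 (2 * Real.pi) → g θ = 0 := by
  have hpi := Real.two_pi_pos
  have hi : ∀ φ : C(AddCircle (2 * Real.pi), ℂ),
      IntervalIntegrable (fun θ : ℝ => g θ * φ θ) volume 0 (2 * Real.pi) := by
    intro φ
    apply hg.mul_continuousOn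
    have : Continuous fun θ : ℝ => φ (θ : AddCircle (2 * Real.pi)) :=
      φ.continuous.comp (AddCircle.continuous_mk' _)
    exact this.continuousOn
  let L : C(AddCircle (2 * Real.pi), ℂ) →ₗ[ℂ] ℂ :=
    { toFun := fun φ => ∫ θ in (0:ℝ)..(2 * Real.pi), g θ * φ θ
      map_add' := by
        intro φ ψ
        rw [← intervalIntegral.integral_add (hi φ) (hi ψ)]
        congr 1; ext θ; simp; ring
      map_smul' := by
        intro c φ
        simp only [RingHom.id_apply, smul_eq_mul]
        rw [← intervalIntegral.integral_const_mul]
        congr 1; ext θ; simp; ring }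
  have hL : ∀ φ, ‖L φ‖ ≤ (∫ θ in (0:ℝ)..(2 * Real.pi), ‖g θ‖) * ‖φ‖ := by
    intro φ
    rw [← intervalIntegral.integral_mul_const]
    apply intervalIntegral.norm_integral_le_of_norm_le hpi.le
    · refine Filter.Eventually.of_forall fun θ _ => ?_
      rw [norm_mul]
      gcongr
      exact φ.norm_coe_le_norm _
    · exact hg.norm.mul_const _
  have h0 : L.mkContinuous _ hL = 0 := by
    apply ContinuousLinearMap.ext_on (s := Set.range (@fourier (2 * Real.pi)))
    · have := span_fourier_closure_eq_top (T := 2 * Real.pi)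
      rw [Submodule.dense_iff_topologicalClosure_eq_top]
      exact this
    · rintro _ ⟨l, rfl⟩
      simp only [LinearMap.mkContinuous_apply, zero_apply]
      change ∫ θ in (0:ℝ)..(2 * Real.pi), g θ * fourier l θ = 0
      simp_rw [fourier_ee]
      exact h l
  have h1 : ∀ φ : C(AddCircle (2 * Real.pi), ℂ),
      ∫ θ in (0:ℝ)..(2 * Real.pi), g θ * φ θ = 0 := by
    intro φ
    exact congrArg (fun T => T φ) h0
  apply isOpen_Ioo.ae_eq_zero_of_integral_contDiff_smul_eq_zero
  · apply IntegrableOn.locallyIntegrableOn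
    exact ((intervalIntegrable_iff_integrableOn_Ioc_of_le hpi.le).1 hg).mono_set Set.Ioo_subset_Ioc_self
  · intro φ hφ hc hs
    have hz : ∀ x, x ∉ Set.Ioo 0 (2 * Real.pi) → φ x = 0 := by
      intro x hx
      exact image_eq_zero_of_notMem_tsupport (fun h => hx (hs h))
    let F : ℝ → ℂ := fun x => (φ x : ℂ)
    have hF : Continuous F := by
      have := hφ.continuous
      fun_prop
    have hFc : Continuous (AddCircle.liftIoc (2 * Real.pi) 0 F) := by
      apply AddCircle.liftIoc_continuous
      · simp [F, hz]
      · exact hF.continuousOn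
    have := h1 ⟨_, hFc⟩
    rw [intervalIntegral.integral_of_le hpi.le] at this
    rw [← MeasureTheory.setIntegral_eq_integral_of_forall_compl_eq_zero
      (s := Set.Ioc 0 (2 * Real.pi)), ← this]
    · refine setIntegral_congr_fun measurableSet_Ioc fun x hx => ?_
      change _ = g x * AddCircle.liftIoc (2 * Real.pi) 0 F x
      rw [AddCircle.liftIoc_zero_coe_apply hx]
      simp [F, mul_comm]
    · intro x hx
      rw [hz x (fun h => hx ⟨h.1, h.2.le⟩), zero_smul]

open MeasureTheory

noncomputable def NN (σ : ℝ) (n : ℕ) (θ : ℝ) : ℂ := ee n θ + σ * ee (-n) θ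
noncomputable def ss (σ : ℝ) (n : ℕ) (θ : ℝ) : ℂ := (starRingEnd ℂ) (NN σ n θ) / ‖NN σ n θ‖

lemma NN_cont (σ : ℝ) (n : ℕ) : Continuous (NN σ n) := by
  unfold NN
  have := ee_cont n
  have := ee_cont (-n)
  fun_prop

lemma ss_meas (σ : ℝ) (n : ℕ) : Measurable (ss σ n) := by
  unfold ss
  have h := (NN_cont σ n).measurable
  exact (Complex.continuous_conj.measurable.comp h).div
    (Complex.continuous_ofReal.measurable.comp h.norm)

lemma ss_norm (σ : ℝ) (n : ℕ) (θ : ℝ) : ‖ss σ n θ‖ ≤ 1 := by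
  unfold ss
  rw [norm_div, Complex.norm_conj, Complex.norm_real, norm_norm]
  exact div_self_le_one _

lemma NN_mul_ss (σ : ℝ) (n : ℕ) (θ : ℝ) : NN σ n θ * ss σ n θ = ‖NN σ n θ‖ := by
  unfold ss
  by_cases h : NN σ n θ = 0
  · simp [h]
  · rw [← mul_div_assoc, Complex.mul_conj, Complex.normSq_eq_norm_sq]
    have : (‖NN σ n θ‖ : ℂ) ≠ 0 := by simpa using h
    field_simp
    push_cast; ring

lemma NN_per (σ : ℝ) (n : ℕ) : Function.Periodic (NN σ n) (2 * Real.pi) := by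
  intro x; simp only [NN, ee_per _ x]

lemma ss_per (σ : ℝ) (n : ℕ) : Function.Periodic (ss σ n) (2 * Real.pi) := by
  intro x; simp only [ss, NN_per _ _ x]

lemma ee_neg (l : ℤ) (x : ℝ) : ee (-l) x = (ee l x)⁻¹ := by
  simp only [ee]; rw [← Complex.exp_neg]; congr 1; push_cast; ring

lemma ss_shift (σ : ℝ) (n : ℕ) (x : ℝ) (c : ℝ) (hc : c * c = 1) (hx : ee n x = c * Complex.I) (θ : ℝ) :
    ss σ n (θ + x) = - (c * Complex.I) * ss (-σ) n θ := by
  have hcc : (c:ℂ) * c = 1 := by exact_mod_cast hc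
  have h2 : ee (-n) x = - (c * Complex.I) := by
    rw [ee_neg, hx]
    apply inv_eq_of_mul_eq_one_left
    have := Complex.I_mul_I
    linear_combination -this * c * c + hcc
  have h1 : NN σ n (θ + x) = (c * Complex.I) * NN (-σ) n θ := by
    simp only [NN, ee_add, hx, h2]; push_cast; ring
  have hca : |c| = 1 := by
    rcases mul_self_eq_one_iff.1 hc with h | h <;> simp [h]
  have h3 : ‖NN σ n (θ + x)‖ = ‖NN (-σ) n θ‖ := by
    rw [h1, norm_mul]; simp [hca]
  unfold ss
  rw [h3, h1, map_mul, map_mul, Complex.conj_I, Complex.conj_ofReal]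
  ring

lemma ss_anti (σ : ℝ) (n : ℕ) (x : ℝ) (hx : ee n x = -1) (θ : ℝ) :
    ss σ n (θ + x) = - ss σ n θ := by
  have h2 : ee (-n) x = -1 := by rw [ee_neg, hx]; norm_num
  have h1 : NN σ n (θ + x) = - NN σ n θ := by
    simp only [NN, ee_add, hx, h2]; ring
  unfold ss
  rw [h1, norm_neg, map_neg, neg_div]

lemma per_shift {F : ℝ → ℂ} (hF : Function.Periodic F (2 * Real.pi)) (x : ℝ) :
    ∫ θ in (0:ℝ)..(2 * Real.pi), F (θ + x) = ∫ θ in (0:ℝ)..(2 * Real.pi), F θ := by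
  rw [intervalIntegral.integral_comp_add_right]
  have := hF.intervalIntegral_add_eq (0 + x) 0
  rw [zero_add, zero_add] at this
  rw [← this]; congr 1 <;> ring

lemma ss_int (σ : ℝ) (n : ℕ) (l : ℤ) (a b : ℝ) :
    IntervalIntegrable (fun θ => ee l θ * ss σ n θ) volume a b := by
  rw [intervalIntegrable_iff]
  refine Integrable.mono' (g := fun _ => (1:ℝ)) ?_ ?_ ?_
  · exact integrableOn_const (by simp) 
  · exact ((ee_cont l).measurable.mul (ss_meas σ n)).aestronglyMeasurable
  · refine Filter.Eventually.of_forall fun θ => ?_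
    rw [norm_mul, ee_norm, one_mul]; exact ss_norm _ _ _

lemma ssC_zero (σ : ℝ) (n : ℕ) (hn : 1 ≤ n) (l : ℤ) (hl : ∀ j : ℤ, l ≠ (2 * j + 1) * n) :
    ∫ θ in (0:ℝ)..(2 * Real.pi), ee l θ * ss σ n θ = 0 := by
  have hn0 : (n:ℂ) ≠ 0 := by exact_mod_cast (by omega : n ≠ 0)
  have hpi : (Real.pi : ℂ) ≠ 0 := by exact_mod_cast Real.pi_ne_zero
  have hx : ee n (Real.pi / n) = -1 := by
    rw [ee, ← Complex.exp_pi_mul_I]; congr 1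
    push_cast; field_simp
  have h1 := per_shift (F := fun θ => ee l θ * ss σ n θ)
    (fun θ => by simp only [ee_per l θ, ss_per σ n θ]) (Real.pi / n)
  have h2 : ∀ θ, ee l (θ + Real.pi / n) * ss σ n (θ + Real.pi / n)
      = - ee l (Real.pi / n) * (ee l θ * ss σ n θ) := by
    intro θ; rw [ee_add, ss_anti σ n _ hx]; ring
  simp only [h2] at h1
  rw [intervalIntegral.integral_const_mul] at h1
  by_contra hne
  have h3 : - ee l (Real.pi / n) = 1 := by
    have := mul_right_cancel₀ hne (h1.trans (one_mul _).symm)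
    exact this
  have h4 : Complex.exp (l * ((Real.pi / n : ℝ):ℂ) * Complex.I) = Complex.exp (Real.pi * Complex.I) := by
    rw [Complex.exp_pi_mul_I]
    rw [ee] at h3
    linear_combination -h3
  rw [Complex.exp_eq_exp_iff_exists_int] at h4
  obtain ⟨j, hj⟩ := h4
  apply hl j
  have h5 : (l:ℂ) * Real.pi * Complex.I = ((2 * j + 1) * n) * Real.pi * Complex.I := by
    have : (l * ((Real.pi / n : ℝ):ℂ) * Complex.I) * n = (l:ℂ) * Real.pi * Complex.I := by
      push_cast; field_simp
    rw [← this, hj]; ring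
  have h6 := mul_right_cancel₀ hpi (mul_right_cancel₀ Complex.I_ne_zero h5)
  exact_mod_cast h6

lemma ss_neg_one (u : ℝ) (hu : u ∈ Set.Ioo 0 Real.pi) : ss (-1) 1 u = -Complex.I := by
  have hN : NN (-1) 1 u = 2 * Real.sin u * Complex.I := by
    simp only [NN, ee]
    push_cast
    have h1 : Complex.exp (1 * u * Complex.I) = Complex.cos u + Complex.sin u * Complex.I := by
      rw [one_mul, Complex.exp_mul_I]
    have h2 : Complex.exp (-1 * u * Complex.I) = Complex.cos u - Complex.sin u * Complex.I := by
      have : (-1 * u * Complex.I : ℂ) = (-u : ℂ) * Complex.I := by ring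
      rw [this, Complex.exp_mul_I, Complex.cos_neg, Complex.sin_neg]; ring
    rw [h1, h2]; ring
  have hs : 0 < Real.sin u := Real.sin_pos_of_mem_Ioo hu
  have hnorm : ‖NN (-1) 1 u‖ = 2 * Real.sin u := by
    rw [hN]; simp [abs_of_pos hs, -Complex.ofReal_sin]
  unfold ss
  rw [hnorm, hN]
  have : (Real.sin u : ℂ) ≠ 0 := by exact_mod_cast hs.ne'
  simp only [map_mul, Complex.conj_I, Complex.conj_ofReal, map_ofNat]
  push_cast at *
  field_simp

lemma ee_odd_pi (j : ℤ) : ee (2 * j + 1) Real.pi = -1 := by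
  rw [ee, ← Complex.exp_pi_mul_I, Complex.exp_eq_exp_iff_exists_int]
  exact ⟨j, by push_cast; ring⟩

lemma ssC_one_neg (j : ℤ) :
    ∫ θ in (0:ℝ)..(2 * Real.pi), ee (2 * j + 1) θ * ss (-1) 1 θ = 4 / (2 * j + 1) := by
  have hj : (2 * (j:ℂ) + 1) ≠ 0 := by exact_mod_cast (by omega : 2 * j + 1 ≠ 0)
  rw [← intervalIntegral.integral_add_adjacent_intervals (b := Real.pi) (ss_int _ _ _ _ _) (ss_int _ _ _ _ _)]
  have h1 : ∫ θ in Real.pi..(2 * Real.pi), ee (2 * j + 1) θ * ss (-1) 1 θ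
      = ∫ θ in (0:ℝ)..Real.pi, ee (2 * j + 1) θ * ss (-1) 1 θ := by
    have := intervalIntegral.integral_comp_add_right (a := 0) (b := Real.pi)
      (fun θ => ee (2 * j + 1) θ * ss (-1) 1 θ) Real.pi
    rw [zero_add, ← two_mul] at this
    rw [← this]
    congr 1; ext θ
    have h := ee_odd_pi 0
    rw [ss_anti _ _ _ (by simpa using h), ee_add, ee_odd_pi]; ring
  rw [h1]
  have h2 : ∫ θ in (0:ℝ)..Real.pi, ee (2 * j + 1) θ * ss (-1) 1 θ
      = ∫ θ in (0:ℝ)..Real.pi, Complex.exp (((2 * j + 1) * Complex.I) * θ) * (-Complex.I) := by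
    rw [intervalIntegral.integral_of_le Real.pi_pos.le, intervalIntegral.integral_of_le Real.pi_pos.le,
      integral_Ioc_eq_integral_Ioo, integral_Ioc_eq_integral_Ioo]
    refine setIntegral_congr_fun measurableSet_Ioo fun x hx => ?_
    simp only [ss_neg_one x hx, ee]
    congr 2; push_cast; ring
  rw [h2, intervalIntegral.integral_mul_const, integral_exp_mul_complex (by simp [hj])]
  have h3 := ee_odd_pi j
  rw [ee] at h3
  have h4 : ((2 * (j:ℂ) + 1) * Complex.I * Real.pi) = (((2 * j + 1 : ℤ)) * (Real.pi:ℂ) * Complex.I) := by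
    push_cast; ring
  rw [h4, h3]
  simp
  field_simp
  norm_num

lemma ee_half (j : ℤ) : ee (2 * j + 1) (Real.pi / 2) = (-1) ^ j * Complex.I := by
  have h : (((2 * j + 1 : ℤ)) * ((Real.pi / 2 : ℝ):ℂ) * Complex.I)
      = (j : ℂ) * (Real.pi * Complex.I) + Real.pi / 2 * Complex.I := by
    push_cast; ring
  rw [ee, h, Complex.exp_add, Complex.exp_int_mul, Complex.exp_pi_mul_I, Complex.exp_pi_div_two_mul_I]

lemma ssC_one_pos (j : ℤ) :
    ∫ θ in (0:ℝ)..(2 * Real.pi), ee (2 * j + 1) θ * ss 1 1 θ = (-1) ^ j * (4 / (2 * j + 1)) := by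
  rw [← ssC_one_neg, ← intervalIntegral.integral_const_mul]
  rw [← per_shift (F := fun θ => ee (2 * j + 1) θ * ss 1 1 θ)
    (fun θ => by simp only [ee_per _ θ, ss_per _ _ θ]) (Real.pi / 2)]
  congr 1; ext θ
  have h0 := ee_half 0
  have h1 : ee ((1:ℕ):ℤ) (Real.pi / 2) = (1:ℝ) * Complex.I := by simpa using h0
  rw [ss_shift 1 1 (Real.pi / 2) 1 (by norm_num) h1, ee_add, ee_half]
  have := Complex.I_mul_I
  push_cast
  linear_combination (- ee (2 * j + 1) θ * (-1) ^ j * ss (-1) 1 θ) * this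

lemma ssC_val (σ : ℝ) (hσ : σ = 1 ∨ σ = -1) (n : ℕ) (hn : 1 ≤ n) (j : ℤ) :
    ∫ θ in (0:ℝ)..(2 * Real.pi), ee ((2 * j + 1) * n) θ * ss σ n θ
      = (-σ : ℂ) ^ j * (4 / (2 * j + 1)) := by
  have hn0 : (n:ℝ) ≠ 0 := by exact_mod_cast (by omega : n ≠ 0)
  have h1 : ∀ θ : ℝ, ee ((2 * j + 1) * n) θ * ss σ n θ
      = (fun u => ee (2 * j + 1) u * ss σ 1 u) (n * θ) := by
    intro θ
    have : ∀ l : ℤ, ee (l * n) θ = ee l (n * θ) := by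
      intro l; simp only [ee]; congr 1; push_cast; ring
    have h2 : NN σ n θ = NN σ 1 (n * θ) := by
      simp only [NN]
      rw [← this, ← this]; simp
    simp only [ss, h2, this]
  simp_rw [h1]
  rw [intervalIntegral.integral_comp_mul_left (fun u => ee (2 * j + 1) u * ss σ 1 u) hn0]
  have hper : Function.Periodic (fun u => ee (2 * j + 1) u * ss σ 1 u) (2 * Real.pi) :=
    fun θ => by simp only [ee_per _ θ, ss_per _ _ θ]
  have h3 := hper.intervalIntegral_add_zsmul_eq n 0
  simp only [zero_add] at h3
  have h4 : (n:ℝ) * (2 * Real.pi) = (n:ℤ) • (2 * Real.pi) := by simp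
  rw [h4, mul_zero, h3 (fun a b => ss_int _ _ _ _ _)]
  have h5 : ∫ θ in (0:ℝ)..(2 * Real.pi), ee (2 * j + 1) θ * ss σ 1 θ = (-σ : ℂ) ^ j * (4 / (2 * j + 1)) := by
    rcases hσ with rfl | rfl
    · rw [ssC_one_pos]; norm_num
    · rw [ssC_one_neg]; norm_num
  rw [h5]
  have : (n:ℂ) ≠ 0 := by exact_mod_cast hn0
  simp
  field_simp


noncomputable def pp (t θ : ℝ) : ℝ := Real.sinh t / (Real.cosh t - Real.cos θ)

lemma cosh_sub_pos {t : ℝ} (ht : 0 < t) (θ : ℝ) : 0 < Real.cosh t - Real.cos θ := by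
  have := Real.one_lt_cosh.2 ht.ne'
  have := Real.cos_le_one θ
  linarith

lemma pp_pos {t : ℝ} (ht : 0 < t) (θ : ℝ) : 0 < pp t θ :=
  div_pos (Real.sinh_pos_iff.2 ht) (cosh_sub_pos ht θ)

lemma ee_pow (m : ℕ) (θ : ℝ) : ee m θ = (ee 1 θ) ^ m := by
  simp only [ee]; rw [← Complex.exp_nat_mul]; congr 1; push_cast; ring

lemma pp_hasSum {t : ℝ} (ht : 0 < t) (θ : ℝ) :
    HasSum (fun l : ℤ => ((Real.exp (-(|(l:ℝ)| * t)) : ℝ) : ℂ) * ee l θ) (pp t θ : ℂ) := by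
  set r : ℝ := Real.exp (-t) with hr
  have hr0 : 0 < r := Real.exp_pos _
  have hr1 : r < 1 := by rw [hr, Real.exp_lt_one_iff]; linarith
  set z : ℂ := ee 1 θ with hz
  have hz0 : z ≠ 0 := by rw [← norm_ne_zero_iff, hz, ee_norm]; norm_num
  have hp : ∀ m : ℕ, Real.exp (-((m:ℝ) * t)) = r ^ m := by
    intro m; rw [hr, ← Real.exp_nat_mul]; congr 1; ring
  have hq : ‖(r:ℂ) * z‖ < 1 := by
    rw [norm_mul, hz, ee_norm, Complex.norm_real, mul_one, Real.norm_of_nonneg hr0.le]; exact hr1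
  have hq' : ‖(r:ℂ) * z⁻¹‖ < 1 := by
    rw [norm_mul, norm_inv, hz, ee_norm, Complex.norm_real, inv_one, mul_one, Real.norm_of_nonneg hr0.le]
    exact hr1
  have s1 := hasSum_geometric_of_norm_lt_one hq
  have s2 := (hasSum_geometric_of_norm_lt_one hq').mul_left ((r:ℂ) * z⁻¹)
  have hv : (pp t θ : ℂ) = (1 - (r:ℂ) * z)⁻¹ + (r:ℂ) * z⁻¹ * (1 - (r:ℂ) * z⁻¹)⁻¹ := by
    have n1 : 1 - (r:ℂ) * z ≠ 0 := by
      intro h; rw [sub_eq_zero] at h; rw [← h] at hq; simp at hq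
    have n2 : 1 - (r:ℂ) * z⁻¹ ≠ 0 := by
      intro h; rw [sub_eq_zero] at h; rw [← h] at hq'; simp at hq'
    have hd := (cosh_sub_pos ht θ).ne'
    have hd' : ((Real.cosh t - Real.cos θ : ℝ) : ℂ) ≠ 0 := by exact_mod_cast hd
    have hrc : (r:ℂ) ≠ 0 := by exact_mod_cast hr0.ne'
    have hcosh : Real.cosh t = (r⁻¹ + r) / 2 := by
      rw [Real.cosh_eq, hr, Real.exp_neg, inv_inv]
    have hsinh : Real.sinh t = (r⁻¹ - r) / 2 := by
      rw [Real.sinh_eq, hr, Real.exp_neg, inv_inv]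
    have hcos : ((Real.cos θ : ℝ) : ℂ) = (z + z⁻¹) / 2 := by
      rw [hz, ← ee_neg, ee, ee, Complex.ofReal_cos, Complex.cos]
      push_cast
      congr 3 <;> ring_nf
    unfold pp
    rw [Complex.ofReal_div, div_eq_iff hd', Complex.ofReal_sub, hcos, hcosh, hsinh]
    push_cast
    have n2' : z - r ≠ 0 := by
      intro h; apply n2; rw [sub_eq_zero] at h; rw [← h]; simp [hz0]
    have n2'' : 1 - (r:ℂ) * z⁻¹ = (z - r) / z := by field_simp
    rw [n2'']
    field_simp
    ring
  rw [hv]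
  apply HasSum.of_nat_of_neg_add_one
  · refine s1.congr_fun fun m => ?_
    have := hp m
    simp only [Int.cast_natCast, Nat.abs_cast, hp, ee_pow, ← hz, mul_pow]
    push_cast; rfl
  · refine s2.congr_fun fun m => ?_
    have h1 : |((-((m:ℤ) + 1) : ℤ) : ℝ)| = ((m + 1 : ℕ) : ℝ) := by
      push_cast; rw [abs_neg, abs_of_nonneg (by positivity)]
    rw [h1, hp, ee_neg]
    have h2 : ((m:ℤ) + 1) = ((m + 1 : ℕ) : ℤ) := by push_cast; rfl
    rw [h2, ee_pow, ← hz]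
    push_cast
    rw [mul_pow, inv_pow, pow_succ, pow_succ]
    field_simp

lemma exp_summable {t : ℝ} (ht : 0 < t) :
    Summable (fun l : ℤ => Real.exp (-(|(l:ℝ)| * t))) := by
  have := (pp_hasSum ht 0).summable
  simp only [ee, Complex.ofReal_zero, mul_zero, zero_mul, Complex.exp_zero, mul_one] at this
  exact_mod_cast this

noncomputable def den (σ : ℝ) (n : ℕ) (t : ℝ) : ℝ := Real.exp (n * t) + σ * Real.exp (-(n * t))

lemma den_pos {σ : ℝ} (hσ : σ = 1 ∨ σ = -1) {n : ℕ} (hn : 1 ≤ n) {t : ℝ} (ht : 0 < t) : 0 < den σ n t := by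
  have : (0:ℝ) < n := by exact_mod_cast hn
  have h2 : 0 < n * t := by positivity
  have h3 : Real.exp (-(n * t)) < Real.exp (n * t) := Real.exp_lt_exp.2 (by linarith)
  have h4 := Real.exp_pos (-(n * t))
  unfold den
  rcases hσ with rfl | rfl <;> linarith

noncomputable def kk (σ : ℝ) (n : ℕ) (t θ : ℝ) : ℂ := ((pp t θ / den σ n t : ℝ) : ℂ) * NN σ n θ

noncomputable def kap (σ : ℝ) (n : ℕ) (t : ℝ) (l : ℤ) : ℝ :=
  (Real.exp (-(|(l:ℝ) - n| * t)) + σ * Real.exp (-(|(l:ℝ) + n| * t))) / den σ n t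

lemma kk_hasSum (σ : ℝ) (n : ℕ) {t : ℝ} (ht : 0 < t) (θ : ℝ) :
    HasSum (fun l : ℤ => (kap σ n t l : ℂ) * ee l θ) (kk σ n t θ) := by
  have h := pp_hasSum ht θ
  have h1 := ((Equiv.subRight (n:ℤ)).hasSum_iff.2 h).mul_right (ee n θ)
  have h2 := (((Equiv.addRight (n:ℤ)).hasSum_iff.2 h).mul_right (ee (-n) θ)).mul_left (σ:ℂ)
  have h3 := (h1.add h2).mul_right ((den σ n t : ℂ)⁻¹)
  have h4 : kk σ n t θ = (↑(pp t θ) * ee (↑n) θ + ↑σ * (↑(pp t θ) * ee (-↑n) θ)) * (↑(den σ n t))⁻¹ := by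
    simp only [kk, NN]; push_cast; ring
  rw [h4]
  refine h3.congr_fun fun l => ?_
  simp only [Function.comp, Equiv.subRight_apply, Equiv.coe_addRight]
  have e1 : ee (l - n) θ * ee n θ = ee l θ := by rw [← ee_add']; simp
  have e2 : ee (l + n) θ * ee (-n) θ = ee l θ := by rw [← ee_add']; simp
  simp only [mul_assoc, e1, e2, kap]
  push_cast
  ring

lemma kap_summable (σ : ℝ) (n : ℕ) {t : ℝ} (ht : 0 < t) : Summable (fun l => ‖(kap σ n t l : ℂ)‖) := by
  have h := exp_summable ht
  have h1 := ((Equiv.subRight (n:ℤ)).summable_iff.2 h)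
  have h2 := ((Equiv.addRight (n:ℤ)).summable_iff.2 h).mul_left σ
  have h3 := ((h1.add h2).mul_right ((den σ n t)⁻¹)).norm
  refine h3.congr fun l => ?_
  simp only [Function.comp, Equiv.subRight_apply, Equiv.coe_addRight, kap, Complex.norm_real]
  push_cast
  rw [div_eq_mul_inv]

lemma kap_pos {σ : ℝ} (hσ : σ = 1 ∨ σ = -1) {n : ℕ} (hn : 1 ≤ n) {t : ℝ} (ht : 0 < t) (l : ℤ) (hl : (n:ℤ) ≤ l) :
    kap σ n t l = Real.exp (-(l * t)) := by
  have hn' : (0:ℝ) ≤ n := by positivity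
  have hl' : (n:ℝ) ≤ l := by exact_mod_cast hl
  unfold kap
  rw [div_eq_iff (den_pos hσ hn ht).ne', den, abs_of_nonneg (by linarith), abs_of_nonneg (by linarith)]
  have e1 : -(((l:ℝ) - n) * t) = -(l * t) + n * t := by ring
  have e2 : -(((l:ℝ) + n) * t) = -(l * t) + -(n * t) := by ring
  rw [e1, e2, Real.exp_add, Real.exp_add]; ring

lemma kap_neg {σ : ℝ} (hσ : σ = 1 ∨ σ = -1) {n : ℕ} (hn : 1 ≤ n) {t : ℝ} (ht : 0 < t) (l : ℤ) (hl : l ≤ -(n:ℤ)) :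
    kap σ n t l = σ * Real.exp (l * t) := by
  have hn' : (0:ℝ) ≤ n := by positivity
  have hl' : (l:ℝ) ≤ -n := by exact_mod_cast hl
  have hs : σ * σ = 1 := by rcases hσ with rfl | rfl <;> norm_num
  unfold kap
  rw [div_eq_iff (den_pos hσ hn ht).ne', den, abs_of_nonpos (by linarith), abs_of_nonpos (by linarith)]
  have e1 : -(-((l:ℝ) - n) * t) = (l * t) + -(n * t) := by ring
  have e2 : -(-((l:ℝ) + n) * t) = (l * t) + (n * t) := by ring
  rw [e1, e2, Real.exp_add, Real.exp_add]
  linear_combination (-Real.exp (l * t) * Real.exp (-(n * t))) * hs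

lemma pairing (σ : ℝ) (n : ℕ) {t : ℝ} (ht : 0 < t) (s : ℝ → ℂ) (hs : Measurable s) (hs1 : ∀ θ, ‖s θ‖ ≤ 1) :
    HasSum (fun l : ℤ => (kap σ n t l : ℂ) * ∫ θ in (0:ℝ)..(2 * Real.pi), ee l θ * s θ)
      (∫ θ in (0:ℝ)..(2 * Real.pi), kk σ n t θ * s θ) := by
  simp_rw [← intervalIntegral.integral_const_mul]
  apply intervalIntegral.hasSum_integral_of_dominated_convergence (fun l _ => ‖(kap σ n t l : ℂ)‖)
  · intro l
    exact (((ee_cont l).measurable.mul hs).const_mul _).aestronglyMeasurable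
  · intro l
    refine Filter.Eventually.of_forall fun θ _ => ?_
    rw [norm_mul, norm_mul, ee_norm, one_mul]
    exact mul_le_of_le_one_right (norm_nonneg _) (hs1 θ)
  · exact Filter.Eventually.of_forall fun θ _ => kap_summable σ n ht
  · exact intervalIntegrable_const
  · refine Filter.Eventually.of_forall fun θ _ => ?_
    simpa [mul_assoc] using (kk_hasSum σ n ht θ).mul_right (s θ)

lemma kk_coeff (σ : ℝ) (n : ℕ) {t : ℝ} (ht : 0 < t) (j : ℤ) :
    ∫ θ in (0:ℝ)..(2 * Real.pi), kk σ n t θ * ee (-j) θ = 2 * Real.pi * kap σ n t j := by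
  have h := pairing σ n ht (ee (-j)) (ee_cont _).measurable (fun θ => (ee_norm _ _).le)
  have h2 : HasSum (fun l : ℤ => (kap σ n t l : ℂ) * ∫ θ in (0:ℝ)..(2 * Real.pi), ee l θ * ee (-j) θ)
      (2 * Real.pi * kap σ n t j) := by
    convert hasSum_ite_eq j (2 * Real.pi * kap σ n t j : ℂ) using 2 with l
    simp_rw [← ee_add']
    split_ifs with hl
    · subst hl
      simp [ee_zero]; ring
    · rw [ee_int _ (by omega), mul_zero]
  exact h.unique h2

lemma kk_ss (σ : ℝ) (hσ : σ = 1 ∨ σ = -1) (n : ℕ) (hn : 1 ≤ n) {t : ℝ} (ht : 0 < t) (θ : ℝ) :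
    kk σ n t θ * ss σ n θ = ‖kk σ n t θ‖ := by
  have h := pp_pos ht θ
  have h2 := den_pos hσ hn ht
  rw [kk, mul_assoc, NN_mul_ss, norm_mul, Complex.norm_real, Real.norm_of_nonneg (by positivity)]
  push_cast; rfl

lemma kk_norm_hasSum (σ : ℝ) (hσ : σ = 1 ∨ σ = -1) (n : ℕ) (hn : 1 ≤ n) {t : ℝ} (ht : 0 < t) :
    HasSum (fun j : ℕ => 8 * (-σ) ^ j / (2 * j + 1) * Real.exp (-((2 * j + 1) * n * t)))
      (∫ θ in (0:ℝ)..(2 * Real.pi), ‖kk σ n t θ‖) := by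
  have h := pairing σ n ht (ss σ n) (ss_meas _ _) (ss_norm _ _)
  simp_rw [kk_ss σ hσ n hn ht] at h
  rw [intervalIntegral.integral_ofReal] at h
  have hinj : Function.Injective (fun j : ℤ => (2 * j + 1) * (n:ℤ)) := by
    intro a b hab
    have : (n:ℤ) ≠ 0 := by omega
    have := mul_right_cancel₀ this hab
    omega
  rw [← hinj.hasSum_iff] at h
  swap
  · intro l hl
    rw [ssC_zero σ n hn l, mul_zero]
    intro j hj
    exact hl ⟨j, hj.symm⟩
  have h2 := h.nat_add_neg_add_one
  rw [← Complex.hasSum_ofReal]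
  refine h2.congr_fun fun j => ?_
  simp only [Function.comp]
  rw [ssC_val σ hσ n hn, ssC_val σ hσ n hn]
  have hn' : (0:ℤ) < n := by omega
  rw [kap_pos hσ hn ht _ (by nlinarith), kap_neg hσ hn ht _ (by nlinarith)]
  have hs : (σ:ℂ) * σ = 1 := by rcases hσ with rfl | rfl <;> norm_num
  have hinv : (-σ:ℂ)⁻¹ = -σ := inv_eq_of_mul_eq_one_left (by linear_combination hs)
  have e1 : (-σ:ℂ) ^ (-((j:ℤ) + 1)) = (-σ) ^ (j + 1) := by
    rw [zpow_neg, ← inv_zpow, hinv]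
    exact_mod_cast zpow_natCast (-σ:ℂ) (j + 1)
  rw [e1, zpow_natCast]
  have e2 : (((2 * -((j:ℤ) + 1) + 1) * (n:ℤ) : ℤ) : ℝ) * t = -((2 * j + 1) * n * t) := by push_cast; ring
  have e3 : -((((2 * (j:ℤ) + 1) * (n:ℤ) : ℤ) : ℝ) * t) = -((2 * j + 1) * n * t) := by push_cast; ring
  rw [e2, e3]
  have e4 : (2 * ((-((j:ℤ) + 1) : ℤ) : ℂ) + 1) = -(2 * (j:ℂ) + 1) := by push_cast; ring
  have e5 : (2 * (j:ℂ) + 1) ≠ 0 := by exact_mod_cast (by omega : 2 * j + 1 ≠ 0)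
  rw [e4, div_neg, pow_succ]
  push_cast
  field_simp
  linear_combination (-4 * (-σ:ℂ) ^ j) * hs


noncomputable def wt (M : ℕ) (t : ℝ) : ℝ := t ^ M / (M.factorial : ℝ)

lemma wt_cont (M : ℕ) : Continuous (wt M) := by unfold wt; fun_prop

lemma wt_nonneg (M : ℕ) {t : ℝ} (ht : 0 < t) : 0 ≤ wt M t := by unfold wt; positivity

lemma wt_integral (M : ℕ) {r : ℝ} (hr : 0 < r) :
    ∫ t in Set.Ioi (0:ℝ), Real.exp (-(r * t)) * wt M t = 1 / r ^ (M + 1) := by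
  have key := Real.integral_rpow_mul_exp_neg_mul_Ioi (a := (M:ℝ) + 1) (by positivity) hr
  have hf : (M.factorial : ℝ) ≠ 0 := by positivity
  have h1 : ∀ t : ℝ, Real.exp (-(r * t)) * wt M t
      = (M.factorial : ℝ)⁻¹ * (t ^ ((M:ℝ) + 1 - 1) * Real.exp (-(r * t))) := by
    intro t
    rw [add_sub_cancel_right, Real.rpow_natCast, wt]; ring
  simp_rw [h1]
  rw [integral_const_mul, key, Real.Gamma_nat_eq_factorial]
  have : (1 / r) ^ ((M:ℝ) + 1) = 1 / r ^ (M + 1) := by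
    rw [← Nat.cast_succ, Real.rpow_natCast, one_div_pow]
  rw [this]; field_simp

lemma wt_integrable (M : ℕ) {r : ℝ} (hr : 0 < r) :
    IntegrableOn (fun t => Real.exp (-(r * t)) * wt M t) (Set.Ioi (0:ℝ)) := by
  apply Integrable.of_integral_ne_zero
  rw [wt_integral M hr]; positivity

lemma odd_summable (M : ℕ) : Summable (fun j : ℕ => 1 / (2 * (j:ℝ) + 1) ^ (M + 2)) := by
  have h := (Real.summable_one_div_nat_pow (p := M + 2)).2 (by omega)
  have h2 := h.comp_injective (i := fun j : ℕ => 2 * j + 1) (fun a b hab => by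
    have : 2 * a + 1 = 2 * b + 1 := hab
    omega)
  refine h2.congr fun j => ?_
  simp [Function.comp]

section terms
variable (σ : ℝ) (n M : ℕ)

noncomputable def tm (j : ℕ) (t : ℝ) : ℝ :=
  8 * (-σ) ^ j / (2 * j + 1) * Real.exp (-((2 * j + 1) * n * t)) * wt M t

lemma tm_eq (j : ℕ) (t : ℝ) : tm σ n M j t =
    (8 * (-σ) ^ j / (2 * j + 1)) * (Real.exp (-(((2 * j + 1) * n) * t)) * wt M t) := by
  unfold tm; ring

lemma tm_integrable (hn : 1 ≤ n) (j : ℕ) : IntegrableOn (tm σ n M j) (Set.Ioi 0) := by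
  have : (0:ℝ) < n := by exact_mod_cast hn
  have h := (wt_integrable M (r := (2 * j + 1) * n) (by positivity)).const_mul (8 * (-σ) ^ j / (2 * j + 1))
  exact h.congr (Filter.Eventually.of_forall fun t => (tm_eq σ n M j t).symm)

lemma tm_integral (hn : 1 ≤ n) (j : ℕ) : ∫ t in Set.Ioi (0:ℝ), tm σ n M j t
    = 8 / n ^ (M + 1) * ((-σ) ^ j * (1 / (2 * (j:ℝ) + 1) ^ (M + 2))) := by
  have hn' : (0:ℝ) < n := by exact_mod_cast hn
  simp_rw [tm_eq]
  rw [integral_const_mul, wt_integral M (by positivity), mul_pow]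
  field_simp
  ring

lemma tm_norm (hσ : σ = 1 ∨ σ = -1) (j : ℕ) {t : ℝ} (ht : 0 < t) :
    ‖tm σ n M j t‖ = tm (-1) n M j t := by
  have h1 := wt_nonneg M ht
  have h2 : |(-σ) ^ j| = 1 := by rcases hσ with rfl | rfl <;> simp
  have h3 : |(2 * (j:ℝ) + 1)| = 2 * j + 1 := abs_of_pos (by positivity)
  unfold tm
  simp only [norm_mul, norm_div, Real.norm_eq_abs, h2, h3, Real.abs_exp, abs_of_nonneg h1]
  norm_num

lemma tm_norm_integral (hσ : σ = 1 ∨ σ = -1) (j : ℕ) :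
    ∫ t in Set.Ioi (0:ℝ), ‖tm σ n M j t‖ = ∫ t in Set.Ioi (0:ℝ), tm (-1) n M j t :=
  setIntegral_congr_fun measurableSet_Ioi fun _ ht => tm_norm σ n M hσ j ht

lemma tm_summable (hσ : σ = 1 ∨ σ = -1) (hn : 1 ≤ n) :
    Summable fun j => ∫ t in Set.Ioi (0:ℝ), ‖tm σ n M j t‖ := by
  simp_rw [tm_norm_integral σ n M hσ, tm_integral _ n M hn]
  simpa using (odd_summable M).mul_left (8 / (n:ℝ) ^ (M + 1))

lemma tm_hasSum (hσ : σ = 1 ∨ σ = -1) (hn : 1 ≤ n) :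
    HasSum (fun j => ∫ t in Set.Ioi (0:ℝ), tm σ n M j t) (∫ t in Set.Ioi (0:ℝ), ∑' j, tm σ n M j t) :=
  hasSum_integral_of_summable_integral_norm (tm_integrable σ n M hn) (tm_summable σ n M hσ hn)

lemma tm_pt (hσ : σ = 1 ∨ σ = -1) (hn : 1 ≤ n) {t : ℝ} (ht : 0 < t) :
    HasSum (fun j => tm σ n M j t) ((∫ θ in (0:ℝ)..(2 * Real.pi), ‖kk σ n t θ‖) * wt M t) :=
  (kk_norm_hasSum σ hσ n hn ht).mul_right _

lemma bd_integrable (hn : 1 ≤ n) : IntegrableOn (fun t => ∑' j, tm (-1) n M j t) (Set.Ioi 0) := by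
  have hn' : (0:ℝ) < n := by exact_mod_cast hn
  apply Integrable.of_integral_ne_zero
  rw [← (tm_hasSum (-1) n M (Or.inr rfl) hn).tsum_eq]
  simp_rw [tm_integral _ n M hn, tsum_mul_left, neg_neg, one_pow, one_mul]
  have : 0 < ∑' j : ℕ, 1 / (2 * (j:ℝ) + 1) ^ (M + 2) :=
    (odd_summable M).tsum_pos (fun j => by positivity) 0 (by positivity)
  positivity

lemma kk_meas : Measurable (fun p : ℝ × ℝ => kk σ n p.2 p.1) := by
  unfold kk pp den
  have h1 := (NN_cont σ n).measurable
  have h2 : Measurable (fun p : ℝ × ℝ => NN σ n p.1) := h1.comp measurable_fst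
  apply Measurable.mul _ h2
  apply Complex.measurable_ofReal.comp
  apply Measurable.div
  · apply Measurable.div
    · exact Real.measurable_sinh.comp measurable_snd
    · exact (Real.measurable_cosh.comp measurable_snd).sub (Real.measurable_cos.comp measurable_fst)
  · fun_prop

lemma kk_int (hσ : σ = 1 ∨ σ = -1) (hn : 1 ≤ n) :
    Integrable (fun p : ℝ × ℝ => kk σ n p.2 p.1 * (wt M p.2 : ℂ))
      ((volume.restrict (Set.Ioc 0 (2 * Real.pi))).prod (volume.restrict (Set.Ioi 0))) := by
  have hm : AEStronglyMeasurable (fun p : ℝ × ℝ => kk σ n p.2 p.1 * (wt M p.2 : ℂ))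
      ((volume.restrict (Set.Ioc 0 (2 * Real.pi))).prod (volume.restrict (Set.Ioi 0))) := by
    apply Measurable.aestronglyMeasurable
    exact (kk_meas σ n).mul (Complex.measurable_ofReal.comp ((wt_cont M).measurable.comp measurable_snd))
  rw [integrable_prod_iff' hm]
  constructor
  · filter_upwards [ae_restrict_mem measurableSet_Ioi] with t ht
    have ht' : 0 < t := ht
    have hc : Continuous (fun θ => kk σ n t θ * (wt M t : ℂ)) := by
      have h1 := NN_cont σ n
      have h2 : Continuous (fun θ => pp t θ / den σ n t) := by
        unfold pp
        apply Continuous.div_const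
        exact Continuous.div continuous_const (by fun_prop) (fun θ => (cosh_sub_pos ht' θ).ne')
      unfold kk
      fun_prop
    exact (hc.integrableOn_Icc (a := 0) (b := 2 * Real.pi)).mono_set Set.Ioc_subset_Icc_self
  · refine (bd_integrable n M hn).mono' ?_ ?_
    · exact hm.norm.prod_swap.integral_prod_right'
    · filter_upwards [ae_restrict_mem measurableSet_Ioi] with t ht
      have ht' : 0 < t := ht
      have hw := wt_nonneg M ht'
      have hv : ∫ x in Set.Ioc 0 (2 * Real.pi), ‖kk σ n t x * (wt M t : ℂ)‖
          = (∫ θ in (0:ℝ)..(2 * Real.pi), ‖kk σ n t θ‖) * wt M t := by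
        simp_rw [norm_mul, Complex.norm_real, Real.norm_of_nonneg hw]
        rw [integral_mul_const, intervalIntegral.integral_of_le Real.two_pi_pos.le]
      have h1 := tm_pt σ n M hσ hn ht'
      have h2 := tm_pt (-1) n M (Or.inr rfl) hn ht'
      rw [hv, ← h1.tsum_eq]
      have h3 : Summable fun j => ‖tm σ n M j t‖ := by
        simp_rw [tm_norm σ n M hσ _ ht']; exact h2.summable
      refine (norm_tsum_le_tsum_norm h3).trans (le_of_eq ?_)
      simp_rw [tm_norm σ n M hσ _ ht']

noncomputable def DD (θ : ℝ) : ℂ := ∫ t in Set.Ioi (0:ℝ), kk σ n t θ * (wt M t : ℂ)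

lemma DD_per : Function.Periodic (DD σ n M) (2 * Real.pi) := by
  intro θ
  simp only [DD, kk, pp, NN_per σ n θ, Real.cos_add_two_pi]

lemma DD_int (hσ : σ = 1 ∨ σ = -1) (hn : 1 ≤ n) : IntervalIntegrable (DD σ n M) volume 0 (2 * Real.pi) := by
  rw [intervalIntegrable_iff_integrableOn_Ioc_of_le Real.two_pi_pos.le]
  exact (kk_int σ n M hσ hn).integral_prod_left

lemma DD_eq (θ : ℝ) : DD σ n M θ = NN σ n θ * ((∫ t in Set.Ioi (0:ℝ), pp t θ / den σ n t * wt M t : ℝ) : ℂ) := by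
  rw [DD, ← integral_complex_ofReal, ← integral_const_mul]
  congr 1; ext t
  rw [kk]; push_cast; ring

lemma DD_nn (hσ : σ = 1 ∨ σ = -1) (hn : 1 ≤ n) (θ : ℝ) :
    0 ≤ ∫ t in Set.Ioi (0:ℝ), pp t θ / den σ n t * wt M t := by
  refine setIntegral_nonneg measurableSet_Ioi fun t ht => ?_
  have ht' : 0 < t := ht
  have := pp_pos ht' θ
  have := den_pos hσ hn ht'
  have := wt_nonneg M ht'
  positivity

lemma DD_ss (hσ : σ = 1 ∨ σ = -1) (hn : 1 ≤ n) (θ : ℝ) : DD σ n M θ * ss σ n θ = ‖DD σ n M θ‖ := by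
  have h := DD_nn σ n M hσ hn θ
  rw [DD_eq, norm_mul, Complex.norm_real, Real.norm_of_nonneg h, mul_right_comm, NN_mul_ss]
  push_cast; ring

lemma DD_coeff (hσ : σ = (-1) ^ (M + 1)) (hn : 1 ≤ n) (l : ℤ) (hl : (n:ℤ) ≤ |l|) :
    ∫ θ in (0:ℝ)..(2 * Real.pi), DD σ n M θ * ee (-l) θ = 2 * Real.pi / (l:ℂ) ^ (M + 1) := by
  have hσ' : σ = 1 ∨ σ = -1 := by rw [hσ]; exact neg_one_pow_eq_or ℝ _
  have h0 : Integrable (Function.uncurry fun θ t => kk σ n t θ * (wt M t : ℂ) * ee (-l) θ)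
      ((volume.restrict (Set.Ioc 0 (2 * Real.pi))).prod (volume.restrict (Set.Ioi 0))) := by
    have h1 := (kk_int σ n M hσ' hn)
    refine h1.mul_bdd (c := 1) (g := fun p : ℝ × ℝ => ee (-l) p.1) ?_ ?_
    · exact ((ee_cont _).comp continuous_fst).aestronglyMeasurable
    · exact Filter.Eventually.of_forall fun p => (ee_norm _ _).le
  rw [intervalIntegral.integral_of_le Real.two_pi_pos.le]
  simp_rw [DD, ← integral_mul_const]
  rw [integral_integral_swap h0]
  have h2 : ∀ t ∈ Set.Ioi (0:ℝ), ∫ θ in Set.Ioc 0 (2 * Real.pi), kk σ n t θ * (wt M t : ℂ) * ee (-l) θ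
      = 2 * Real.pi * ((kap σ n t l * wt M t : ℝ) : ℂ) := by
    intro t ht
    have h3 := kk_coeff σ n (show 0 < t from ht) l
    rw [intervalIntegral.integral_of_le Real.two_pi_pos.le] at h3
    have h6 : ∀ θ, kk σ n t θ * (wt M t : ℂ) * ee (-l) θ = kk σ n t θ * ee (-l) θ * (wt M t : ℂ) := by
      intro θ; ring
    simp_rw [h6]
    rw [integral_mul_const, h3]; push_cast; ring
  rw [setIntegral_congr_fun measurableSet_Ioi h2, integral_const_mul, integral_complex_ofReal]
  have h4 : ∫ t in Set.Ioi (0:ℝ), kap σ n t l * wt M t = 1 / (l:ℝ) ^ (M + 1) := by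
    rcases le_abs.1 hl with hl | hl
    · have hl0 : (0:ℝ) < l := by exact_mod_cast (by omega : (0:ℤ) < l)
      rw [← wt_integral M hl0]
      refine setIntegral_congr_fun measurableSet_Ioi fun t ht => ?_
      simp only [kap_pos hσ' hn (show 0 < t from ht) l hl]
    · have hl0 : (0:ℝ) < -l := by exact_mod_cast (by omega : (0:ℤ) < -l)
      have h5 : ∫ t in Set.Ioi (0:ℝ), kap σ n t l * wt M t
          = ∫ t in Set.Ioi (0:ℝ), σ * (Real.exp (-(-l * t)) * wt M t) := by
        refine setIntegral_congr_fun measurableSet_Ioi fun t ht => ?_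
        simp only [kap_neg hσ' hn (show 0 < t from ht) l (by omega)]
        rw [neg_mul, neg_neg]; ring
      rw [h5, integral_const_mul, wt_integral M hl0, hσ, neg_pow (l:ℝ)]
      have : (l:ℝ) ≠ 0 := by linarith
      field_simp
  rw [h4]; push_cast; ring

lemma tsum_pair {f : ℕ → ℝ} (hf : Summable f) : ∑' j, f j = ∑' k, (f (2 * k) + f (2 * k + 1)) := by
  have s1 : Summable fun k => f (2 * k) := hf.comp_injective (i := fun k : ℕ => 2 * k) fun a b h => by
    have : 2 * a = 2 * b := h
    omega
  have s2 : Summable fun k => f (2 * k + 1) := hf.comp_injective (i := fun k : ℕ => 2 * k + 1) fun a b h => by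
    have : 2 * a + 1 = 2 * b + 1 := h
    omega
  rw [← tsum_even_add_odd s1 s2, s1.tsum_add s2]

lemma DD_norm (hσ : σ = (-1) ^ (M + 1)) (hn : 1 ≤ n) :
    ∫ θ in (0:ℝ)..(2 * Real.pi), ‖DD σ n M θ‖ = 2 * Real.pi * (favardK (M + 1) / n ^ (M + 1)) := by
  have hσ' : σ = 1 ∨ σ = -1 := by rw [hσ]; exact neg_one_pow_eq_or ℝ _
  have hn' : (0:ℝ) < n := by exact_mod_cast hn
  have h1 : ∀ θ, ‖DD σ n M θ‖ = ∫ t in Set.Ioi (0:ℝ), ‖kk σ n t θ * (wt M t : ℂ)‖ := by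
    intro θ
    rw [DD_eq, norm_mul, Complex.norm_real, Real.norm_of_nonneg (DD_nn σ n M hσ' hn θ), ← integral_const_mul]
    refine setIntegral_congr_fun measurableSet_Ioi fun t ht => ?_
    have ht' : 0 < t := ht
    have := pp_pos ht' θ
    have := den_pos hσ' hn ht'
    have := wt_nonneg M ht'
    simp only [kk, norm_mul, Complex.norm_real]
    rw [Real.norm_of_nonneg (by positivity), Real.norm_of_nonneg (by positivity)]
    ring
  rw [intervalIntegral.integral_of_le Real.two_pi_pos.le]
  simp_rw [h1]
  rw [integral_integral_swap (kk_int σ n M hσ' hn).norm]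
  have h2 : ∀ t ∈ Set.Ioi (0:ℝ), ∫ θ in Set.Ioc 0 (2 * Real.pi), ‖kk σ n t θ * (wt M t : ℂ)‖
      = ∑' j, tm σ n M j t := by
    intro t ht
    have ht' : 0 < t := ht
    rw [(tm_pt σ n M hσ' hn ht').tsum_eq]
    simp_rw [norm_mul, Complex.norm_real, Real.norm_of_nonneg (wt_nonneg M ht')]
    rw [integral_mul_const, intervalIntegral.integral_of_le Real.two_pi_pos.le]
  rw [setIntegral_congr_fun measurableSet_Ioi h2, ← (tm_hasSum σ n M hσ' hn).tsum_eq]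
  simp_rw [tm_integral σ n M hn, tsum_mul_left]
  have hs : Summable fun j : ℕ => (-σ) ^ j * (1 / (2 * (j:ℝ) + 1) ^ (M + 2)) := by
    refine Summable.of_norm ((odd_summable M).congr fun j => ?_)
    have h2 : |(-σ) ^ j| = 1 := by rcases hσ' with rfl | rfl <;> simp
    rw [norm_mul, Real.norm_eq_abs, h2, one_mul, Real.norm_of_nonneg (by positivity)]
  have hf : favardK (M + 1) = (4 / Real.pi) * ∑' j : ℕ, (-σ) ^ j * (1 / (2 * (j:ℝ) + 1) ^ (M + 2)) := by
    rw [tsum_pair hs, favardK]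
    congr 1
    refine tsum_congr fun k => ?_
    have hss : (-σ) ^ 2 = 1 := by rcases hσ' with rfl | rfl <;> norm_num
    have e1 : (-σ) ^ (2 * k) = 1 := by rw [pow_mul, hss, one_pow]
    have e2 : (-σ) ^ (2 * k + 1) = (-1) ^ (M + 2) := by
      rw [pow_succ, e1, hσ]; ring
    simp only [e1, e2]
    push_cast
    have d1 : 2 * (2 * (k:ℝ)) + 1 = 4 * k + 1 := by ring
    have d2 : 2 * (2 * (k:ℝ) + 1) + 1 = 4 * k + 3 := by ring
    rw [d1, d2]
    ring
  rw [hf]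
  have := Real.pi_pos
  field_simp
  ring
end terms

noncomputable def Aop (x : ℝ) (g : ℝ → ℂ) (θ : ℝ) : ℂ := (g (θ + x) - g (θ - x)) / (2 * Complex.I)

def Good (g : ℝ → ℂ) : Prop :=
  Function.Periodic g (2 * Real.pi) ∧ IntervalIntegrable g volume 0 (2 * Real.pi)

lemma Good.all {g : ℝ → ℂ} (hg : Good g) (a b : ℝ) : IntervalIntegrable g volume a b :=
  hg.1.intervalIntegrable₀ Real.two_pi_pos.ne' hg.2 a b

lemma Good.shift {g : ℝ → ℂ} (hg : Good g) (x : ℝ) : Good (fun θ => g (θ + x)) := by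
  constructor
  · intro θ
    have := hg.1 (θ + x)
    simp only
    rw [← this]; congr 1; ring
  · have := (hg.all x (2 * Real.pi + x)).comp_add_right x
    simpa using this

lemma Good.mul {g u : ℝ → ℂ} (hg : Good g) (hu : Function.Periodic u (2 * Real.pi))
    (hm : Measurable u) (hb : ∀ θ, ‖u θ‖ ≤ 1) : Good (fun θ => g θ * u θ) := by
  refine ⟨fun θ => by simp only [hg.1 θ, hu θ], ?_⟩
  have h := hg.2
  rw [intervalIntegrable_iff] at h ⊢
  exact h.mul_bdd (c := 1) hm.aestronglyMeasurable (Filter.Eventually.of_forall hb)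

lemma Good.sub {g u : ℝ → ℂ} (hg : Good g) (hu : Good u) : Good (fun θ => g θ - u θ) :=
  ⟨fun θ => by simp only [hg.1 θ, hu.1 θ], hg.2.sub hu.2⟩

lemma Good.aop {g : ℝ → ℂ} (hg : Good g) (x : ℝ) : Good (Aop x g) := by
  have h := (hg.shift x).sub (hg.shift (-x))
  have e : Aop x g = fun θ => (g (θ + x) - g (θ + -x)) / (2 * Complex.I) := by
    funext θ; simp only [Aop, sub_eq_add_neg]
  rw [e]
  exact ⟨fun θ => by simp only [h.1 θ], h.2.div_const _⟩

lemma Good.aop_iter {g : ℝ → ℂ} (hg : Good g) (x : ℝ) (m : ℕ) : Good ((Aop x)^[m] g) := by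
  induction m with
  | zero => exact hg
  | succ m ih => rw [Function.iterate_succ_apply']; exact ih.aop x

lemma aop_pair {g u : ℝ → ℂ} (hg : Good g) (hu : Function.Periodic u (2 * Real.pi))
    (hm : Measurable u) (hb : ∀ θ, ‖u θ‖ ≤ 1) (x : ℝ) :
    ∫ θ in (0:ℝ)..(2 * Real.pi), Aop x g θ * u θ
      = ∫ θ in (0:ℝ)..(2 * Real.pi), g θ * ((u (θ - x) - u (θ + x)) / (2 * Complex.I)) := by
  have hus : ∀ y, Function.Periodic (fun θ => u (θ + y)) (2 * Real.pi) := fun y θ => by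
    simp only; rw [← hu (θ + y)]; congr 1; ring
  have hms : ∀ y, Measurable (fun θ => u (θ + y)) := fun y => hm.comp (measurable_id.add_const y)
  have G1 := (hg.shift x).mul hu hm hb
  have G2 := (hg.shift (-x)).mul hu hm hb
  have G3 := hg.mul (hus (-x)) (hms _) (fun θ => hb _)
  have G4 := hg.mul (hus x) (hms _) (fun θ => hb _)
  have e1 : ∀ θ, Aop x g θ * u θ = (2 * Complex.I)⁻¹ * (g (θ + x) * u θ - g (θ + -x) * u θ) := by
    intro θ; simp only [Aop, sub_eq_add_neg]; ring
  have e2 : ∀ θ, g θ * ((u (θ - x) - u (θ + x)) / (2 * Complex.I))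
      = (2 * Complex.I)⁻¹ * (g θ * u (θ + -x) - g θ * u (θ + x)) := by
    intro θ; simp only [sub_eq_add_neg]; ring
  simp_rw [e1, e2, intervalIntegral.integral_const_mul]
  rw [intervalIntegral.integral_sub G1.2 G2.2, intervalIntegral.integral_sub G3.2 G4.2,
    ← per_shift G3.1 x, ← per_shift G4.1 (-x)]
  congr 2 <;> simp

lemma ee_good_coeff {g : ℝ → ℂ} (hg : Good g) (x : ℝ) (l : ℤ) :
    ∫ θ in (0:ℝ)..(2 * Real.pi), Aop x g θ * ee (-l) θ
      = Complex.sin (x * l) * ∫ θ in (0:ℝ)..(2 * Real.pi), g θ * ee (-l) θ := by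
  rw [aop_pair hg (ee_per _) (ee_cont _).measurable (fun θ => (ee_norm _ θ).le),
    ← intervalIntegral.integral_const_mul]
  congr 1; ext θ
  have h : (ee (-l) (θ - x) - ee (-l) (θ + x)) / (2 * Complex.I) = Complex.sin (x * l) * ee (-l) θ := by
    rw [sub_eq_add_neg θ x, ee_add, ee_add, Complex.sin]
    have e1 : ee (-l) (-x) = Complex.exp (x * l * Complex.I) := by
      rw [ee]; congr 1; push_cast; ring
    have e2 : ee (-l) x = Complex.exp (-(x * l) * Complex.I) := by
      rw [ee]; congr 1; push_cast; ring
    rw [e1, e2]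
    have := Complex.I_sq
    field_simp
    rw [this]; ring
  rw [h]; ring

lemma aop_iter_coeff {g : ℝ → ℂ} (hg : Good g) (x : ℝ) (l : ℤ) (m : ℕ) :
    ∫ θ in (0:ℝ)..(2 * Real.pi), (Aop x)^[m] g θ * ee (-l) θ
      = Complex.sin (x * l) ^ m * ∫ θ in (0:ℝ)..(2 * Real.pi), g θ * ee (-l) θ := by
  induction m with
  | zero => simp
  | succ m ih =>
    simp_rw [Function.iterate_succ_apply']
    rw [ee_good_coeff (hg.aop_iter x m), ih]; ring

lemma aop_ss {g : ℝ → ℂ} (hg : Good g) (x : ℝ) (σ : ℝ) (n : ℕ) (c : ℝ) (hc : c * c = 1)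
    (hx : ee n x = c * Complex.I) :
    ∫ θ in (0:ℝ)..(2 * Real.pi), Aop x g θ * ss σ n θ
      = c * ∫ θ in (0:ℝ)..(2 * Real.pi), g θ * ss (-σ) n θ := by
  rw [aop_pair hg (ss_per _ _) (ss_meas _ _) (ss_norm _ _), ← intervalIntegral.integral_const_mul]
  congr 1; ext θ
  have hcc : (c:ℂ) * c = 1 := by exact_mod_cast hc
  have hx' : ee n (-x) = ((-c : ℝ):ℂ) * Complex.I := by
    have h0 : ee n x * ee n (-x) = 1 := by
      rw [← ee_add, add_neg_cancel]; simp [ee]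
    rw [hx] at h0
    have hne : (c:ℂ) * Complex.I ≠ 0 := by
      intro h; rw [h] at h0; simp at h0
    apply mul_left_cancel₀ hne
    rw [h0]; push_cast
    linear_combination (-(c:ℂ) * c) * (-Complex.I_sq) - hcc
  rw [sub_eq_add_neg θ x, ss_shift σ n x c hc hx, ss_shift σ n (-x) (-c) (by linarith) hx']
  push_cast
  have := Complex.I_ne_zero
  field_simp
  ring

lemma aop_iter_ss (x : ℝ) (n : ℕ) (c : ℝ) (hc : c * c = 1)
    (hx : ee n x = c * Complex.I) (m : ℕ) : ∀ {g : ℝ → ℂ} (hg : Good g) (σ : ℝ),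
    ∫ θ in (0:ℝ)..(2 * Real.pi), (Aop x)^[m] g θ * ss σ n θ
      = c ^ m * ∫ θ in (0:ℝ)..(2 * Real.pi), g θ * ss ((-1) ^ m * σ) n θ := by
  induction m with
  | zero => intro g hg σ; simp
  | succ m ih =>
    intro g hg σ
    simp_rw [Function.iterate_succ_apply']
    rw [aop_ss (hg.aop_iter x m) x σ n c hc hx, ih hg]
    rw [← mul_assoc, pow_succ']
    congr 3
    ext θ; congr 2; ring

lemma norm_shift {g : ℝ → ℂ} (hg : Good g) (x : ℝ) :
    ∫ θ in (0:ℝ)..(2 * Real.pi), ‖g (θ + x)‖ = ∫ θ in (0:ℝ)..(2 * Real.pi), ‖g θ‖ := by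
  have := per_shift (F := fun θ => ((‖g θ‖ : ℝ) : ℂ)) (fun θ => by simp only [hg.1 θ]) x
  rw [intervalIntegral.integral_ofReal, intervalIntegral.integral_ofReal] at this
  exact_mod_cast this

lemma aop_norm {g : ℝ → ℂ} (hg : Good g) (x : ℝ) :
    ∫ θ in (0:ℝ)..(2 * Real.pi), ‖Aop x g θ‖ ≤ ∫ θ in (0:ℝ)..(2 * Real.pi), ‖g θ‖ := by
  have h1 := (hg.shift x).2.norm
  have h2 := (hg.shift (-x)).2.norm
  calc _ ≤ ∫ θ in (0:ℝ)..(2 * Real.pi), (1/2 : ℝ) * (‖g (θ + x)‖ + ‖g (θ + -x)‖) := by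
        apply intervalIntegral.integral_mono_on Real.two_pi_pos.le (hg.aop x).2.norm
          ((h1.add h2).const_mul _)
        intro θ _
        simp only [Aop, norm_div, norm_mul, Complex.norm_I, sub_eq_add_neg θ x]
        have := norm_sub_le (g (θ + x)) (g (θ + -x))
        norm_num
        linarith
    _ = _ := by
        rw [intervalIntegral.integral_const_mul, intervalIntegral.integral_add h1 h2,
          norm_shift hg, norm_shift hg]
        ring

lemma aop_iter_norm {g : ℝ → ℂ} (hg : Good g) (x : ℝ) (m : ℕ) :
    ∫ θ in (0:ℝ)..(2 * Real.pi), ‖(Aop x)^[m] g θ‖ ≤ ∫ θ in (0:ℝ)..(2 * Real.pi), ‖g θ‖ := by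
  induction m with
  | zero => simp
  | succ m ih =>
    simp_rw [Function.iterate_succ_apply']
    exact (aop_norm (hg.aop_iter x m) x).trans ih

def Nice (f : ℝ → ℝ) : Prop :=
  Function.Periodic f (2 * Real.pi) ∧ Measurable f ∧ ∃ C, ∀ θ, |f θ| ≤ C

lemma Nice.good {f : ℝ → ℝ} (hf : Nice f) : Good (fun θ => (f θ : ℂ)) := by
  obtain ⟨h1, h2, C, h3⟩ := hf
  refine ⟨fun θ => by simp only [h1 θ], ?_⟩
  rw [intervalIntegrable_iff, Set.uIoc_of_le Real.two_pi_pos.le]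
  refine Integrable.mono' (g := fun _ => C) ?_ ?_ ?_
  · exact integrable_const C
  · exact (Complex.measurable_ofReal.comp h2).aestronglyMeasurable
  · exact Filter.Eventually.of_forall fun θ => by simpa using h3 θ

lemma chi_nice (h : ℝ) : Nice (chi h) := by
  have hpi := Real.pi_pos
  refine ⟨?_, ?_, |1 / h|, ?_⟩
  · intro θ
    have e : (θ + 2 * Real.pi) / (2 * Real.pi) = θ / (2 * Real.pi) + 1 := by field_simp
    simp only [chi]
    rw [e, round_add_one]
    push_cast
    have e2 : θ + 2 * Real.pi - 2 * Real.pi * ((round (θ / (2 * Real.pi)) : ℤ) + 1)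
      = θ - 2 * Real.pi * ((round (θ / (2 * Real.pi)) : ℤ):ℝ) := by ring
    rw [e2]
  · unfold chi
    refine Measurable.ite ?_ measurable_const measurable_const
    apply measurableSet_le _ measurable_const
    simp_rw [round_eq]
    have hr : Measurable fun θ : ℝ => ((⌊θ / (2 * Real.pi) + 1 / 2⌋ : ℤ) : ℝ) := by
      have : Measurable fun θ : ℝ => θ / (2 * Real.pi) + 1 / 2 := by fun_prop
      exact (measurable_from_top (f := fun z : ℤ => (z:ℝ))).comp (Int.measurable_floor.comp this)
    have h2 : Measurable fun θ : ℝ => θ - 2 * Real.pi * ((⌊θ / (2 * Real.pi) + 1 / 2⌋ : ℤ) : ℝ) :=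
      measurable_id.sub (hr.const_mul _)
    exact h2.abs
  · intro θ
    simp only [chi]
    split_ifs
    · exact le_rfl
    · simp

lemma chi_coeff (h : ℝ) (h0 : 0 < h) (h1 : h < 1) (l : ℤ) (hl : l ≠ 0) :
    ∫ θ in (0:ℝ)..(2 * Real.pi), (chi h θ : ℂ) * ee (-l) θ
      = 2 * Real.pi * (Complex.sin (((Real.pi * h : ℝ) : ℂ) * l) / (((Real.pi * h : ℝ):ℂ) * l)) := by
  have hpi := Real.pi_pos
  have hph : Real.pi * h < Real.pi := by nlinarith
  have hph0 : 0 < Real.pi * h := by positivity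
  have G := (chi_nice h).good.mul (ee_per (-l)) (ee_cont _).measurable (fun θ => (ee_norm _ θ).le)
  have e0 := G.1.intervalIntegral_add_eq 0 (-Real.pi)
  rw [zero_add, show -Real.pi + 2 * Real.pi = Real.pi by ring] at e0
  rw [e0]
  have hr : ∀ θ, θ ∈ Set.Ioo (-Real.pi) Real.pi → chi h θ = if |θ| ≤ Real.pi * h then 1 / h else 0 := by
    intro θ hθ
    have : round (θ / (2 * Real.pi)) = 0 := by
      rw [round_eq_zero_iff]
      constructor
      · rw [le_div_iff₀ (by positivity)]; linarith [hθ.1]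
      · rw [div_lt_iff₀ (by positivity)]; linarith [hθ.2]
    simp [chi, this]
  rw [← intervalIntegral.integral_add_adjacent_intervals (b := -(Real.pi * h)) (G.all _ _) (G.all _ _),
    ← intervalIntegral.integral_add_adjacent_intervals (a := -(Real.pi * h)) (b := Real.pi * h) (G.all _ _) (G.all _ _)]
  have z1 : ∫ θ in (-Real.pi)..(-(Real.pi * h)), (chi h θ : ℂ) * ee (-l) θ = 0 := by
    rw [intervalIntegral.integral_of_le (by linarith), integral_Ioc_eq_integral_Ioo]
    rw [setIntegral_congr_fun (g := fun _ => 0) measurableSet_Ioo]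
    · simp
    · intro θ hθ
      simp only
      rw [hr θ ⟨hθ.1, by linarith [hθ.2]⟩, if_neg]
      · simp
      · rw [not_le, abs_of_neg (by linarith [hθ.2])]; linarith [hθ.2]
  have z2 : ∫ θ in (Real.pi * h)..Real.pi, (chi h θ : ℂ) * ee (-l) θ = 0 := by
    rw [intervalIntegral.integral_of_le (by linarith), integral_Ioc_eq_integral_Ioo]
    rw [setIntegral_congr_fun (g := fun _ => 0) measurableSet_Ioo]
    · simp
    · intro θ hθ
      simp only
      rw [hr θ ⟨by linarith [hθ.1], hθ.2⟩, if_neg]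
      · simp
      · rw [not_le, abs_of_pos (by linarith [hθ.1])]; linarith [hθ.1]
  have z3 : ∫ θ in (-(Real.pi * h))..(Real.pi * h), (chi h θ : ℂ) * ee (-l) θ
      = ∫ θ in (-(Real.pi * h))..(Real.pi * h), (1 / h : ℂ) * Complex.exp ((-l * Complex.I) * θ) := by
    apply intervalIntegral.integral_congr
    intro θ hθ
    rw [Set.uIcc_of_le (by linarith)] at hθ
    simp only
    rw [hr θ ⟨by linarith [hθ.1], by linarith [hθ.2]⟩, if_pos (abs_le.2 hθ), ee]
    push_cast
    congr 2; ring
  have hl' : (l:ℂ) ≠ 0 := by exact_mod_cast hl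
  have hpc : (Real.pi:ℂ) ≠ 0 := by exact_mod_cast hpi.ne'
  have hhc : (h:ℂ) ≠ 0 := by exact_mod_cast h0.ne'
  have hI := Complex.I_ne_zero
  rw [z1, z2, z3, intervalIntegral.integral_const_mul, integral_exp_mul_complex (by simp [hl]), Complex.sin]
  have a1 : -(l:ℂ) * Complex.I * ((Real.pi * h : ℝ):ℂ) = -(((Real.pi * h : ℝ):ℂ) * l) * Complex.I := by ring
  have a2 : -(l:ℂ) * Complex.I * ((-(Real.pi * h) : ℝ):ℂ) = (((Real.pi * h : ℝ):ℂ) * l) * Complex.I := by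
    push_cast; ring
  rw [a1, a2]
  generalize Complex.exp (-(((Real.pi * h : ℝ):ℂ) * l) * Complex.I) = A
  generalize Complex.exp ((((Real.pi * h : ℝ):ℂ) * l) * Complex.I) = B
  push_cast
  field_simp
  rw [Complex.I_sq]
  ring

lemma conv_nice {f g : ℝ → ℝ} (hf : Nice f) (hg : Nice g) : Nice (conv f g) := by
  obtain ⟨f1, f2, C, f3⟩ := hf
  obtain ⟨g1, g2, D, g3⟩ := hg
  have hm : Measurable fun p : ℝ × ℝ => f (p.1 - p.2) * g p.2 :=
    (f2.comp (measurable_fst.sub measurable_snd)).mul (g2.comp measurable_snd)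
  refine ⟨?_, ?_, |1 / (2 * Real.pi)| * (C * D * |2 * Real.pi - 0|), ?_⟩
  · intro θ
    simp only [conv]
    congr 2; ext φ
    rw [show θ + 2 * Real.pi - φ = (θ - φ) + 2 * Real.pi by ring, f1]
  · unfold conv
    simp_rw [intervalIntegral.integral_of_le Real.two_pi_pos.le]
    exact ((hm.stronglyMeasurable.integral_prod_right' (ν := volume.restrict (Set.Ioc 0 (2 * Real.pi)))).measurable).const_mul _
  · intro θ
    simp only [conv]
    rw [abs_mul]
    gcongr
    rw [← Real.norm_eq_abs]
    apply intervalIntegral.norm_integral_le_of_norm_le_const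
    intro φ _
    rw [norm_mul]
    have := f3 (θ - φ)
    have := g3 φ
    exact mul_le_mul (f3 _) (g3 _) (abs_nonneg _) ((abs_nonneg _).trans (f3 0))

lemma conv_coeff {f g : ℝ → ℝ} (hf : Nice f) (hg : Nice g) (l : ℤ) :
    ∫ θ in (0:ℝ)..(2 * Real.pi), (conv f g θ : ℂ) * ee (-l) θ
      = 1 / (2 * Real.pi) * (∫ θ in (0:ℝ)..(2 * Real.pi), (f θ : ℂ) * ee (-l) θ)
        * ∫ θ in (0:ℝ)..(2 * Real.pi), (g θ : ℂ) * ee (-l) θ := by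
  have Gf := hf.good.mul (ee_per (-l)) (ee_cont _).measurable (fun θ => (ee_norm _ θ).le)
  obtain ⟨f1, f2, C, f3⟩ := hf
  obtain ⟨g1, g2, D, g3⟩ := hg
  have hm : Measurable fun p : ℝ × ℝ => ((f (p.1 - p.2) : ℂ) * g p.2) * ee (-l) p.1 :=
    ((Complex.measurable_ofReal.comp (f2.comp (measurable_fst.sub measurable_snd))).mul
      (Complex.measurable_ofReal.comp (g2.comp measurable_snd))).mul
      ((ee_cont _).measurable.comp measurable_fst)
  have hint : Integrable (fun p : ℝ × ℝ => ((f (p.1 - p.2) : ℂ) * g p.2) * ee (-l) p.1)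
      ((volume.restrict (Set.Ioc 0 (2 * Real.pi))).prod (volume.restrict (Set.Ioc 0 (2 * Real.pi)))) := by
    refine Integrable.mono' (g := fun _ => C * D) (integrable_const _) hm.aestronglyMeasurable ?_
    refine Filter.Eventually.of_forall fun p => ?_
    rw [norm_mul, norm_mul, ee_norm, Complex.norm_real, Complex.norm_real, mul_one]
    exact mul_le_mul (f3 _) (g3 _) (abs_nonneg _) ((abs_nonneg _).trans (f3 0))
  have e1 : ∀ θ, (conv f g θ : ℂ) * ee (-l) θ
      = 1 / (2 * Real.pi) * ∫ φ in (0:ℝ)..(2 * Real.pi), ((f (θ - φ) : ℂ) * g φ) * ee (-l) θ := by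
    intro θ
    simp only [conv]
    rw [intervalIntegral.integral_mul_const]
    push_cast
    rw [← intervalIntegral.integral_ofReal]
    push_cast
    ring
  simp_rw [e1]
  rw [intervalIntegral.integral_const_mul, mul_assoc]
  congr 1
  have e2 : ∀ φ, ∫ θ in (0:ℝ)..(2 * Real.pi), ((f (θ - φ) : ℂ) * g φ) * ee (-l) θ
      = (∫ θ in (0:ℝ)..(2 * Real.pi), (f θ : ℂ) * ee (-l) θ) * ((g φ : ℂ) * ee (-l) φ) := by
    intro φ
    rw [← per_shift Gf.1 (-φ), ← intervalIntegral.integral_mul_const]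
    congr 1; ext θ
    have : ee (-l) θ = ee (-l) (θ + -φ) * ee (-l) φ := by rw [← ee_add]; congr 1; ring
    rw [this, ← sub_eq_add_neg]; ring
  rw [← intervalIntegral.integral_const_mul]
  simp_rw [← e2]
  simp_rw [intervalIntegral.integral_of_le Real.two_pi_pos.le]
  exact integral_integral_swap hint

lemma chiConv_nice (h : ℝ) (M : ℕ) : Nice (chiConv h (M + 1)) := by
  induction M with
  | zero => exact chi_nice h
  | succ M ih => exact conv_nice (chi_nice h) ih

lemma chiConv_coeff (h : ℝ) (h0 : 0 < h) (h1 : h < 1) (l : ℤ) (hl : l ≠ 0) (M : ℕ) :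
    ∫ θ in (0:ℝ)..(2 * Real.pi), (chiConv h (M + 1) θ : ℂ) * ee (-l) θ
      = 2 * Real.pi * (Complex.sin (((Real.pi * h : ℝ) : ℂ) * l) / (((Real.pi * h : ℝ):ℂ) * l)) ^ (M + 1) := by
  have hpc : (Real.pi:ℂ) ≠ 0 := by exact_mod_cast Real.pi_pos.ne'
  induction M with
  | zero => rw [zero_add, pow_one]; exact chi_coeff h h0 h1 l hl
  | succ M ih =>
    have : chiConv h (M + 1 + 1) = conv (chi h) (chiConv h (M + 1)) := rfl
    rw [this, conv_coeff (chi_nice h) (chiConv_nice h M), ih, chi_coeff h h0 h1 l hl]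
    generalize Complex.sin (((Real.pi * h : ℝ) : ℂ) * l) / (((Real.pi * h : ℝ):ℂ) * l) = s
    field_simp
    try ring

lemma ee_ee_int (j l : ℤ) : ∫ θ in (0:ℝ)..(2 * Real.pi), ee j θ * ee l θ
    = if j = -l then (2 * Real.pi : ℂ) else 0 := by
  simp_rw [← ee_add']
  split_ifs with h
  · subst h
    simp [ee_zero]
  · exact ee_int _ (fun h' => h (by omega))

lemma Good.sum {s : Finset ℤ} {c : ℤ → ℂ} : Good (fun θ => ∑ j ∈ s, c j * ee j θ) := by
  refine ⟨fun θ => by simp only [ee_per _ θ], ?_⟩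
  apply Continuous.intervalIntegrable
  have := ee_cont
  fun_prop

lemma sum_pair (s : Finset ℤ) (c : ℤ → ℂ) {u : ℝ → ℂ}
    (hu : ∀ l, IntervalIntegrable (fun θ => ee l θ * u θ) volume 0 (2 * Real.pi)) :
    ∫ θ in (0:ℝ)..(2 * Real.pi), (∑ j ∈ s, c j * ee j θ) * u θ
      = ∑ j ∈ s, c j * ∫ θ in (0:ℝ)..(2 * Real.pi), ee j θ * u θ := by
  simp_rw [Finset.sum_mul, mul_assoc]
  rw [intervalIntegral.integral_finsetSum fun j _ => (hu j).const_mul _]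
  simp_rw [intervalIntegral.integral_const_mul]

lemma exists_trig (n : ℕ) (hn : 1 ≤ n) {r : ℝ → ℂ} (hr : Good r)
    (h : ∀ l : ℤ, (n:ℤ) ≤ |l| → ∫ θ in (0:ℝ)..(2 * Real.pi), r θ * ee (-l) θ = 0) :
    ∃ t ∈ trigPoly (n - 1), ∀ᵐ θ, θ ∈ Set.Ioo 0 (2 * Real.pi) → r θ = t θ := by
  have hpc : (Real.pi:ℂ) ≠ 0 := by exact_mod_cast Real.pi_pos.ne'
  let c : ℤ → ℂ := fun l => (1 / (2 * Real.pi)) * ∫ θ in (0:ℝ)..(2 * Real.pi), r θ * ee (-l) θ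
  let s : Finset ℤ := Finset.Icc (-((n - 1 : ℕ):ℤ)) ((n - 1 : ℕ):ℤ)
  refine ⟨fun θ => ∑ j ∈ s, c j * ee j θ, ⟨c, rfl⟩, ?_⟩
  have hT : Good (fun θ => ∑ j ∈ s, c j * ee j θ) := Good.sum
  have := fourier_unique _ (hr.sub hT).2 ?_
  · filter_upwards [this] with θ hθ hm
    exact sub_eq_zero.1 (hθ hm)
  · intro l
    have g1 := hr.mul (ee_per l) (ee_cont _).measurable (fun θ => (ee_norm _ θ).le)
    have g2 := hT.mul (ee_per l) (ee_cont _).measurable (fun θ => (ee_norm _ θ).le)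
    simp_rw [sub_mul]
    rw [intervalIntegral.integral_sub g1.2 g2.2, sum_pair s c fun j =>
      ((ee_cont j).mul (ee_cont l)).intervalIntegrable _ _]
    simp_rw [ee_ee_int]
    simp only [mul_ite, mul_zero, Finset.sum_ite_eq']
    split_ifs with hl
    · simp only [c, neg_neg]
      field_simp
      ring
    · have := h (-l) (by
        simp only [s, Finset.mem_Icc, not_and_or] at hl
        rw [abs_neg]
        rcases hl with hl | hl
        · exact le_trans (by omega) (le_abs_self l)
        · exact le_trans (by omega) (neg_le_abs l))
      rw [neg_neg] at this
      rw [this, sub_zero]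

lemma main_aux (n M : ℕ) (hn : 1 ≤ n) (k : ℕ)
    (hk1 : 1 ≤ k) (hkn : k ≤ n) (h : ℝ) (hh : h = (2 * (k:ℝ) - 1) / (2 * (n:ℝ))) :
    bestApprox (n - 1) (fun θ => (chiConv h (M + 1) θ : ℂ)) =
      favardK (M + 1) / (Real.pi * h * n) ^ (M + 1) := by
  have hpi := Real.pi_pos
  have hn' : (0:ℝ) < n := by exact_mod_cast hn
  have hk1' : (1:ℝ) ≤ k := by exact_mod_cast hk1
  have hkn' : (k:ℝ) ≤ n := by exact_mod_cast hkn
  have h0 : 0 < h := by rw [hh]; apply div_pos <;> linarith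
  have h1 : h < 1 := by rw [hh, div_lt_one (by linarith)]; linarith
  set x := Real.pi * h with hx
  have hx0 : 0 < x := by positivity
  have hxc : (x:ℂ) ≠ 0 := by exact_mod_cast hx0.ne'
  obtain ⟨σ, hσ⟩ : ∃ σ : ℝ, σ = (-1) ^ (M + 1) := ⟨_, rfl⟩
  have hσ' : σ = 1 ∨ σ = -1 := by rw [hσ]; exact neg_one_pow_eq_or ℝ _
  have hD : Good (DD σ n M) := ⟨DD_per σ n M, DD_int σ n M hσ' hn⟩
  have hf : Good (fun θ => (chiConv h (M + 1) θ : ℂ)) := (chiConv_nice h M).good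
  set f : ℝ → ℂ := fun θ => (chiConv h (M + 1) θ : ℂ) with hfdef
  let G : ℝ → ℂ := fun θ => ((x:ℂ) ^ (M + 1))⁻¹ * (Aop x)^[M + 1] (DD σ n M) θ
  have hA := hD.aop_iter x (M + 1)
  have hG : Good G := ⟨fun θ => by simp only [G, hA.1 θ], hA.2.const_mul _⟩
  -- the value
  let V : ℝ := favardK (M + 1) / (x * n) ^ (M + 1)
  have hV : V = (1 / (2 * Real.pi)) * ((x ^ (M + 1))⁻¹ * ∫ θ in (0:ℝ)..(2 * Real.pi), ‖DD σ n M θ‖) := by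
    rw [DD_norm σ n M hσ hn]
    simp only [V]
    rw [mul_pow]
    field_simp
  -- coefficients
  have hcoef : ∀ l : ℤ, (n:ℤ) ≤ |l| →
      ∫ θ in (0:ℝ)..(2 * Real.pi), (f θ - G θ) * ee (-l) θ = 0 := by
    intro l hl
    have hl0 : l ≠ 0 := by rintro rfl; simp at hl; omega
    have hlc : (l:ℂ) ≠ 0 := by exact_mod_cast hl0
    have g1 := hf.mul (ee_per (-l)) (ee_cont _).measurable (fun θ => (ee_norm _ θ).le)
    have g2 := hG.mul (ee_per (-l)) (ee_cont _).measurable (fun θ => (ee_norm _ θ).le)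
    simp_rw [sub_mul]
    rw [intervalIntegral.integral_sub g1.2 g2.2]
    simp only [hfdef, G, mul_assoc]
    rw [intervalIntegral.integral_const_mul, aop_iter_coeff hD, DD_coeff σ n M hσ hn l hl,
      chiConv_coeff h h0 h1 l hl0]
    rw [← hx, div_pow, mul_pow]
    field_simp
    ring
  obtain ⟨t, ht, hft⟩ := exists_trig n hn (hf.sub hG) hcoef
  have hfG : ∀ᵐ θ, θ ∈ Set.Ioo 0 (2 * Real.pi) → f θ - t θ = G θ := by
    filter_upwards [hft] with θ hθ hm
    have := hθ hm
    rw [← this]; ring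
  have congrC : ∀ (F H : ℝ → ℂ), (∀ᵐ θ, θ ∈ Set.Ioo 0 (2 * Real.pi) → F θ = H θ) →
      ∫ θ in (0:ℝ)..(2 * Real.pi), F θ = ∫ θ in (0:ℝ)..(2 * Real.pi), H θ := by
    intro F H hFH
    rw [intervalIntegral.integral_of_le Real.two_pi_pos.le, intervalIntegral.integral_of_le Real.two_pi_pos.le,
      integral_Ioc_eq_integral_Ioo, integral_Ioc_eq_integral_Ioo]
    exact setIntegral_congr_ae measurableSet_Ioo hFH
  have congrR : ∀ (F H : ℝ → ℝ), (∀ᵐ θ, θ ∈ Set.Ioo 0 (2 * Real.pi) → F θ = H θ) →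
      ∫ θ in (0:ℝ)..(2 * Real.pi), F θ = ∫ θ in (0:ℝ)..(2 * Real.pi), H θ := by
    intro F H hFH
    rw [intervalIntegral.integral_of_le Real.two_pi_pos.le, intervalIntegral.integral_of_le Real.two_pi_pos.le,
      integral_Ioc_eq_integral_Ioo, integral_Ioc_eq_integral_Ioo]
    exact setIntegral_congr_ae measurableSet_Ioo hFH
  -- trig polynomials are good and orthogonal to the sign kernel
  have trig_good : ∀ u ∈ trigPoly (n - 1), Good u := by
    rintro u ⟨c, rfl⟩; exact Good.sum
  have trig_ss : ∀ u ∈ trigPoly (n - 1), ∫ θ in (0:ℝ)..(2 * Real.pi), u θ * ss 1 n θ = 0 := by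
    rintro u ⟨c, rfl⟩
    have := sum_pair (Finset.Icc (-((n - 1 : ℕ):ℤ)) ((n - 1 : ℕ):ℤ)) c (u := ss 1 n)
      (fun l => ss_int 1 n l _ _)
    refine this.trans (Finset.sum_eq_zero fun j hj => ?_)
    rw [Finset.mem_Icc] at hj
    rw [ssC_zero 1 n hn j, mul_zero]
    intro i hi
    have hj1 : |j| < n := by rw [abs_lt]; omega
    rw [hi, abs_mul, Nat.abs_cast] at hj1
    have : 1 ≤ |2 * i + 1| := Int.one_le_abs (by omega)
    have hnz : (1:ℤ) ≤ n := by exact_mod_cast hn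
    nlinarith
  -- upper bound
  have upper : L1norm (fun θ => f θ - t θ) ≤ V := by
    rw [hV, L1norm]
    gcongr
    rw [congrR (fun θ => ‖f θ - t θ‖) (fun θ => ‖G θ‖) (by
      filter_upwards [hfG] with θ hθ hm
      rw [hθ hm])]
    simp only [G, norm_mul, norm_inv, norm_pow, Complex.norm_real, Real.norm_of_nonneg hx0.le]
    rw [intervalIntegral.integral_const_mul]
    gcongr
    exact aop_iter_norm hD x (M + 1)
  -- lower bound
  have hxn : ee n x = (((-1) ^ (k - 1) : ℝ) : ℂ) * Complex.I := by
    have e := ee_half ((k - 1 : ℕ) : ℤ)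
    have e2 : ee n x = ee (2 * ((k - 1 : ℕ) : ℤ) + 1) (Real.pi / 2) := by
      simp only [ee]
      congr 2
      have : (n:ℝ) * x = (2 * ((k - 1 : ℕ):ℝ) + 1) * (Real.pi / 2) := by
        rw [hx, hh, Nat.cast_sub hk1]; field_simp; push_cast; ring
      exact_mod_cast this
    rw [e2, e]; push_cast; rw [zpow_natCast]
  have hcc : ((-1:ℝ) ^ (k - 1)) * ((-1) ^ (k - 1)) = 1 := by
    rw [← mul_pow]; norm_num
  have hGss : ‖∫ θ in (0:ℝ)..(2 * Real.pi), G θ * ss 1 n θ‖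
      = (x ^ (M + 1))⁻¹ * ∫ θ in (0:ℝ)..(2 * Real.pi), ‖DD σ n M θ‖ := by
    simp only [G, mul_assoc]
    rw [intervalIntegral.integral_const_mul, aop_iter_ss x n _ hcc hxn (M + 1) hD 1, mul_one, ← hσ]
    simp_rw [DD_ss σ n M hσ' hn]
    rw [intervalIntegral.integral_ofReal]
    rw [norm_mul, norm_mul, Complex.norm_real, norm_inv, norm_pow, norm_pow, Complex.norm_real,
      Complex.norm_real, Real.norm_of_nonneg hx0.le]
    rw [Real.norm_of_nonneg (intervalIntegral.integral_nonneg Real.two_pi_pos.le fun θ _ => norm_nonneg _)]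
    simp
  have hfss : ∫ θ in (0:ℝ)..(2 * Real.pi), f θ * ss 1 n θ = ∫ θ in (0:ℝ)..(2 * Real.pi), G θ * ss 1 n θ := by
    have g1 := hf.mul (ss_per 1 n) (ss_meas 1 n) (ss_norm 1 n)
    have g2 := (trig_good t ht).mul (ss_per 1 n) (ss_meas 1 n) (ss_norm 1 n)
    rw [← congrC (fun θ => f θ * ss 1 n θ - t θ * ss 1 n θ) (fun θ => G θ * ss 1 n θ) (by
      filter_upwards [hfG] with θ hθ hm
      rw [← hθ hm]; ring)]
    rw [intervalIntegral.integral_sub g1.2 g2.2, trig_ss t ht, sub_zero]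
  have lower : ∀ u ∈ trigPoly (n - 1), V ≤ L1norm (fun θ => f θ - u θ) := by
    intro u hu
    have gs := hf.sub (trig_good u hu)
    have g0 := gs.mul (ss_per 1 n) (ss_meas 1 n) (ss_norm 1 n)
    have g1 := hf.mul (ss_per 1 n) (ss_meas 1 n) (ss_norm 1 n)
    have g2 := (trig_good u hu).mul (ss_per 1 n) (ss_meas 1 n) (ss_norm 1 n)
    have e : ∫ θ in (0:ℝ)..(2 * Real.pi), (f θ - u θ) * ss 1 n θ
        = ∫ θ in (0:ℝ)..(2 * Real.pi), G θ * ss 1 n θ := by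
      simp_rw [sub_mul]
      rw [intervalIntegral.integral_sub g1.2 g2.2, trig_ss u hu, sub_zero, hfss]
    rw [hV, L1norm, ← hGss, ← e]
    gcongr
    refine (intervalIntegral.norm_integral_le_integral_norm Real.two_pi_pos.le).trans ?_
    refine intervalIntegral.integral_mono_on Real.two_pi_pos.le g0.2.norm gs.2.norm fun θ _ => ?_
    rw [norm_mul]
    exact mul_le_of_le_one_right (norm_nonneg _) (ss_norm 1 n θ)
  have hle : IsLeast ((fun t : ℝ → ℂ => L1norm (fun θ => f θ - t θ)) '' (trigPoly (n - 1))) V := by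
    constructor
    · exact ⟨t, ht, le_antisymm upper (lower t ht)⟩
    · rintro _ ⟨u, hu, rfl⟩
      exact lower u hu
  exact hle.csInf_eq


/-- For `h ∈ {1/(2n), 3/(2n), …, (2n−1)/(2n)}` and any `m ≥ 1`,
`E_{n−1}(χ_h^m)_{L¹} = K_m/(πhn)^m` exactly. -/
theorem bestApprox_chiConv_eq (n m : ℕ) (hn : 1 ≤ n) (hm : 1 ≤ m) (k : ℕ)
    (hk1 : 1 ≤ k) (hkn : k ≤ n) (h : ℝ) (hh : h = (2 * (k:ℝ) - 1) / (2 * (n:ℝ))) :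
    bestApprox (n - 1) (fun θ => (chiConv h m θ : ℂ)) =
      favardK m / (Real.pi * h * n) ^ m := by
  obtain ⟨M, rfl⟩ : ∃ M, m = M + 1 := ⟨m - 1, by omega⟩
  exact main_aux n M hn k hk1 hkn h hh
end

section
/- The identity B_1(θ)cos θ = (1/2)sin θ + Σ_{r=0}^∞ ((−1)^r B_{2r+1}(θ) − 2 sin θ) holds for all θ ∈ 𝕋, θ ≠ 0, where B_m are the Bernoulli kernels and the series converges absolutely and uniformly. -/
noncomputable def Bern (m : ℕ) (θ : ℝ) : ℂ :=
  if m = 1 then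
    ((Real.pi - θ + 2 * Real.pi * (⌊θ / (2 * Real.pi)⌋ : ℤ) : ℝ) : ℂ)
  else
    ∑' k : ℤ, if k = 0 then 0 else Complex.exp (k * θ * Complex.I) / (Complex.I * k) ^ m

theorem aux_cast {M : Type*} [AddCommMonoid M] [TopologicalSpace M] {f g : ℕ → M} {a b : M}
    (h : HasSum f a) (hf : g = f) (hb : b = a) : HasSum g b := by
  subst hf hb
  exact h

open Filter Topology in
theorem aux_interior (z : ℂ) (hz : ‖z‖ < 1) :
    HasSum (fun n : ℕ => ((2 / ((n + 1) * (n + 2) * (n + 3)) : ℝ) : ℂ) * z ^ (n + 3))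
      (-Complex.log (1 - z) * (z - 1) ^ 2 - z + 3 / 2 * z ^ 2) := by
  have h := Complex.hasSum_taylorSeries_neg_log hz
  have e1 := (hasSum_nat_add_iff' 1).2 h
  have e2 := (hasSum_nat_add_iff' 2).2 h
  have e3 := (hasSum_nat_add_iff' 3).2 h
  have := ((e1.mul_left (z ^ 2)).add e3).sub (e2.mul_left (2 * z))
  refine aux_cast this ?_ ?_
  · funext n
    have a1 : ((n : ℂ) + 1) ≠ 0 := by exact_mod_cast Nat.succ_ne_zero n
    have a2 : ((n : ℂ) + 2) ≠ 0 := by exact_mod_cast Nat.succ_ne_zero (n + 1)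
    have a3 : ((n : ℂ) + 3) ≠ 0 := by exact_mod_cast Nat.succ_ne_zero (n + 2)
    push_cast
    field_simp
    ring
  · simp [Finset.sum_range_succ]
    ring

theorem aux_summ : Summable (fun n : ℕ => (2 / ((n + 1) * (n + 2) * (n + 3)) : ℝ)) := by
  have h : Summable (fun n : ℕ => 2 * (1 / ((n + 1 : ℕ) : ℝ) ^ 2)) :=
    ((summable_nat_add_iff 1).2 (Real.summable_one_div_nat_pow.2 (by norm_num : 1 < 2))).mul_left 2
  refine Summable.of_nonneg_of_le (fun n => by positivity) (fun n => ?_) h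
  rw [← mul_one_div]
  push_cast
  gcongr
  have : (0 : ℝ) ≤ n := by positivity
  nlinarith [mul_nonneg this this, mul_nonneg (mul_nonneg this this) this]

theorem aux_log (θ : ℝ) (h1 : 0 < θ) (h2 : θ < 2 * Real.pi) :
    0 < ‖1 - Complex.exp (θ * Complex.I)‖ ∧ 1 - Complex.exp (θ * Complex.I) ∈ Complex.slitPlane ∧
    (Complex.log (1 - Complex.exp (θ * Complex.I))).im = (θ - Real.pi) / 2 := by
  have hs : 0 < Real.sin (θ / 2) := Real.sin_pos_of_pos_of_lt_pi (by linarith) (by linarith)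
  have key : 1 - Complex.exp (θ * Complex.I) = ((2 * Real.sin (θ / 2) : ℝ) : ℂ) *
      (Complex.cos (((θ - Real.pi) / 2 : ℝ) : ℂ) + Complex.sin (((θ - Real.pi) / 2 : ℝ) : ℂ) * Complex.I) := by
    have c1 : Real.cos ((θ - Real.pi) / 2) = Real.sin (θ / 2) := by
      rw [sub_div, Real.cos_sub_pi_div_two]
    have c2 : Real.sin ((θ - Real.pi) / 2) = - Real.cos (θ / 2) := by
      rw [sub_div, Real.sin_sub_pi_div_two]
    rw [← Complex.ofReal_cos, ← Complex.ofReal_sin, c1, c2, Complex.exp_mul_I,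
      ← Complex.ofReal_cos, ← Complex.ofReal_sin]
    have d1 : Real.cos θ = 1 - 2 * Real.sin (θ / 2) ^ 2 := by
      have := Real.cos_sq_add_sin_sq (θ / 2)
      have h := Real.cos_two_mul (θ / 2)
      rw [show 2 * (θ / 2) = θ by ring] at h
      linarith
    have d2 : Real.sin θ = 2 * Real.sin (θ / 2) * Real.cos (θ / 2) := by
      rw [← Real.sin_two_mul]; congr 1; ring
    rw [d1, d2]
    push_cast
    ring
  have harg : (1 - Complex.exp (θ * Complex.I)).arg = (θ - Real.pi) / 2 := by
    rw [key]
    apply Complex.arg_mul_cos_add_sin_mul_I (by positivity)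
    constructor <;> linarith [Real.pi_pos]
  have hne : 1 - Complex.exp (θ * Complex.I) ≠ 0 := by
    intro h0
    rw [h0, Complex.arg_zero] at harg
    have hc : Complex.exp (θ * Complex.I) = 1 := (sub_eq_zero.1 h0).symm
    have hth : θ = Real.pi := by linarith
    rw [hth, Complex.exp_pi_mul_I] at hc
    norm_num at hc
  refine ⟨norm_pos_iff.2 hne, Complex.mem_slitPlane_iff_arg.2 ⟨?_, hne⟩, ?_⟩
  · rw [harg]; intro h; linarith [Real.pi_pos]
  · rw [Complex.log_im, harg]

open Filter Topology in
theorem aux_boundary (θ : ℝ) (h1 : 0 < θ) (h2 : θ < 2 * Real.pi) :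
    HasSum (fun n : ℕ => (2 / ((n + 1) * (n + 2) * (n + 3)) : ℝ) * Real.sin ((n + 2) * θ))
      ((Real.pi - θ) * (Real.cos θ - 1) + 3 / 2 * Real.sin θ) := by
  obtain ⟨-, hsl, him⟩ := aux_log θ h1 h2
  set w := Complex.exp (θ * Complex.I) with hw
  have hwn : ‖w‖ = 1 := Complex.norm_exp_ofReal_mul_I θ
  have hb : ∀ z : ℂ, ‖z‖ ≤ 1 → ∀ n : ℕ,
      ‖((2 / ((n + 1) * (n + 2) * (n + 3)) : ℝ) : ℂ) * z ^ (n + 3)‖ ≤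
        (2 / ((n + 1) * (n + 2) * (n + 3)) : ℝ) := by
    intro z hz n
    have hp : (0:ℝ) ≤ 2 / ((n + 1) * (n + 2) * (n + 3)) := by positivity
    rw [norm_mul, norm_pow, Complex.norm_real, Real.norm_of_nonneg hp]
    exact mul_le_of_le_one_right hp (pow_le_one₀ (norm_nonneg _) hz)
  have hcont : Tendsto (fun ρ : ℝ => (ρ : ℂ) * w) (𝓝[<] 1) (𝓝 w) := by
    have : Continuous (fun ρ : ℝ => (ρ : ℂ) * w) := by fun_prop
    have := this.tendsto 1
    simp only [Complex.ofReal_one, one_mul] at this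
    exact this.mono_left nhdsWithin_le_nhds
  have hev : ∀ᶠ ρ : ℝ in 𝓝[<] 1, ‖(ρ : ℂ) * w‖ < 1 := by
    filter_upwards [Ioo_mem_nhdsLT (show (0:ℝ) < 1 by norm_num)] with ρ hρ
    rw [norm_mul, hwn, Complex.norm_real, Real.norm_of_nonneg hρ.1.le, mul_one]
    exact hρ.2
  have t1 : Tendsto (fun ρ : ℝ => ∑' n : ℕ,
      ((2 / ((n + 1) * (n + 2) * (n + 3)) : ℝ) : ℂ) * ((ρ : ℂ) * w) ^ (n + 3)) (𝓝[<] 1)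
      (𝓝 (∑' n : ℕ, ((2 / ((n + 1) * (n + 2) * (n + 3)) : ℝ) : ℂ) * w ^ (n + 3))) := by
    refine tendsto_tsum_of_dominated_convergence aux_summ (fun n => ?_) ?_
    · exact (hcont.pow _).const_mul _
    · filter_upwards [hev] with ρ hρ n
      exact hb _ hρ.le n
  have t2 : Tendsto (fun ρ : ℝ => -Complex.log (1 - (ρ : ℂ) * w) * ((ρ : ℂ) * w - 1) ^ 2
      - (ρ : ℂ) * w + 3 / 2 * ((ρ : ℂ) * w) ^ 2) (𝓝[<] 1)
      (𝓝 (-Complex.log (1 - w) * (w - 1) ^ 2 - w + 3 / 2 * w ^ 2)) := by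
    refine Tendsto.add (Tendsto.sub (Tendsto.mul (Tendsto.neg ?_) ?_) hcont) ?_
    · exact (hcont.const_sub 1).clog hsl
    · exact (hcont.sub_const 1).pow 2
    · exact (hcont.pow 2).const_mul _
  have heq : ∑' n : ℕ, ((2 / ((n + 1) * (n + 2) * (n + 3)) : ℝ) : ℂ) * w ^ (n + 3) =
      -Complex.log (1 - w) * (w - 1) ^ 2 - w + 3 / 2 * w ^ 2 := by
    refine tendsto_nhds_unique t1 (t2.congr' ?_)
    filter_upwards [hev] with ρ hρ
    exact (aux_interior _ hρ).tsum_eq.symm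
  have hS : Summable (fun n : ℕ => ((2 / ((n + 1) * (n + 2) * (n + 3)) : ℝ) : ℂ) * w ^ (n + 3)) :=
    Summable.of_norm_bounded aux_summ (hb w hwn.le)
  have H := hS.hasSum
  rw [heq] at H
  have H2 := H.mul_left (Complex.exp (-(θ * Complex.I)))
  have hww : Complex.exp (-(θ * Complex.I)) * w = 1 := by
    rw [hw, ← Complex.exp_add]; simp
  have H3 := Complex.hasSum_im H2
  convert H3 using 1
  · funext n
    have : Complex.exp (-(θ * Complex.I)) * (((2 / ((n + 1) * (n + 2) * (n + 3)) : ℝ) : ℂ) * w ^ (n + 3))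
      = ((2 / ((n + 1) * (n + 2) * (n + 3)) : ℝ) : ℂ) * Complex.exp ((((n + 2) * θ : ℝ) : ℂ) * Complex.I) := by
      rw [pow_succ, show ((((n + 2) * θ : ℝ) : ℂ) * Complex.I) = ((n + 2 : ℕ) : ℂ) * (θ * Complex.I) by push_cast; ring,
        Complex.exp_nat_mul]
      linear_combination (((2 / ((n + 1) * (n + 2) * (n + 3)) : ℝ) : ℂ) * w ^ (n + 2)) * hww
    rw [this, Complex.im_ofReal_mul, Complex.exp_ofReal_mul_I_im]
  · have e : Complex.exp (-(θ * Complex.I)) = Complex.cos θ - Complex.sin θ * Complex.I := by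
      rw [← neg_mul, Complex.exp_mul_I, Complex.cos_neg, Complex.sin_neg]; ring
    have ew : w = Complex.cos θ + Complex.sin θ * Complex.I := by
      rw [hw, Complex.exp_mul_I]
    have : Complex.exp (-(θ * Complex.I)) * (-Complex.log (1 - w) * (w - 1) ^ 2 - w + 3 / 2 * w ^ 2)
      = ((2 - 2 * Real.cos θ : ℝ) : ℂ) * Complex.log (1 - w) - 1 + ((3 / 2 : ℝ) : ℂ) * w := by
      have s : Complex.exp (-(θ * Complex.I)) + w = 2 * Complex.cos θ := by rw [e, ew]; ring
      push_cast
      linear_combination (-Complex.log (1 - w) * (w - 2) - 1 + 3 / 2 * w) * hww - Complex.log (1 - w) * s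
    rw [this, Complex.add_im, Complex.sub_im, Complex.im_ofReal_mul, Complex.im_ofReal_mul, him, hw,
      Complex.exp_ofReal_mul_I_im]
    simp
    ring

theorem aux_bern (θ : ℝ) (r : ℕ) :
    HasSum (fun n : ℕ => ((2 * Real.sin ((n + 2) * θ) / (n + 2) ^ (2 * r + 3) : ℝ) : ℂ))
      ((-1 : ℂ) ^ (r + 1) * Bern (2 * (r + 1) + 1) θ - 2 * (Real.sin θ : ℂ)) := by
  have hm : 2 * (r + 1) + 1 ≠ 1 := by omega
  set f : ℤ → ℂ := fun k => if k = 0 then 0 else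
    Complex.exp (k * θ * Complex.I) / (Complex.I * k) ^ (2 * (r + 1) + 1) with hf
  have hB : Bern (2 * (r + 1) + 1) θ = ∑' k, f k := by
    unfold Bern; rw [if_neg hm]
  have hsum : Summable (fun n : ℕ => 1 / ((n + 1 : ℕ) : ℝ) ^ (2 * (r + 1) + 1)) :=
    (summable_nat_add_iff 1).2 (Real.summable_one_div_nat_pow.2 (by omega))
  have hnorm : ∀ k : ℤ, ‖f k‖ ≤ 1 / |(k : ℝ)| ^ (2 * (r + 1) + 1) := by
    intro k
    simp only [hf]
    split_ifs with h
    · simp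
    · rw [norm_div, norm_pow, norm_mul, Complex.norm_I, one_mul, Complex.norm_intCast,
        show (k : ℂ) * θ * Complex.I = ((k * θ : ℝ) : ℂ) * Complex.I by push_cast; ring,
        Complex.norm_exp_ofReal_mul_I]
  have s1 : Summable (fun n : ℕ => f (n + 1)) := by
    refine Summable.of_norm_bounded hsum (fun n => (hnorm _).trans_eq ?_)
    push_cast
    rw [abs_of_nonneg (by positivity)]
  have s2 : Summable (fun n : ℕ => f (-(n + 1))) := by
    refine Summable.of_norm_bounded hsum (fun n => (hnorm _).trans_eq ?_)
    push_cast
    rw [abs_neg, abs_of_nonneg (by positivity)]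
  have hZ := HasSum.of_add_one_of_neg_add_one s1.hasSum s2.hasSum
  have hf0 : f 0 = 0 := by simp [hf]
  have H := ((s1.hasSum.add s2.hasSum).mul_left ((-1 : ℂ) ^ (r + 1)))
  rw [hf0, add_zero] at hZ
  rw [← hZ.tsum_eq, ← hB] at H
  have heq : ∀ n : ℕ, (-1 : ℂ) ^ (r + 1) * (f (n + 1) + f (-(n + 1))) =
      ((2 * Real.sin ((n + 1) * θ) / (n + 1) ^ (2 * r + 3) : ℝ) : ℂ) := by
    intro n
    have n1 : ((n : ℤ) + 1) ≠ 0 := by omega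
    have n2 : (-((n : ℤ) + 1)) ≠ 0 := by omega
    have a1 : ((n : ℂ) + 1) ≠ 0 := by exact_mod_cast Nat.succ_ne_zero n
    simp only [hf, if_neg n1, if_neg n2]
    have hI : Complex.I ^ (2 * (r + 1) + 1) = (-1) ^ (r + 1) * Complex.I := by
      rw [pow_succ, pow_mul, Complex.I_sq]
    have hodd : Odd (2 * (r + 1) + 1) := ⟨r + 1, rfl⟩
    push_cast
    rw [mul_neg, hodd.neg_pow, mul_pow, hI, Complex.sin, show 2 * (r + 1) + 1 = 2 * r + 3 by ring]
    have hone : ((-1 : ℂ) ^ (r + 1)) ≠ 0 := by simp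
    rw [show -(((n : ℂ) + 1) * θ) * Complex.I = -((n : ℂ) + 1) * θ * Complex.I by ring]
    generalize Complex.exp (-((n : ℂ) + 1) * θ * Complex.I) = A
    generalize Complex.exp (((n : ℂ) + 1) * θ * Complex.I) = B
    generalize ((-1 : ℂ) ^ (r + 1)) = c at *
    have a2 := pow_ne_zero (2 * r + 3) a1
    generalize ((n : ℂ) + 1) ^ (2 * r + 3) = d at *
    have hIn := Complex.I_ne_zero
    field_simp
    rw [Complex.I_sq]
    ring
  simp only [heq] at H
  have H' := (hasSum_nat_add_iff' 1).2 H
  refine aux_cast H' ?_ ?_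
  · funext n
    push_cast
    ring_nf
  · simp

theorem aux_prod (θ : ℝ) :
    Summable (fun p : ℕ × ℕ => 2 * Real.sin ((p.2 + 2) * θ) / ((p.2 : ℝ) + 2) ^ (2 * p.1 + 3)) := by
  have hsum : Summable (fun n : ℕ => 1 / ((n + 2 : ℕ) : ℝ) ^ 2) :=
    (summable_nat_add_iff 2).2 (Real.summable_one_div_nat_pow.2 (by omega))
  have hg : Summable (fun r : ℕ => 2 * ((1 : ℝ) / 4) ^ r) :=
    (summable_geometric_of_lt_one (by norm_num) (by norm_num)).mul_left 2
  have := hg.mul_of_nonneg hsum (fun _ => by positivity) (fun _ => by positivity)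
  refine Summable.of_norm_bounded this ?_
  rintro ⟨r, n⟩
  simp only
  have hn : (0 : ℝ) ≤ n := by positivity
  rw [norm_div, norm_mul, Real.norm_of_nonneg (show (0:ℝ) ≤ (n + 2) ^ (2 * r + 3) by positivity),
    Real.norm_of_nonneg (show (0:ℝ) ≤ 2 by norm_num)]
  have h4 : (4 : ℝ) ^ r * ((n : ℝ) + 2) ^ 2 ≤ (n + 2) ^ (2 * r + 3) := by
    have e : ((n : ℝ) + 2) ^ (2 * r + 3) = (((n : ℝ) + 2) ^ 2) ^ r * (n + 2) ^ 2 * (n + 2) := by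
      rw [← pow_mul]; ring
    rw [e]
    have : (4 : ℝ) ^ r ≤ (((n : ℝ) + 2) ^ 2) ^ r := by
      gcongr
      nlinarith
    calc (4 : ℝ) ^ r * ((n : ℝ) + 2) ^ 2 ≤ (((n : ℝ) + 2) ^ 2) ^ r * (n + 2) ^ 2 := by gcongr
      _ ≤ _ := le_mul_of_one_le_right (by positivity) (by linarith)
  calc 2 * ‖Real.sin ((n + 2) * θ)‖ / ((n : ℝ) + 2) ^ (2 * r + 3)
      ≤ 2 * 1 / ((4 : ℝ) ^ r * ((n : ℝ) + 2) ^ 2) := by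
        gcongr
        exact Real.abs_sin_le_one _
    _ = _ := by
        push_cast
        rw [div_pow]
        field_simp
        try simp

theorem aux_geom (θ : ℝ) (n : ℕ) :
    HasSum (fun r : ℕ => 2 * Real.sin ((n + 2) * θ) / ((n : ℝ) + 2) ^ (2 * r + 3))
      ((2 / ((n + 1) * (n + 2) * (n + 3)) : ℝ) * Real.sin ((n + 2) * θ)) := by
  have hn : (0 : ℝ) ≤ n := by positivity
  have hlt : (1 : ℝ) / ((n : ℝ) + 2) ^ 2 < 1 := by
    rw [div_lt_one (by positivity)]
    nlinarith
  have := (hasSum_geometric_of_lt_one (by positivity) hlt).mul_left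
    (2 * Real.sin ((n + 2) * θ) / ((n : ℝ) + 2) ^ 3)
  refine aux_cast this ?_ ?_
  · funext r
    rw [div_pow, one_pow, pow_add, pow_mul]
    field_simp
  · have : (1 : ℝ) - 1 / ((n : ℝ) + 2) ^ 2 = ((n + 1) * (n + 3)) / (n + 2) ^ 2 := by
      field_simp
      ring
    rw [this]
    field_simp

/-- `B_1(θ)cos θ = (1/2)sin θ + Σ_{r≥0} ((−1)^r B_{2r+1}(θ) − 2 sin θ)` for `θ ≠ 0` on `𝕋`,
with absolute convergence of the series. -/
theorem quasiBernoulli_K1_series (θ : ℝ) (h1 : 0 < θ) (h2 : θ < 2 * Real.pi) :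
    Summable (fun r : ℕ =>
      ‖(-1 : ℂ) ^ r * Bern (2 * r + 1) θ - 2 * (Real.sin θ : ℂ)‖) ∧
    Bern 1 θ * (Real.cos θ : ℂ) =
      (1 / 2) * (Real.sin θ : ℂ) +
        ∑' r : ℕ, ((-1 : ℂ) ^ r * Bern (2 * r + 1) θ - 2 * (Real.sin θ : ℂ)) := by
  have hB1 : Bern 1 θ = ((Real.pi - θ : ℝ) : ℂ) := by
    have hfl : ⌊θ / (2 * Real.pi)⌋ = 0 := by
      rw [Int.floor_eq_zero_iff]
      exact ⟨by positivity, (div_lt_one (by positivity)).2 h2⟩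
    unfold Bern
    rw [if_pos rfl, hfl]
    simp
  have hP := aux_prod θ
  have hT : ∀ r : ℕ, (-1 : ℂ) ^ (r + 1) * Bern (2 * (r + 1) + 1) θ - 2 * (Real.sin θ : ℂ) =
      ((∑' n : ℕ, 2 * Real.sin ((n + 2) * θ) / ((n : ℝ) + 2) ^ (2 * r + 3) : ℝ) : ℂ) := by
    intro r
    rw [← (aux_bern θ r).tsum_eq, Complex.ofReal_tsum]
  have hR : HasSum (fun r : ℕ => ∑' n : ℕ, 2 * Real.sin ((n + 2) * θ) / ((n : ℝ) + 2) ^ (2 * r + 3))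
      ((Real.pi - θ) * (Real.cos θ - 1) + 3 / 2 * Real.sin θ) := by
    have h := hP.hasSum.prod_fiberwise (fun r => (hP.prod_factor r).hasSum)
    have h' := ((Equiv.prodComm ℕ ℕ).hasSum_iff.2 hP.hasSum).prod_fiberwise
      (fun n => aux_geom θ n)
    rw [h'.unique (aux_boundary θ h1 h2)] at h
    exact h
  have hC : HasSum (fun r : ℕ => (-1 : ℂ) ^ (r + 1) * Bern (2 * (r + 1) + 1) θ
      - 2 * (Real.sin θ : ℂ))
      (((Real.pi - θ) * (Real.cos θ - 1) + 3 / 2 * Real.sin θ : ℝ) : ℂ) := by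
    simp only [hT]
    exact Complex.hasSum_ofReal.2 hR
  have hfull := (hasSum_nat_add_iff (f := fun r : ℕ => (-1 : ℂ) ^ r * Bern (2 * r + 1) θ
      - 2 * (Real.sin θ : ℂ)) 1).1 hC
  refine ⟨hfull.summable.norm, ?_⟩
  rw [hfull.tsum_eq]
  simp only [Finset.sum_range_one, mul_zero, zero_add, pow_zero, one_mul, hB1]
  push_cast
  ring
end
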